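/- arXiv:1802.04214 — 9 statements merged into one kernel-verified Lean document; each statement's English description precedes it below -/
import Mathlib

section
/- Every minimal 1-saturating set in PG(2,2) has exactly 4 points; that is, if S is a 1-saturating set of nonzero vectors of (ZMod 2)^3 such that for every s ∈ S the set S \ {s} is not 1-saturating, then S has cardinality 4. -/
/-- Points of PG(n-1,2) are the nonzero vectors of `Fin n → ZMod 2`.
A set `S` of nonzero vectors is 1-saturating if every nonzero vector `x ∉ S`
is the sum of two distinct elements of `S`. -/
def Saturating {n : ℕ} (S : Set (Fin n → ZMod 2)) : Prop :=
  (∀ s ∈ S, s ≠ 0) ∧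
    ∀ x : Fin n → ZMod 2, x ≠ 0 → x ∉ S →
      ∃ a ∈ S, ∃ b ∈ S, a ≠ b ∧ x = a + b

/-- A minimal 1-saturating set: 1-saturating, and removing any point destroys saturation. -/
def MinSat {n : ℕ} (S : Set (Fin n → ZMod 2)) : Prop :=
  Saturating S ∧ ∀ s ∈ S, ¬ Saturating (S \ {s})

/-- A cap: a set of nonzero vectors no three pairwise distinct elements of which sum to zero. -/
def IsCap {n : ℕ} (S : Set (Fin n → ZMod 2)) : Prop :=
  (∀ s ∈ S, s ≠ 0) ∧
    ∀ a ∈ S, ∀ b ∈ S, ∀ c ∈ S, a ≠ b → a ≠ c → b ≠ c → a + b + c ≠ 0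

/-- A complete cap: a cap that is 1-saturating. -/
def CompleteCap {n : ℕ} (S : Set (Fin n → ZMod 2)) : Prop :=
  IsCap S ∧ Saturating S

/-- Projective equivalence: some element of GL(n, ZMod 2) maps `S` onto `T`. -/
def ProjEquiv {n : ℕ} (S T : Set (Fin n → ZMod 2)) : Prop :=
  ∃ g : Matrix.GeneralLinearGroup (Fin n) (ZMod 2),
    (fun x => Matrix.mulVec (g : Matrix (Fin n) (Fin n) (ZMod 2)) x) '' S = T
set_option synthInstance.maxHeartbeats 400000 in
set_option synthInstance.maxSize 10000 in
set_option maxRecDepth 100000 in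
theorem minSat_aux : ∀ T : Finset (Fin 3 → ZMod 2),
    ((∀ s ∈ T, s ≠ 0) ∧ ∀ x : Fin 3 → ZMod 2, x ≠ 0 → x ∉ T →
      ∃ a ∈ T, ∃ b ∈ T, a ≠ b ∧ x = a + b) →
    (∀ s ∈ T, ¬ ((∀ u ∈ T.erase s, u ≠ 0) ∧ ∀ x : Fin 3 → ZMod 2, x ≠ 0 → x ∉ T.erase s →
      ∃ a ∈ T.erase s, ∃ b ∈ T.erase s, a ≠ b ∧ x = a + b)) → T.card = 4 := by
  decide +kernel

/-- Every minimal 1-saturating set in PG(2,2) has exactly 4 points. -/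
theorem minSat_PG2_card_eq_four (S : Set (Fin 3 → ZMod 2)) (hS : MinSat S) :
    S.ncard = 4 := by
  classical
  obtain ⟨T, rfl⟩ : ∃ T : Finset (Fin 3 → ZMod 2), (T : Set (Fin 3 → ZMod 2)) = S :=
    ⟨(Set.toFinite S).toFinset, by simp⟩
  rw [Set.ncard_coe_finset]
  obtain ⟨h1, h2⟩ := hS
  refine minSat_aux T (by simpa only [Saturating, Finset.mem_coe] using h1) ?_
  intro s hs h
  refine h2 s hs ?_
  rw [← Finset.coe_erase]
  simpa only [Saturating, Finset.mem_coe] using h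
end

section
/- Up to projective equivalence there are exactly two minimal 1-saturating sets in PG(2,2): the number of orbits of the action of GL(3, ZMod 2) on the collection of minimal 1-saturating sets of nonzero vectors of (ZMod 2)^3 is exactly 2. -/
namespace PGtwo

abbrev V := Fin 3 → ZMod 2

def e1 : V := ![1, 0, 0]
def e2 : V := ![0, 1, 0]
def e3 : V := ![0, 0, 1]

def A : Set V := {x | x = e1 ∨ x = e2 ∨ x = e3 ∨ x = e1 + e2}
def B : Set V := {x | x = e1 ∨ x = e2 ∨ x = e3 ∨ x = e1 + e2 + e3}

instance : DecidablePred (· ∈ A) := fun x =>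
  inferInstanceAs (Decidable (x = e1 ∨ x = e2 ∨ x = e3 ∨ x = e1 + e2))
instance : DecidablePred (· ∈ B) := fun x =>
  inferInstanceAs (Decidable (x = e1 ∨ x = e2 ∨ x = e3 ∨ x = e1 + e2 + e3))

theorem mono {S T : Set V} (hT : Saturating T) (hTS : T ⊆ S) (h0 : ∀ s ∈ S, s ≠ 0) :
    Saturating S := by
  refine ⟨h0, fun x hx hxS => ?_⟩
  obtain ⟨a, ha, b, hb, h⟩ := hT.2 x hx (fun h => hxS (hTS h))
  exact ⟨a, hTS ha, b, hTS hb, h⟩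

theorem eq_of_min {S T : Set V} (hS : MinSat S) (hT : Saturating T) (hTS : T ⊆ S) : T = S := by
  refine Set.Subset.antisymm hTS fun s hs => ?_
  by_contra hsT
  refine hS.2 s hs (mono hT ?_ ?_)
  · intro t ht
    exact ⟨hTS ht, fun h => hsT (h ▸ ht)⟩
  · intro t ht
    exact hS.1.1 t ht.1

theorem satA : Saturating A := by
  constructor
  · decide
  · decide +kernel

theorem satB : Saturating B := by
  constructor
  · decide
  · decide +kernel

theorem not_sat_of {S : Set V} (s x : V) (hx : x ≠ 0) (hxS : x ∉ S \ {s})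
    (h : ∀ a ∈ S, ∀ b ∈ S, a ≠ s → b ≠ s → a ≠ b → x ≠ a + b) : ¬ Saturating (S \ {s}) := by
  intro hs
  obtain ⟨a, ha, b, hb, hab, e⟩ := hs.2 x hx hxS
  exact h a ha.1 b hb.1 ha.2 hb.2 hab e

set_option synthInstance.maxHeartbeats 400000 in
set_option synthInstance.maxSize 2000 in
theorem minA : MinSat A := by
  refine ⟨satA, fun s hs => ?_⟩
  have : ∀ s ∈ A, ∃ x : V, x ≠ 0 ∧ ¬ (x ∈ A ∧ x ≠ s) ∧
    ∀ a ∈ A, ∀ b ∈ A, a ≠ s → b ≠ s → a ≠ b → x ≠ a + b := by decide +kernel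
  obtain ⟨x, h1, h2, h3⟩ := this s hs
  exact not_sat_of s x h1 h2 h3

set_option synthInstance.maxHeartbeats 400000 in
set_option synthInstance.maxSize 2000 in
theorem minB : MinSat B := by
  refine ⟨satB, fun s hs => ?_⟩
  have : ∀ s ∈ B, ∃ x : V, x ≠ 0 ∧ ¬ (x ∈ B ∧ x ≠ s) ∧
    ∀ a ∈ B, ∀ b ∈ B, a ≠ s → b ≠ s → a ≠ b → x ≠ a + b := by decide +kernel
  obtain ⟨x, h1, h2, h3⟩ := this s hs
  exact not_sat_of s x h1 h2 h3

theorem not_equiv : ¬ ProjEquiv A B := by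
  rintro ⟨g, hg⟩
  have m : ∀ x ∈ A, Matrix.mulVec (g : Matrix (Fin 3) (Fin 3) (ZMod 2)) x ∈ B := by
    intro x hx
    rw [← hg]
    exact ⟨x, hx, rfl⟩
  have h1 := m e1 (by decide)
  have h2 := m e2 (by decide)
  have h3 := m (e1 + e2) (by decide)
  rw [Matrix.mulVec_add] at h3
  have : ∀ a ∈ B, ∀ b ∈ B, a + b ∉ B := by decide +kernel
  exact this _ h1 _ h2 h3

theorem symm' {S T : Set V} (h : ProjEquiv S T) : ProjEquiv T S := by
  obtain ⟨g, rfl⟩ := h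
  refine ⟨g⁻¹, ?_⟩
  rw [Set.image_image]
  have : ∀ x : V, Matrix.mulVec ((g⁻¹ : Matrix.GeneralLinearGroup (Fin 3) (ZMod 2)) :
      Matrix (Fin 3) (Fin 3) (ZMod 2))
      (Matrix.mulVec (g : Matrix (Fin 3) (Fin 3) (ZMod 2)) x) = x := by
    intro x
    rw [Matrix.mulVec_mulVec, ← Units.val_mul, inv_mul_cancel, Units.val_one, Matrix.one_mulVec]
  simp only [this, Set.image_id']

theorem sat_image {S T : Set V} (h : ProjEquiv S T) (hS : Saturating S) : Saturating T := by
  obtain ⟨g', hg'⟩ := symm' h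
  obtain ⟨g, rfl⟩ := h
  have inj := Matrix.mulVec_injective_of_isUnit g.isUnit
  have sur : ∀ y : V, ∃ x : V, Matrix.mulVec (g : Matrix (Fin 3) (Fin 3) (ZMod 2)) x = y :=
    Finite.surjective_of_injective inj
  constructor
  · rintro _ ⟨s, hs, rfl⟩ h0
    exact hS.1 s hs (inj (h0.trans (Matrix.mulVec_zero _).symm))
  · intro y hy hyS
    obtain ⟨x, rfl⟩ := sur y
    obtain ⟨a, ha, b, hb, hab, e⟩ := hS.2 x
      (by rintro rfl; exact hy (Matrix.mulVec_zero _)) (fun h => hyS ⟨x, h, rfl⟩)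
    exact ⟨_, ⟨a, ha, rfl⟩, _, ⟨b, hb, rfl⟩, fun h => hab (inj h), by
      rw [e, Matrix.mulVec_add]⟩

def M (a b c : V) : Matrix (Fin 3) (Fin 3) (ZMod 2) := fun i => ![a i, b i, c i]

set_option synthInstance.maxHeartbeats 400000 in
set_option synthInstance.maxSize 2000 in
theorem detM : ∀ a b c : V, (a ≠ 0 ∧ b ≠ 0 ∧ a ≠ b ∧ c ≠ 0 ∧ c ≠ a ∧ c ≠ b ∧ c ≠ a + b) →
    M a b c 0 0 * (M a b c 1 1 * M a b c 2 2 - M a b c 1 2 * M a b c 2 1)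
      - M a b c 0 1 * (M a b c 1 0 * M a b c 2 2 - M a b c 1 2 * M a b c 2 0)
      + M a b c 0 2 * (M a b c 1 0 * M a b c 2 1 - M a b c 1 1 * M a b c 2 0) ≠ 0 := by
  decide +kernel

theorem exg (a b c : V) (ha : a ≠ 0) (hb : b ≠ 0) (hab : a ≠ b) (hc : c ≠ 0) (hca : c ≠ a)
    (hcb : c ≠ b) (h : c ≠ a + b) : ∃ g : Matrix.GeneralLinearGroup (Fin 3) (ZMod 2),
    Matrix.mulVec (g : Matrix (Fin 3) (Fin 3) (ZMod 2)) e1 = a ∧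
    Matrix.mulVec (g : Matrix (Fin 3) (Fin 3) (ZMod 2)) e2 = b ∧
    Matrix.mulVec (g : Matrix (Fin 3) (Fin 3) (ZMod 2)) e3 = c := by
  have hd := detM a b c ⟨ha, hb, hab, hc, hca, hcb, h⟩
  have hd' : (M a b c).det ≠ 0 := by
    rw [Matrix.det_fin_three]
    intro h0
    apply hd
    rw [← h0]
    ring
  refine ⟨Matrix.GeneralLinearGroup.mkOfDetNeZero (M a b c) hd', ?_, ?_, ?_⟩ <;>
  · show Matrix.mulVec (M a b c) _ = _
    ext i
    simp [Matrix.mulVec, dotProduct, Fin.sum_univ_three, M, e1, e2, e3]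

theorem finA {S : Set V} (hS : MinSat S) (a b c : V) (ha : a ∈ S) (hb : b ∈ S) (hc : c ∈ S)
    (hab : a ≠ b) (hca : c ≠ a) (hcb : c ≠ b) (h : c ≠ a + b) (hd : a + b ∈ S) :
    ProjEquiv S A := by
  have nz := hS.1.1
  obtain ⟨g, h1, h2, h3⟩ := exg a b c (nz a ha) (nz b hb) hab (nz c hc) hca hcb h
  have hp : ProjEquiv A _ := ⟨g, rfl⟩
  have := eq_of_min hS (sat_image hp satA) (by
    rintro _ ⟨x, rfl | rfl | rfl | rfl, rfl⟩ <;> simp only [Matrix.mulVec_add, h1, h2, h3] <;>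
      assumption)
  rw [this] at hp
  exact symm' hp

theorem finB {S : Set V} (hS : MinSat S) (a b c : V) (ha : a ∈ S) (hb : b ∈ S) (hc : c ∈ S)
    (hab : a ≠ b) (hca : c ≠ a) (hcb : c ≠ b) (h : c ≠ a + b) (hd : a + b + c ∈ S) :
    ProjEquiv S B := by
  have nz := hS.1.1
  obtain ⟨g, h1, h2, h3⟩ := exg a b c (nz a ha) (nz b hb) hab (nz c hc) hca hcb h
  have hp : ProjEquiv B _ := ⟨g, rfl⟩
  have := eq_of_min hS (sat_image hp satB) (by
    rintro _ ⟨x, rfl | rfl | rfl | rfl, rfl⟩ <;> simp only [Matrix.mulVec_add, h1, h2, h3] <;>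
      assumption)
  rw [this] at hp
  exact symm' hp

theorem ex_out : ∀ a b : V, ∃ x : V, x ≠ 0 ∧ x ≠ a ∧ x ≠ b ∧ x ≠ a + b := by decide +kernel

theorem closed : ∀ a b u v : V, (u = a ∨ u = b ∨ u = a + b) → (v = a ∨ v = b ∨ v = a + b) →
    u + v = 0 ∨ u + v = a ∨ u + v = b ∨ u + v = a + b := by
  decide +kernel

set_option synthInstance.maxHeartbeats 400000 in
set_option synthInstance.maxSize 2000 in
theorem four : ∀ a b c : V, (a ≠ 0 ∧ b ≠ 0 ∧ a ≠ b ∧ c ≠ 0 ∧ c ≠ a ∧ c ≠ b ∧ c ≠ a + b) →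
    a + b + c ≠ 0 ∧ (b ≠ a + c) ∧ (a ≠ b + c) ∧
    (∀ d, d ≠ 0 → d ≠ a → d ≠ b → d ≠ c →
      d = a + b ∨ d = a + c ∨ d = b + c ∨ d = a + b + c) ∧
    (∀ u, (u = a ∨ u = b ∨ u = c) → ∀ v, (v = a ∨ v = b ∨ v = c) → a + b + c ≠ u + v) := by
  decide +kernel

theorem main {S : Set V} (hS : MinSat S) : ProjEquiv S A ∨ ProjEquiv S B := by
  have nz := hS.1.1
  have sat := hS.1.2
  have key : ∀ a b : V, ∃ c ∈ S, c ≠ a ∧ c ≠ b ∧ c ≠ a + b := by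
    intro a b
    by_contra! hno
    have hno' : ∀ u ∈ S, u = a ∨ u = b ∨ u = a + b := by
      intro u hu
      by_contra! h
      exact h.2.2 (hno u hu h.1 h.2.1)
    obtain ⟨x, x0, xa, xb, xab⟩ := ex_out a b
    obtain ⟨u, hu, v, hv, -, e⟩ := sat x x0 (fun h => xab (hno x h xa xb))
    have := closed a b u v (hno' u hu) (hno' v hv)
    rw [← e] at this
    tauto
  obtain ⟨a, ha, -⟩ := key 0 0
  obtain ⟨b, hb, hba, -⟩ := key a 0
  obtain ⟨c, hc, hca, hcb, hcab⟩ := key a b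
  have hab := hba.symm
  obtain ⟨f1, f2, f3, f4, f5⟩ := four a b c ⟨nz a ha, nz b hb, hab, nz c hc, hca, hcb, hcab⟩
  have : ∃ d ∈ S, d ≠ a ∧ d ≠ b ∧ d ≠ c := by
    by_contra! hno
    have hno' : ∀ u ∈ S, u = a ∨ u = b ∨ u = c := by
      intro u hu
      by_contra! h
      exact h.2.2 (hno u hu h.1 h.2.1)
    by_cases hx : a + b + c ∈ S
    · have := hno' _ hx
      have e0 : ∀ a b c : V, (a + b + c = a → b = c) ∧ (a + b + c = b → a = c) ∧
        (a + b + c = c → a = b) := by decide +kernel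
      rcases this with h | h | h
      · exact hcb ((e0 a b c).1 h).symm
      · exact hca ((e0 a b c).2.1 h).symm
      · exact hab ((e0 a b c).2.2 h)
    · obtain ⟨u, hu, v, hv, -, e⟩ := sat _ f1 hx
      exact f5 u (hno' u hu) v (hno' v hv) e
  obtain ⟨d, hd, da, db, dc⟩ := this
  rcases f4 d (nz d hd) da db dc with rfl | rfl | rfl | rfl
  · exact .inl (finA hS a b c ha hb hc hab hca hcb hcab hd)
  · exact .inl (finA hS a c b ha hc hb hca.symm hba hcb.symm f2 hd)
  · exact .inl (finA hS b c a hb hc ha hcb.symm hab hca.symm f3 hd)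
  · exact .inr (finB hS a b c ha hb hc hab hca hcb hcab hd)

end PGtwo

/-- Up to projective equivalence there are exactly two minimal 1-saturating sets in PG(2,2). -/
theorem minSat_PG2_two_orbits :
    ∃ A B : Set (Fin 3 → ZMod 2), MinSat A ∧ MinSat B ∧ ¬ ProjEquiv A B ∧
      ∀ S : Set (Fin 3 → ZMod 2), MinSat S → ProjEquiv S A ∨ ProjEquiv S B :=
  ⟨PGtwo.A, PGtwo.B, PGtwo.minA, PGtwo.minB, PGtwo.not_equiv, fun _ hS => PGtwo.main hS⟩
end

section
/- The possible sizes of minimal 1-saturating sets in PG(3,2) are exactly 5, 6 and 8: a natural number k is the cardinality of some minimal 1-saturating set of nonzero vectors of (ZMod 2)^4 if and only if k ∈ {5, 6, 8}. -/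
def satB (b1 b2 b3 b4 b5 b6 b7 b8 b9 b10 b11 b12 b13 b14 b15 : Bool) : Bool :=
  (b1 || ((b2 && b3) || ((b4 && b5) || ((b6 && b7) || ((b8 && b9) || ((b10 && b11) || ((b12 && b13) || ((b14 && b15) || false)))))))) && (
  (b2 || ((b1 && b3) || ((b4 && b6) || ((b5 && b7) || ((b8 && b10) || ((b9 && b11) || ((b12 && b14) || ((b13 && b15) || false)))))))) && (
  (b3 || ((b1 && b2) || ((b4 && b7) || ((b5 && b6) || ((b8 && b11) || ((b9 && b10) || ((b12 && b15) || ((b13 && b14) || false)))))))) && (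
  (b4 || ((b1 && b5) || ((b2 && b6) || ((b3 && b7) || ((b8 && b12) || ((b9 && b13) || ((b10 && b14) || ((b11 && b15) || false)))))))) && (
  (b5 || ((b1 && b4) || ((b2 && b7) || ((b3 && b6) || ((b8 && b13) || ((b9 && b12) || ((b10 && b15) || ((b11 && b14) || false)))))))) && (
  (b6 || ((b1 && b7) || ((b2 && b4) || ((b3 && b5) || ((b8 && b14) || ((b9 && b15) || ((b10 && b12) || ((b11 && b13) || false)))))))) && (
  (b7 || ((b1 && b6) || ((b2 && b5) || ((b3 && b4) || ((b8 && b15) || ((b9 && b14) || ((b10 && b13) || ((b11 && b12) || false)))))))) && (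
  (b8 || ((b1 && b9) || ((b2 && b10) || ((b3 && b11) || ((b4 && b12) || ((b5 && b13) || ((b6 && b14) || ((b7 && b15) || false)))))))) && (
  (b9 || ((b1 && b8) || ((b2 && b11) || ((b3 && b10) || ((b4 && b13) || ((b5 && b12) || ((b6 && b15) || ((b7 && b14) || false)))))))) && (
  (b10 || ((b1 && b11) || ((b2 && b8) || ((b3 && b9) || ((b4 && b14) || ((b5 && b15) || ((b6 && b12) || ((b7 && b13) || false)))))))) && (
  (b11 || ((b1 && b10) || ((b2 && b9) || ((b3 && b8) || ((b4 && b15) || ((b5 && b14) || ((b6 && b13) || ((b7 && b12) || false)))))))) && (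
  (b12 || ((b1 && b13) || ((b2 && b14) || ((b3 && b15) || ((b4 && b8) || ((b5 && b9) || ((b6 && b10) || ((b7 && b11) || false)))))))) && (
  (b13 || ((b1 && b12) || ((b2 && b15) || ((b3 && b14) || ((b4 && b9) || ((b5 && b8) || ((b6 && b11) || ((b7 && b10) || false)))))))) && (
  (b14 || ((b1 && b15) || ((b2 && b12) || ((b3 && b13) || ((b4 && b10) || ((b5 && b11) || ((b6 && b8) || ((b7 && b9) || false)))))))) && (
  (b15 || ((b1 && b14) || ((b2 && b13) || ((b3 && b12) || ((b4 && b11) || ((b5 && b10) || ((b6 && b9) || ((b7 && b8) || false)))))))) && true))))))))))))))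

def goodB (b1 b2 b3 b4 b5 b6 b7 b8 b9 b10 b11 b12 b13 b14 b15 : Bool) : Bool :=
  let n := b1.toNat + b2.toNat + b3.toNat + b4.toNat + b5.toNat + b6.toNat + b7.toNat + b8.toNat + b9.toNat + b10.toNat + b11.toNat + b12.toNat + b13.toNat + b14.toNat + b15.toNat
  (n == 5 || n == 6) || n == 8

def redB (b1 b2 b3 b4 b5 b6 b7 b8 b9 b10 b11 b12 b13 b14 b15 : Bool) : Bool :=
  (b1 && satB false b2 b3 b4 b5 b6 b7 b8 b9 b10 b11 b12 b13 b14 b15) || (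
  (b2 && satB b1 false b3 b4 b5 b6 b7 b8 b9 b10 b11 b12 b13 b14 b15) || (
  (b3 && satB b1 b2 false b4 b5 b6 b7 b8 b9 b10 b11 b12 b13 b14 b15) || (
  (b4 && satB b1 b2 b3 false b5 b6 b7 b8 b9 b10 b11 b12 b13 b14 b15) || (
  (b5 && satB b1 b2 b3 b4 false b6 b7 b8 b9 b10 b11 b12 b13 b14 b15) || (
  (b6 && satB b1 b2 b3 b4 b5 false b7 b8 b9 b10 b11 b12 b13 b14 b15) || (
  (b7 && satB b1 b2 b3 b4 b5 b6 false b8 b9 b10 b11 b12 b13 b14 b15) || (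
  (b8 && satB b1 b2 b3 b4 b5 b6 b7 false b9 b10 b11 b12 b13 b14 b15) || (
  (b9 && satB b1 b2 b3 b4 b5 b6 b7 b8 false b10 b11 b12 b13 b14 b15) || (
  (b10 && satB b1 b2 b3 b4 b5 b6 b7 b8 b9 false b11 b12 b13 b14 b15) || (
  (b11 && satB b1 b2 b3 b4 b5 b6 b7 b8 b9 b10 false b12 b13 b14 b15) || (
  (b12 && satB b1 b2 b3 b4 b5 b6 b7 b8 b9 b10 b11 false b13 b14 b15) || (
  (b13 && satB b1 b2 b3 b4 b5 b6 b7 b8 b9 b10 b11 b12 false b14 b15) || (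
  (b14 && satB b1 b2 b3 b4 b5 b6 b7 b8 b9 b10 b11 b12 b13 false b15) || (
  (b15 && satB b1 b2 b3 b4 b5 b6 b7 b8 b9 b10 b11 b12 b13 b14 false) || false))))))))))))))

def allB (f : Bool → Bool) : Bool := f true && f false

theorem allB_spec {f : Bool → Bool} (h : allB f = true) (b : Bool) : f b = true := by
  unfold allB at h
  cases b <;> simp_all

set_option maxRecDepth 100000 in
theorem big : (allB fun b1 => allB fun b2 => allB fun b3 => allB fun b4 => allB fun b5 => allB fun b6 => allB fun b7 => allB fun b8 => allB fun b9 => allB fun b10 => allB fun b11 => allB fun b12 => allB fun b13 => allB fun b14 => allB fun b15 =>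
    (!satB b1 b2 b3 b4 b5 b6 b7 b8 b9 b10 b11 b12 b13 b14 b15) || (goodB b1 b2 b3 b4 b5 b6 b7 b8 b9 b10 b11 b12 b13 b14 b15 || redB b1 b2 b3 b4 b5 b6 b7 b8 b9 b10 b11 b12 b13 b14 b15)) = true := by
  decide +kernel

def L15 : List ℕ := [1, 2, 3, 4, 5, 6, 7, 8, 9, 10, 11, 12, 13, 14, 15]

def satG (g : ℕ → Bool) : Bool :=
  L15.all fun x => g x || (L15.filter fun a => Nat.blt a (a ^^^ x)).any fun a => g a && g (a ^^^ x)

def upd (g : ℕ → Bool) (s : ℕ) : ℕ → Bool := fun i => !(Nat.beq i s) && g i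

theorem satG_eq (g : ℕ → Bool) : satG g = satB (g 1) (g 2) (g 3) (g 4) (g 5) (g 6) (g 7) (g 8) (g 9) (g 10) (g 11) (g 12) (g 13) (g 14) (g 15) := by rfl

theorem redG_eq (g : ℕ → Bool) : (L15.any fun s => g s && satG (upd g s)) = redB (g 1) (g 2) (g 3) (g 4) (g 5) (g 6) (g 7) (g 8) (g 9) (g 10) (g 11) (g 12) (g 13) (g 14) (g 15) := by rfl

theorem bigG (g : ℕ → Bool) : ((!satG g) || (goodB (g 1) (g 2) (g 3) (g 4) (g 5) (g 6) (g 7) (g 8) (g 9) (g 10) (g 11) (g 12) (g 13) (g 14) (g 15) || (L15.any fun s => g s && satG (upd g s)))) = true := by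
  rw [satG_eq g, redG_eq g]
  exact (allB_spec (allB_spec (allB_spec (allB_spec (allB_spec (allB_spec (allB_spec (allB_spec (allB_spec (allB_spec (allB_spec (allB_spec (allB_spec (allB_spec (allB_spec big (g 1)) (g 2)) (g 3)) (g 4)) (g 5)) (g 6)) (g 7)) (g 8)) (g 9)) (g 10)) (g 11)) (g 12)) (g 13)) (g 14)) (g 15))

def ee (n : ℕ) : Fin 4 → ZMod 2 := fun j => if n.testBit j then 1 else 0

theorem ee_surj : ∀ x : Fin 4 → ZMod 2, ∃ i : Fin 16, ee i = x := by decide +kernel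
theorem ee_xor : ∀ i j : Fin 16, ee (i.val ^^^ j.val) = ee i + ee j := by decide +kernel
theorem ee_inj : ∀ i j : Fin 16, ee i = ee j → i = j := by decide +kernel
theorem ee_zero : ee 0 = 0 := by decide +kernel

theorem mem_L15 (i : ℕ) : i ∈ L15 ↔ i < 16 ∧ i ≠ 0 := by
  simp only [L15, List.mem_cons, List.not_mem_nil, or_false]; omega

theorem ee_ne (i : ℕ) (h : i < 16) (h0 : i ≠ 0) : ee i ≠ 0 := by
  intro h1
  have := ee_inj ⟨i, h⟩ 0 (by rw [h1]; exact ee_zero.symm)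
  exact h0 (congrArg Fin.val this)

theorem sat_iff (S : Set (Fin 4 → ZMod 2)) (g : ℕ → Bool) (hg : ∀ i < 16, g i = true ↔ ee i ∈ S)
    (h0 : g 0 = false) : Saturating S ↔ satG g = true := by
  have hz : (0 : Fin 4 → ZMod 2) ∉ S := by
    intro h
    rw [← ee_zero, ← hg 0 (by norm_num), h0] at h
    exact Bool.noConfusion h
  have hg0 : ∀ i, g i = true → i ≠ 0 := by
    rintro i hi rfl
    rw [h0] at hi; exact Bool.noConfusion hi
  simp only [satG, List.all_eq_true, Bool.or_eq_true, List.any_eq_true, List.mem_filter, mem_L15,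
    Bool.and_eq_true, Nat.blt_eq]
  constructor
  · rintro ⟨-, h⟩ x ⟨hx, hx0⟩
    by_cases hm : g x = true
    · exact Or.inl hm
    right
    obtain ⟨a, ha, b, hb, hab, hs⟩ := h (ee x) (ee_ne x hx hx0) (by rwa [← hg x hx])
    obtain ⟨i, rfl⟩ := ee_surj a
    obtain ⟨j, rfl⟩ := ee_surj b
    rw [← ee_xor] at hs
    have hlt : i.val ^^^ j.val < 16 := Nat.xor_lt_two_pow (n := 4) i.2 j.2
    have hx' : x = i.val ^^^ j.val := congrArg Fin.val (ee_inj ⟨x, hx⟩ ⟨_, hlt⟩ hs)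
    rw [← hg _ i.2] at ha
    rw [← hg _ j.2] at hb
    have e1 : i.val ^^^ x = j.val := by rw [hx', ← Nat.xor_assoc, Nat.xor_self, Nat.zero_xor]
    have e2 : j.val ^^^ x = i.val := by
      rw [hx', Nat.xor_comm i.val, ← Nat.xor_assoc, Nat.xor_self, Nat.zero_xor]
    have hne : i.val ≠ j.val := fun h => hab (by rw [h])
    rcases Nat.lt_or_gt_of_ne hne with h | h
    · exact ⟨i, ⟨⟨i.2, hg0 _ ha⟩, by rwa [e1]⟩, ha, by rwa [e1]⟩
    · exact ⟨j, ⟨⟨j.2, hg0 _ hb⟩, by rwa [e2]⟩, hb, by rwa [e2]⟩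
  · intro h
    refine ⟨fun s hs h0 => hz (h0 ▸ hs), ?_⟩
    intro x hx0 hxS
    obtain ⟨i, rfl⟩ := ee_surj x
    have hi0 : i.val ≠ 0 := by intro h; rw [h] at hx0; exact hx0 ee_zero
    rcases h i ⟨i.2, hi0⟩ with h | ⟨a, ⟨⟨ha, ha0⟩, hlt⟩, h1, h2⟩
    · exact absurd ((hg _ i.2).1 h) hxS
    · have hl : a ^^^ i.val < 16 := Nat.xor_lt_two_pow (n := 4) ha i.2
      refine ⟨ee a, (hg _ ha).1 h1, ee (a ^^^ i.val), (hg _ hl).1 h2, ?_, ?_⟩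
      · intro h
        have := congrArg Fin.val (ee_inj ⟨a, ha⟩ ⟨_, hl⟩ h)
        simp only at this
        omega
      · have := ee_xor ⟨a, ha⟩ ⟨_, hl⟩
        simp only at this
        rw [← this, ← Nat.xor_assoc, Nat.xor_self, Nat.zero_xor]

theorem upd_spec (S : Set (Fin 4 → ZMod 2)) (g : ℕ → Bool) (hg : ∀ i < 16, g i = true ↔ ee i ∈ S)
    (s : ℕ) (hs : s < 16) : ∀ i < 16, upd g s i = true ↔ ee i ∈ S \ {ee s} := by
  intro i hi
  simp only [upd, Bool.and_eq_true, hg i hi, Set.mem_sdiff, Set.mem_singleton_iff,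
    Bool.not_eq_true', ← Bool.not_eq_true, Nat.beq_eq]
  constructor
  · rintro ⟨h1, h2⟩
    exact ⟨h2, fun h => h1 (congrArg Fin.val (ee_inj ⟨i, hi⟩ ⟨s, hs⟩ h))⟩
  · rintro ⟨h1, h2⟩
    exact ⟨fun h => h2 (by rw [h]), h1⟩

theorem minSat_iff (S : Set (Fin 4 → ZMod 2)) (g : ℕ → Bool)
    (hg : ∀ i < 16, g i = true ↔ ee i ∈ S) (h0 : g 0 = false) :
    MinSat S ↔ satG g = true ∧ (L15.any fun s => g s && satG (upd g s)) = false := by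
  have hu : ∀ s, upd g s 0 = false := fun s => by simp [upd, h0]
  unfold MinSat
  rw [sat_iff S g hg h0]
  refine and_congr_right fun _ => ?_
  rw [← Bool.not_eq_true, List.any_eq_true]
  simp only [Bool.and_eq_true, mem_L15]
  constructor
  · rintro h ⟨s, ⟨hs, _⟩, h1, h2⟩
    exact h (ee s) ((hg s hs).1 h1) ((sat_iff _ _ (upd_spec S g hg s hs) (hu s)).2 h2)
  · intro h s hs hS
    obtain ⟨i, rfl⟩ := ee_surj s
    have hi := (hg i i.2).2 hs
    refine h ⟨i, ⟨i.2, ?_⟩, hi, (sat_iff _ _ (upd_spec S g hg i i.2) (hu i)).1 hS⟩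
    intro h
    rw [h, h0] at hi; exact Bool.noConfusion hi

theorem card_eq (S : Set (Fin 4 → ZMod 2)) (g : ℕ → Bool)
    (hg : ∀ i < 16, g i = true ↔ ee i ∈ S) : S.ncard = ∑ i : Fin 16, (g i).toNat := by
  have h : S = (fun i : Fin 16 => ee i) '' ((Finset.univ.filter fun i : Fin 16 => g i = true : Finset (Fin 16)) : Set (Fin 16)) := by
    ext x
    obtain ⟨i, rfl⟩ := ee_surj x
    simp only [Set.mem_image, Finset.coe_filter, Finset.mem_univ, true_and, Set.mem_setOf_eq]
    constructor
    · intro h; exact ⟨i, (hg i i.2).2 h, rfl⟩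
    · rintro ⟨j, hj, h⟩; rw [← h]; exact (hg j j.2).1 hj
  rw [h, Set.ncard_image_of_injective _ (fun i j h => ee_inj i j h), Set.ncard_coe_finset,
    Finset.card_filter]
  refine Finset.sum_congr rfl fun i _ => ?_
  cases g i <;> rfl

theorem exG (g : ℕ → Bool) (h0 : g 0 = false)
    (h : satG g = true ∧ (L15.any fun s => g s && satG (upd g s)) = false) :
    ∃ S : Set (Fin 4 → ZMod 2), MinSat S ∧ S.ncard = ∑ i : Fin 16, (g i).toNat := by
  have hg : ∀ i < 16, g i = true ↔ ee i ∈ {x | ∃ j < 16, g j = true ∧ ee j = x} := by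
    intro i hi
    constructor
    · intro h; exact ⟨i, hi, h, rfl⟩
    · rintro ⟨j, hj, h, e⟩
      have : j = i := congrArg Fin.val (ee_inj ⟨j, hj⟩ ⟨i, hi⟩ e)
      rwa [← this]
  exact ⟨_, (minSat_iff _ g hg h0).2 h, card_eq _ g hg⟩

theorem minSat_PG3_sizes (k : ℕ) :
    (∃ S : Set (Fin 4 → ZMod 2), MinSat S ∧ S.ncard = k) ↔ k = 5 ∨ k = 6 ∨ k = 8 := by
  constructor
  · rintro ⟨S, hS, rfl⟩
    classical
    let g : ℕ → Bool := fun i => decide (ee i ∈ S)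
    have hg : ∀ i < 16, g i = true ↔ ee i ∈ S := fun i _ => by simp [g]
    have h0 : g 0 = false := by
      simp only [g, decide_eq_false_iff_not]
      exact fun h => hS.1.1 _ h ee_zero
    have hm := (minSat_iff S g hg h0).1 hS
    have hb := bigG g
    rw [card_eq S g hg]
    rw [hm.1, hm.2] at hb
    clear_value g
    simp only [Bool.not_true, Bool.false_or, Bool.or_false, goodB, Bool.or_eq_true, beq_iff_eq] at hb
    have hs : ∑ i : Fin 16, (g i).toNat = (g 0).toNat + ((g 1).toNat + (g 2).toNat + (g 3).toNat + (g 4).toNat + (g 5).toNat + (g 6).toNat + (g 7).toNat + (g 8).toNat + (g 9).toNat + (g 10).toNat + (g 11).toNat + (g 12).toNat + (g 13).toNat + (g 14).toNat + (g 15).toNat) := by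
      simp only [Fin.sum_univ_succ, Fin.sum_univ_zero]
      simp [Fin.val_succ]
      omega
    rw [hs, h0, Bool.toNat_false, Nat.zero_add]
    omega
  · rintro (rfl | rfl | rfl)
    · exact exG (fun i => decide (i ∈ ([1, 2, 4, 8, 15] : List ℕ))) (by decide +kernel) (by decide +kernel)
    · exact exG (fun i => decide (i ∈ ([1, 2, 3, 4, 8, 12] : List ℕ))) (by decide +kernel) (by decide +kernel)
    · exact exG (fun i => decide (i ∈ ([1, 2, 3, 4, 5, 6, 7, 8] : List ℕ))) (by decide +kernel) (by decide +kernel)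
end

section
/- The smallest complete cap in PG(3,2) has size 5: there exists a complete cap of 5 nonzero vectors in (ZMod 2)^4, and every complete cap in (ZMod 2)^4 has at least 5 points. -/
/-- The smallest complete cap in PG(3,2) has size 5. -/
theorem completeCap_PG3_min_size :
    (∃ S : Set (Fin 4 → ZMod 2), CompleteCap S ∧ S.ncard = 5) ∧
      ∀ S : Set (Fin 4 → ZMod 2), CompleteCap S → 5 ≤ S.ncard := by
  constructor
  · let F : Finset (Fin 4 → ZMod 2) :=
      {![1,0,0,0], ![0,1,0,0], ![0,0,1,0], ![0,0,0,1], ![1,1,1,1]}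
    have h0 : ∀ s ∈ F, s ≠ 0 := by decide
    have h1 : ∀ a ∈ F, ∀ b ∈ F, ∀ c ∈ F, a ≠ b → a ≠ c → b ≠ c → a + b + c ≠ 0 := by
      decide +kernel
    have h2 : ∀ x : Fin 4 → ZMod 2, x ≠ 0 → x ∉ F →
        ∃ a ∈ F, ∃ b ∈ F, a ≠ b ∧ x = a + b := by
      decide +kernel
    have h3 : F.card = 5 := by decide +kernel
    refine ⟨(F : Set (Fin 4 → ZMod 2)), ⟨⟨?_, ?_⟩, ⟨?_, ?_⟩⟩, ?_⟩
    · exact h0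
    · exact h1
    · exact h0
    · exact h2
    · rw [Set.ncard_coe_finset]; exact h3
  · rintro S ⟨-, -, hS⟩
    by_contra hlt
    obtain ⟨F, rfl⟩ := (Set.toFinite S).exists_finset_coe
    rw [Set.ncard_coe_finset] at hlt
    let f : Sym2 (Fin 4 → ZMod 2) → (Fin 4 → ZMod 2) :=
      Sym2.lift ⟨fun a b => a + b, fun a b => add_comm a b⟩
    have hsub : (Finset.univ : Finset (Fin 4 → ZMod 2)) ⊆ (insert 0 F).sym2.image f := by
      intro x _
      have key : ∃ a ∈ insert 0 F, ∃ b ∈ insert 0 F, a + b = x := by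
        by_cases hx : x = 0
        · exact ⟨0, by simp, 0, by simp, by simp [hx]⟩
        by_cases hxF : x ∈ F
        · exact ⟨0, by simp, x, by simp [hxF], by simp⟩
        · obtain ⟨a, ha, b, hb, -, h⟩ := hS x hx (by simpa using hxF)
          exact ⟨a, Finset.mem_insert_of_mem (by simpa using ha), b,
            Finset.mem_insert_of_mem (by simpa using hb), h.symm⟩
      obtain ⟨a, ha, b, hb, h⟩ := key
      exact Finset.mem_image.2 ⟨s(a, b), Finset.mk_mem_sym2_iff.2 ⟨ha, hb⟩, h⟩
    have h1 := (Finset.card_le_card hsub).trans Finset.card_image_le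
    rw [Finset.card_sym2] at h1
    have h2 : (insert 0 F).card + 1 ≤ 6 := by
      have := Finset.card_insert_le 0 F
      omega
    have h3 := Nat.choose_le_choose 2 h2
    have h4 : (Finset.univ : Finset (Fin 4 → ZMod 2)).card = 16 := by simp
    have h5 : Nat.choose 6 2 = 15 := by decide
    omega
end

section
/- Up to projective equivalence there are exactly four minimal 1-saturating sets in PG(3,2): the number of orbits of the action of GL(4, ZMod 2) on the collection of minimal 1-saturating sets of nonzero vectors of (ZMod 2)^4 is exactly 4 (one of size 5, one of size 6 and two of size 8). -/
namespace PG3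

abbrev V := Fin 4 → ZMod 2

def code (x : V) : ℕ := (x 0).val + 2 * (x 1).val + 4 * (x 2).val + 8 * (x 3).val

def vec (n : ℕ) : V := fun i => if n.testBit i.val then 1 else 0

def toSet (m : ℕ) : Set V := {x | m.testBit (code x) = true}

instance (m : ℕ) : DecidablePred (· ∈ toSet m) := fun x =>
  inferInstanceAs (Decidable (m.testBit (code x) = true))

def satB (m : ℕ) : Bool :=
  !m.testBit 0 && (List.range 16).all fun x => x == 0 || m.testBit x ||
    (List.range 16).any fun a => m.testBit a && m.testBit (a ^^^ x)

def minB (m : ℕ) : Bool :=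
  satB m && (List.range 16).all fun s => !m.testBit s || !satB (m ^^^ (1 <<< s))

lemma code_lt : ∀ x : V, code x < 16 := by decide
lemma vec_code : ∀ x : V, vec (code x) = x := by decide
lemma code_vec : ∀ n < 16, code (vec n) = n := by decide
lemma code_add : ∀ x y : V, code (x + y) = code x ^^^ code y := by decide +kernel
lemma code_zero : code 0 = 0 := by decide
lemma code_eq_zero (x : V) : code x = 0 ↔ x = 0 := by
  constructor
  · intro h; rw [← vec_code x, h]; decide
  · rintro rfl; exact code_zero
lemma code_inj {x y : V} (h : code x = code y) : x = y := by
  rw [← vec_code x, h, vec_code]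

lemma mem_toSet (m : ℕ) (x : V) : x ∈ toSet m ↔ m.testBit (code x) = true := Iff.rfl

lemma forall_code (P : ℕ → Prop) : (∀ n < 16, P n) ↔ ∀ x : V, P (code x) :=
  ⟨fun h x => h _ (code_lt x), fun h n hn => code_vec n hn ▸ h (vec n)⟩

lemma exists_code (P : ℕ → Prop) : (∃ n < 16, P n) ↔ ∃ x : V, P (code x) :=
  ⟨fun ⟨n, hn, h⟩ => ⟨vec n, (code_vec n hn).symm ▸ h⟩, fun ⟨x, h⟩ => ⟨_, code_lt x, h⟩⟩

lemma add_self' (x : V) : x + x = 0 := CharTwo.add_self_eq_zero x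

lemma sat_iff (m : ℕ) : Saturating (toSet m) ↔ satB m = true := by
  unfold satB Saturating
  simp only [Bool.and_eq_true, Bool.not_eq_true', List.all_eq_true, List.any_eq_true,
    Bool.or_eq_true, List.mem_range, beq_iff_eq]
  rw [forall_code]
  simp only [exists_code, code_eq_zero, ← code_add, ← mem_toSet]
  refine and_congr ⟨fun h => ?_, fun h s hs h0 => ?_⟩ (forall_congr' fun x => ⟨fun h => ?_, fun h h0 hx => ?_⟩)
  · by_contra hc
    exact h 0 (by rw [mem_toSet, code_zero]; simpa using hc) rfl
  · subst h0
    rw [mem_toSet, code_zero, h] at hs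
    cases hs
  · by_cases h0 : x = 0
    · exact Or.inl (Or.inl h0)
    by_cases hx : x ∈ toSet m
    · exact Or.inl (Or.inr hx)
    obtain ⟨a, ha, b, hb, -, rfl⟩ := h h0 hx
    refine Or.inr ⟨a, ha, ?_⟩
    rwa [← add_assoc, add_self', zero_add]
  · rcases h with (h | h) | ⟨a, ha, hb⟩
    · exact absurd h h0
    · exact absurd h hx
    · refine ⟨a, ha, _, hb, fun e => h0 ?_, ?_⟩
      · simpa using e
      · rw [← add_assoc, add_self', zero_add]

lemma toSet_diff (m : ℕ) (s : V) (hs : s ∈ toSet m) :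
    toSet m \ {s} = toSet (m ^^^ (1 <<< code s)) := by
  ext x
  rw [mem_toSet, Nat.testBit_xor, Nat.one_shiftLeft, Nat.testBit_two_pow]
  simp only [Set.mem_sdiff, Set.mem_singleton_iff]
  by_cases h : x = s
  · subst h; rw [mem_toSet] at hs; simp [hs]
  · have : code s ≠ code x := fun e => h (code_inj e.symm)
    simp [h, this, mem_toSet]

lemma min_iff (m : ℕ) : MinSat (toSet m) ↔ minB m = true := by
  unfold minB MinSat
  simp only [Bool.and_eq_true, Bool.not_eq_true', List.all_eq_true,
    Bool.or_eq_true, List.mem_range]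
  rw [forall_code, sat_iff]
  refine and_congr Iff.rfl (forall_congr' fun s => ?_)
  by_cases hs : s ∈ toSet m
  · rw [toSet_diff m s hs, sat_iff]
    have h2 := hs
    rw [mem_toSet] at h2
    simp [hs, h2]
  · have h2 := hs
    rw [mem_toSet] at h2
    simp [hs, h2]

lemma exists_toSet (S : Set V) : ∃ m < 2 ^ 16, S = toSet m := by
  classical
  refine ⟨Nat.ofBits fun i : Fin 16 => decide (vec i ∈ S), Nat.ofBits_lt_two_pow _, ?_⟩
  ext x
  rw [mem_toSet, Nat.testBit_ofBits_lt _ _ (code_lt x)]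
  simp [vec_code]

def lst : List ℕ := [510, 854, 1334, 3870, 4382, 13110, 21846, 27030, 33046]

def chk : Bool :=
  (List.range 16).all fun a => !(a.testBit 1 && a.testBit 2) ||
  (List.range 16).all fun b => !(b.testBit 0) ||
  (List.range 16).all fun c => !(c.testBit 0) ||
  (List.range 16).all fun d =>
    let m := a + 16 * b + 256 * c + 4096 * d
    !minB m || lst.contains m

lemma chk_true : chk = true := by decide +kernel

lemma mem_lst (m : ℕ) (hm : m < 2 ^ 16) (h : MinSat (toSet m)) (h1 : m.testBit 1 = true)
    (h2 : m.testBit 2 = true) (h4 : m.testBit 4 = true) (h8 : m.testBit 8 = true) :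
    m ∈ lst := by
  have hc := chk_true
  unfold chk at hc
  simp only [Bool.not_eq_true', List.all_eq_true, Bool.or_eq_true, List.mem_range,
    List.contains_iff_mem, Bool.and_eq_false_iff] at hc
  rw [min_iff] at h
  have e : m % 16 + 16 * (m / 16 % 16) + 256 * (m / 256 % 16) + 4096 * (m / 4096) = m := by omega
  have t1 : (m % 16).testBit 1 = true := by
    rw [show 16 = 2 ^ 4 from rfl, Nat.testBit_mod_two_pow, h1]; rfl
  have t2 : (m % 16).testBit 2 = true := by
    rw [show 16 = 2 ^ 4 from rfl, Nat.testBit_mod_two_pow, h2]; rfl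
  have t4 : (m / 16 % 16).testBit 0 = true := by
    rw [show 16 = 2 ^ 4 from rfl, Nat.testBit_mod_two_pow, Nat.testBit_div_two_pow, h4]; rfl
  have t8 : (m / 256 % 16).testBit 0 = true := by
    rw [show 16 = 2 ^ 4 from rfl, Nat.testBit_mod_two_pow, show 256 = 2 ^ 8 from rfl,
      Nat.testBit_div_two_pow, h8]; rfl
  have := hc (m % 16) (by omega)
  rw [t1, t2] at this
  have := (this.resolve_left (by simp)) (m / 16 % 16) (by omega)
  rw [t4] at this
  have := (this.resolve_left (by simp)) (m / 256 % 16) (by omega)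
  rw [t8] at this
  have := (this.resolve_left (by simp)) (m / 4096) (by omega)
  rw [e, h] at this
  exact this.resolve_left (by simp)

lemma ProjEquiv.trans' {S T U : Set V} (h : ProjEquiv S T) (k : ProjEquiv T U) :
    ProjEquiv S U := by
  obtain ⟨g, rfl⟩ := h
  obtain ⟨f, rfl⟩ := k
  refine ⟨f * g, ?_⟩
  rw [Set.image_image]
  simp [Matrix.mulVec_mulVec]

lemma ginj (g : Matrix.GeneralLinearGroup (Fin 4) (ZMod 2)) :
    Function.Injective (fun x : V => Matrix.mulVec (g : Matrix (Fin 4) (Fin 4) (ZMod 2)) x) := by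
  apply Matrix.mulVec_injective_of_isUnit
  exact g.isUnit

lemma gsurj (g : Matrix.GeneralLinearGroup (Fin 4) (ZMod 2)) :
    Function.Surjective (fun x : V => Matrix.mulVec (g : Matrix (Fin 4) (Fin 4) (ZMod 2)) x) :=
  Finite.surjective_of_injective (ginj g)

lemma ProjEquiv.ncard {S T : Set V} (h : ProjEquiv S T) : S.ncard = T.ncard := by
  obtain ⟨g, rfl⟩ := h
  exact (Set.ncard_image_of_injective _ (ginj g)).symm

lemma sat_equiv (e : V ≃ₗ[ZMod 2] V) (S : Set V) : Saturating (e '' S) ↔ Saturating S := by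
  unfold Saturating
  refine and_congr ?_ ?_
  · simp
  · rw [e.surjective.forall]
    refine forall_congr' fun x => ?_
    simp [← map_add]

lemma min_equiv (e : V ≃ₗ[ZMod 2] V) (S : Set V) : MinSat (e '' S) ↔ MinSat S := by
  unfold MinSat
  rw [sat_equiv, Set.forall_mem_image]
  refine and_congr Iff.rfl (forall_congr' fun s => forall_congr' fun _ => ?_)
  rw [← Set.image_singleton, ← Set.image_sdiff e.injective, sat_equiv]

lemma proj_equiv (e : V ≃ₗ[ZMod 2] V) (S : Set V) : ProjEquiv S (e '' S) := by
  refine ⟨⟨LinearMap.toMatrix' e.toLinearMap, LinearMap.toMatrix' e.symm.toLinearMap, ?_, ?_⟩, ?_⟩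
  · rw [← LinearMap.toMatrix'_comp]; simp
  · rw [← LinearMap.toMatrix'_comp]; simp
  · simp [LinearMap.toMatrix'_mulVec]

def P (i j : Fin 4) : V ≃ₗ[ZMod 2] V := LinearEquiv.funCongrLeft (ZMod 2) (ZMod 2) (Equiv.swap i j)

lemma proj_swap (i j : Fin 4) (m m' : ℕ)
    (h : ∀ x : V, x ∈ toSet m ↔ (fun k => x (Equiv.swap i j k)) ∈ toSet m') :
    ProjEquiv (toSet m) (toSet m') := by
  have : toSet m' = P i j '' toSet m := by
    ext y
    rw [LinearEquiv.image_eq_preimage_symm, Set.mem_preimage, h]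
    have : (fun k => (P i j).symm y (Equiv.swap i j k)) = y := (P i j).apply_symm_apply y
    rw [this]
  rw [this]
  exact proj_equiv _ _

lemma span_top (S : Set V) (h : Saturating S) : Submodule.span (ZMod 2) S = ⊤ := by
  rw [eq_top_iff]
  intro x _
  by_cases h0 : x = 0
  · rw [h0]; exact zero_mem _
  by_cases hx : x ∈ S
  · exact Submodule.subset_span hx
  obtain ⟨a, ha, b, hb, -, rfl⟩ := h.2 x h0 hx
  exact add_mem (Submodule.subset_span ha) (Submodule.subset_span hb)

lemma exists_equiv (S : Set V) (h : Saturating S) :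
    ∃ e : V ≃ₗ[ZMod 2] V, ∀ i : Fin 4, Pi.single i 1 ∈ e '' S := by
  obtain ⟨b, hbS, hsp, hli⟩ := exists_linearIndependent (ZMod 2) S
  rw [span_top S h] at hsp
  let B : Module.Basis b (ZMod 2) V := Module.Basis.mk hli (by rw [Subtype.range_coe, hsp])
  have : Fintype b := Fintype.ofFinite b
  have hc : Fintype.card b = 4 := by
    rw [← Module.finrank_eq_card_basis B]; simp
  let e := Fintype.equivFinOfCardEq hc
  let B' := B.reindex e
  refine ⟨B'.equivFun, fun i => ⟨B' i, ?_, ?_⟩⟩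
  · have : B' i = (e.symm i : V) := by simp [B', B]
    rw [this]
    exact hbS (e.symm i).2
  · ext j
    rw [Module.Basis.equivFun_self, Pi.single_apply]
    simp [eq_comm]

lemma ncard_toSet (m k : ℕ) (h : (Finset.univ.filter fun x : V => x ∈ toSet m).card = k) :
    (toSet m).ncard = k := by
  rw [← h, ← Set.ncard_coe_finset]
  simp

lemma proj_lst (m : ℕ) (hm : m ∈ lst) :
    ProjEquiv (toSet m) (toSet 33046) ∨ ProjEquiv (toSet m) (toSet 854) ∨
    ProjEquiv (toSet m) (toSet 27030) ∨ ProjEquiv (toSet m) (toSet 510) := by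
  simp only [lst, List.mem_cons, List.not_mem_nil, or_false] at hm
  rcases hm with rfl | rfl | rfl | rfl | rfl | rfl | rfl | rfl | rfl
  · exact Or.inr (Or.inr (Or.inr (proj_swap 0 0 _ _ (by decide +kernel))))
  · exact Or.inr (Or.inl (proj_swap 0 0 _ _ (by decide +kernel)))
  · exact Or.inr (Or.inl (proj_swap 0 1 _ _ (by decide +kernel)))
  · exact Or.inr (Or.inr (Or.inr (proj_swap 2 3 _ _ (by decide +kernel))))
  · exact Or.inr (Or.inl (proj_swap 0 2 _ _ (by decide +kernel)))
  · exact Or.inr (Or.inr (Or.inr (proj_swap 1 3 _ _ (by decide +kernel))))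
  · exact Or.inr (Or.inr (Or.inr (proj_swap 0 3 _ _ (by decide +kernel))))
  · exact Or.inr (Or.inr (Or.inl (proj_swap 0 0 _ _ (by decide +kernel))))
  · exact Or.inl (proj_swap 0 0 _ _ (by decide +kernel))

end PG3


/-- Up to projective equivalence there are exactly four minimal 1-saturating sets
in PG(3,2): one of size 5, one of size 6 and two of size 8. -/
theorem minSat_PG3_four_orbits :
    ∃ A B C D : Set (Fin 4 → ZMod 2),
      MinSat A ∧ MinSat B ∧ MinSat C ∧ MinSat D ∧
      A.ncard = 5 ∧ B.ncard = 6 ∧ C.ncard = 8 ∧ D.ncard = 8 ∧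
      ¬ ProjEquiv A B ∧ ¬ ProjEquiv A C ∧ ¬ ProjEquiv A D ∧
      ¬ ProjEquiv B C ∧ ¬ ProjEquiv B D ∧ ¬ ProjEquiv C D ∧
      ∀ S : Set (Fin 4 → ZMod 2), MinSat S →
        ProjEquiv S A ∨ ProjEquiv S B ∨ ProjEquiv S C ∨ ProjEquiv S D := by
  refine ⟨PG3.toSet 33046, PG3.toSet 854, PG3.toSet 27030, PG3.toSet 510,
    (PG3.min_iff _).2 (by decide +kernel), (PG3.min_iff _).2 (by decide +kernel),
    (PG3.min_iff _).2 (by decide +kernel), (PG3.min_iff _).2 (by decide +kernel), ?_⟩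
  have c1 := PG3.ncard_toSet 33046 5 (by decide +kernel)
  have c2 := PG3.ncard_toSet 854 6 (by decide +kernel)
  have c3 := PG3.ncard_toSet 27030 8 (by decide +kernel)
  have c4 := PG3.ncard_toSet 510 8 (by decide +kernel)
  have ne : ∀ {S T : Set (Fin 4 → ZMod 2)}, S.ncard ≠ T.ncard → ¬ ProjEquiv S T :=
    fun h k => h (PG3.ProjEquiv.ncard k)
  refine ⟨c1, c2, c3, c4, ne (by omega), ne (by omega), ne (by omega), ne (by omega),
    ne (by omega), ?_, ?_⟩
  · rintro ⟨g, hg⟩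
    have ha : PG3.vec 1 ∈ PG3.toSet 510 := by decide +kernel
    have hb : PG3.vec 2 ∈ PG3.toSet 510 := by decide +kernel
    have hc : PG3.vec 1 + PG3.vec 2 ∈ PG3.toSet 510 := by decide +kernel
    rw [← hg] at ha hb hc
    obtain ⟨a, ha, ea⟩ := ha
    obtain ⟨b, hb, eb⟩ := hb
    obtain ⟨c, hc, ec⟩ := hc
    rw [← ea, ← eb] at ec
    have ec : c = a + b := PG3.ginj g (by simpa [Matrix.mulVec_add] using ec)
    subst ec
    have key : ∀ a b : PG3.V, a ∈ PG3.toSet 27030 → b ∈ PG3.toSet 27030 →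
        a + b ∉ PG3.toSet 27030 := by decide +kernel
    exact key a b ha hb hc
  · intro S hS
    obtain ⟨e, he⟩ := PG3.exists_equiv S hS.1
    have hp := PG3.proj_equiv e S
    rw [← PG3.min_equiv e] at hS
    obtain ⟨m, hm, hSm⟩ := PG3.exists_toSet (e '' S)
    rw [hSm] at hS he hp
    have := PG3.mem_lst m hm hS (he 0) (he 1) (he 2) (he 3)
    rcases PG3.proj_lst m this with h | h | h | h
    · exact Or.inl (PG3.ProjEquiv.trans' hp h)
    · exact Or.inr (Or.inl (PG3.ProjEquiv.trans' hp h))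
    · exact Or.inr (Or.inr (Or.inl (PG3.ProjEquiv.trans' hp h)))
    · exact Or.inr (Or.inr (Or.inr (PG3.ProjEquiv.trans' hp h)))
end

section
/- The possible sizes of minimal 1-saturating sets in PG(4,2) are exactly 9, 10, 11 and 16: a natural number k is the cardinality of some minimal 1-saturating set of nonzero vectors of (ZMod 2)^5 if and only if k ∈ {9, 10, 11, 16}. -/
namespace PG4

def force {α : Type} (n : ℕ) (f : ℕ → α) : α := Nat.casesOn n (f 0) (fun k => f (Nat.succ k))

theorem force_eq {α : Type} (n : ℕ) (f : ℕ → α) : force n f = f n := by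
  cases n <;> rfl

/-- translate a bit mask by `s` (a power of two) -/
def sw (s m v : ℕ) : ℕ :=
  Nat.lor (Nat.shiftLeft (Nat.land v m) s) (Nat.land (Nat.shiftRight v s) m)

def bit (a : ℕ) : ℕ := Nat.shiftLeft 1 a

def del (U a : ℕ) : ℕ := Nat.xor (Nat.lor U (bit a)) (bit a)

def isBit (B : ℕ) : Bool := Nat.beq B (bit (Nat.log2 B))

def small (A : ℕ) : Bool := force (Nat.xor A (bit (Nat.log2 A))) isBit

def single (A : ℕ) : Bool := Bool.rec (isBit A) true (Nat.beq A 0)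

def fin (P cov : ℕ) : Bool :=
  force (Nat.shiftRight P 32) fun I => force (Nat.xor I (Nat.land I cov)) single

def stepC (ih : ℕ → ℕ → Bool) (cov P' M : ℕ) : Bool :=
  Bool.rec (ih P' cov) (force (Nat.lor cov M) (ih P')) (force (Nat.shiftRight M 32) small)

def stepB (ih : ℕ → ℕ → Bool) (cov P' M : ℕ) : Bool :=
  Bool.rec (stepC ih cov P' M) false (Nat.beq M 0)

def stepA (P : ℕ) (ih : ℕ → ℕ → Bool) (cov P' : ℕ) : Bool :=
  force (Nat.land P P') (stepB ih cov P')

def loop (P : ℕ) (l : List (ℕ × ℕ)) : ℕ → ℕ → Bool :=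
  List.rec (motive := fun _ => ℕ → ℕ → Bool) (fun _ cov => fin P cov)
    (fun q _ ih Pt cov => force (sw q.1 q.2 Pt) (stepA P ih cov)) l

def gray : List (ℕ × ℕ) :=
  let q0 : ℕ × ℕ := (1, 0x5555555555555555)
  let q1 : ℕ × ℕ := (2, 0x3333333333333333)
  let q2 : ℕ × ℕ := (4, 0x0f0f0f0f0f0f0f0f)
  let q3 : ℕ × ℕ := (8, 0x00ff00ff00ff00ff)
  let q4 : ℕ × ℕ := (16, 0x0000ffff0000ffff)
  [q0, q1, q0, q2, q0, q1, q0, q3, q0, q1, q0, q2, q0, q1, q0, q4,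
   q0, q1, q0, q2, q0, q1, q0, q3, q0, q1, q0, q2, q0, q1, q0]

def good (n : ℕ) : Bool := Nat.beq n 10 || Nat.beq n 11 || Nat.beq n 12 || Nat.beq n 17

def go (y : ℕ) : List ℕ → ℕ → ℕ → Bool
  | [], P, n => bif loop P gray P 0 then good n else true
  | a :: l, P, n =>
    bif loop P gray P 0 then
      (force (del (del P a) (Nat.succ a)) fun P' => go y l P' n) &&
      ((bif Nat.testBit P a then
        force (del (del (Nat.lor P (bit (a + 32))) (Nat.xor a 1)) (Nat.xor a y)) fun P' =>
        go y l P' (Nat.succ n) else true) &&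
      (bif Nat.testBit P (Nat.succ a) then
        force (del (del (Nat.lor P (bit (a + 33))) (Nat.xor (Nat.succ a) 1))
          (Nat.xor (Nat.succ a) y)) fun P' =>
        go y l P' (Nat.succ n) else true))
    else true

def cls : List ℕ := [30, 28, 26, 22, 14, 6, 10, 12, 18, 20, 24]

theorem bit_eq (a : ℕ) : bit a = 2 ^ a := by
  show 1 <<< a = 2 ^ a
  exact Nat.one_shiftLeft a

def Valid (q : ℕ × ℕ) : Prop := q.1 < 32 ∧ ∀ a < 64,
  if q.2.testBit a then a ^^^ q.1 = q.1 + a ∧ (q.1 ≤ a → q.2.testBit (a - q.1) = false)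
  else q.1 ≤ a ∧ q.2.testBit (a - q.1) = true ∧ a ^^^ q.1 = a - q.1

instance (q : ℕ × ℕ) : Decidable (Valid q) := by unfold Valid; infer_instance

theorem sw_spec (q : ℕ × ℕ) (hq : Valid q) (v a : ℕ) (ha : a < 64) :
    (sw q.1 q.2 v).testBit a = v.testBit (a ^^^ q.1) := by
  have h := hq.2 a ha
  change (((v &&& q.2) <<< q.1) ||| ((v >>> q.1) &&& q.2)).testBit a = _
  rw [Nat.testBit_or, Nat.testBit_shiftLeft, Nat.testBit_and, Nat.testBit_and,
    Nat.testBit_shiftRight]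
  split_ifs at h with hm
  · obtain ⟨h1, h2⟩ := h
    rw [h1]
    by_cases h3 : q.1 ≤ a
    · simp [hm, h2 h3]
    · simp [hm, h3]
  · obtain ⟨h1, h2, h3⟩ := h
    simp [hm, h1, h2, h3]

theorem isBit_bit (k : ℕ) : isBit (2 ^ k) = true := by
  unfold isBit
  rw [Nat.log2_two_pow, bit_eq]
  exact Nat.beq_refl _

theorem single_of (A u : ℕ) (h : ∀ b, A.testBit b = true → b = u) : single A = true := by
  by_cases hA : A = 0
  · subst hA; rfl
  · have : A = 2 ^ u := by
      obtain ⟨i, hi⟩ := Nat.exists_testBit_of_ne_zero hA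
      have := h i hi
      subst this
      apply Nat.eq_of_testBit_eq
      intro b
      rw [Nat.testBit_two_pow]
      by_cases hb : i = b
      · subst hb; simp [hi]
      · simp only [hb, decide_false]
        by_contra hc
        exact hb (h b (by simpa using hc)).symm
    subst this
    unfold single
    rw [isBit_bit]
    cases Nat.beq (2 ^ u) 0 <;> rfl

theorem small_of (A s t : ℕ) (hst : s ≠ t) (h : ∀ b, A.testBit b = true → b = s ∨ b = t)
    (hs : A.testBit s = A.testBit t) : small A = true := by
  by_cases hA : A = 0
  · subst hA; decide
  · have hbit : A.testBit s = true ∧ A.testBit t = true := by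
      obtain ⟨i, hi⟩ := Nat.exists_testBit_of_ne_zero hA
      rcases h i hi with rfl | rfl
      · exact ⟨hi, hs ▸ hi⟩
      · exact ⟨hs ▸ hi, hi⟩
    have hl : A.testBit A.log2 = true := Nat.testBit_log2 hA
    have key : ∀ s t : ℕ, s ≠ t → (∀ b, A.testBit b = true → b = s ∨ b = t) →
        A.testBit s = true → A.testBit t = true → A.log2 = s → small A = true := by
      intro s t hst h hs ht hl
      unfold small
      rw [force_eq, hl, bit_eq]
      have : A.xor (2 ^ s) = 2 ^ t := by
        change A ^^^ 2 ^ s = 2 ^ t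
        apply Nat.eq_of_testBit_eq
        intro b
        rw [Nat.testBit_xor, Nat.testBit_two_pow, Nat.testBit_two_pow]
        by_cases h1 : s = b
        · subst h1; simp [hs, hst.symm]
        · by_cases h2 : t = b
          · subst h2; simp [ht, h1]
          · have : A.testBit b = false := by
              by_contra hc
              rcases h b (by simpa using hc) with r | r
              · exact h1 r.symm
              · exact h2 r.symm
            simp [this, h1, h2]
      rw [this, isBit_bit]
    rcases h _ hl with h1 | h1
    · exact key s t hst h hbit.1 hbit.2 h1
    · exact key t s hst.symm (fun b hb => (h b hb).symm) hbit.2 hbit.1 h1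

/-- `x` is a sum represented only by the pair `s, s ^^^ x` -/
def E (p : ℕ → Bool) (s x : ℕ) : Prop :=
  x ≠ 0 ∧ x < 32 ∧ p s = true ∧ p (s ^^^ x) = true ∧
    ∀ a < 32, p a = true → p (a ^^^ x) = true → a = s ∨ a = s ^^^ x

structure Hyp (p : ℕ → Bool) (u : ℕ) : Prop where
  cov : ∀ x < 32, ∃ a < 32, p a = true ∧ p (a ^^^ x) = true
  edge : ∀ s < 32, p s = true → s ≠ u → ∃ x, E p s x

structure Con (p : ℕ → Bool) (P : ℕ) : Prop where
  lo : ∀ a < 32, p a = true → P.testBit a = true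
  hi : ∀ a, P.testBit (a + 32) = true → a < 32 ∧ p a = true

def xs : List (ℕ × ℕ) → ℕ → List ℕ
  | [], _ => []
  | q :: l, x => (x ^^^ q.1) :: xs l (x ^^^ q.1)

theorem xor_lt {a b : ℕ} (ha : a < 32) (hb : b < 32) : a ^^^ b < 32 :=
  Nat.xor_lt_two_pow (n := 5) ha hb

theorem xor_hi : ∀ a < 32, ∀ x < 32, (a + 32) ^^^ x = (a ^^^ x) + 32 := by decide +kernel

theorem loop_cons (P : ℕ) (q : ℕ × ℕ) (l : List (ℕ × ℕ)) (Pt cov : ℕ) :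
    loop P (q :: l) Pt cov =
      bif Nat.beq (P &&& sw q.1 q.2 Pt) 0 then false else
      bif small ((P &&& sw q.1 q.2 Pt) >>> 32) then
        loop P l (sw q.1 q.2 Pt) (cov ||| (P &&& sw q.1 q.2 Pt))
      else loop P l (sw q.1 q.2 Pt) cov := by
  change force (sw q.1 q.2 Pt) (stepA P (loop P l) cov) = _
  rw [force_eq]
  unfold stepA
  rw [force_eq]
  change stepB _ _ _ (P &&& sw q.1 q.2 Pt) = _
  unfold stepB stepC
  rw [force_eq, force_eq]
  cases Nat.beq (P &&& sw q.1 q.2 Pt) 0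
  · rw [show Nat.shiftRight (P &&& sw q.1 q.2 Pt) 32 = (P &&& sw q.1 q.2 Pt) >>> 32 from rfl]
    cases small ((P &&& sw q.1 q.2 Pt) >>> 32) <;> rfl
  · rfl

theorem loop_true {p : ℕ → Bool} {u P : ℕ} (H : Hyp p u) (C : Con p P) :
    ∀ (l : List (ℕ × ℕ)) (Pt cov x : ℕ), x < 32 → (∀ q ∈ l, Valid q) →
      (∀ a < 64, Pt.testBit a = P.testBit (a ^^^ x)) → (0 ∉ xs l x) →
      (∀ s < 32, p s = true → s ≠ u → cov.testBit s = true ∨ ∃ x' ∈ xs l x, E p s x') →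
      loop P l Pt cov = true := by
  intro l
  induction l with
  | nil =>
    intro Pt cov x hx hv hPt h0 hc
    change fin P cov = true
    unfold fin
    rw [force_eq, force_eq]
    change single ((P >>> 32) ^^^ ((P >>> 32) &&& cov)) = true
    apply single_of _ u
    intro b hb
    rw [Nat.testBit_xor, Nat.testBit_and, Nat.testBit_shiftRight] at hb
    by_contra hbu
    have h1 : P.testBit (b + 32) = true := by
      rw [add_comm]
      by_contra hcon
      simp [hcon] at hb
    obtain ⟨h2, h3⟩ := C.hi b h1
    rcases hc b h2 h3 hbu with h4 | ⟨x', hx', _⟩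
    · rw [add_comm] at h1
      simp [h1, h4] at hb
    · simp [xs] at hx'
  | cons q l ih =>
    intro Pt cov x hx hv hPt h0 hc
    rw [loop_cons]
    have hq : Valid q := hv q (by simp)
    set x' := x ^^^ q.1 with hx'
    have hx'lt : x' < 32 := xor_lt hx hq.1
    have hx'0 : x' ≠ 0 := by
      intro h; apply h0; simp [xs, ← hx', h]
    have h0' : 0 ∉ xs l x' := by
      intro h; apply h0; simp [xs, ← hx', h]
    have hv' : ∀ q ∈ l, Valid q := fun r hr => hv r (by simp [hr])
    have hP' : ∀ a < 64, (sw q.1 q.2 Pt).testBit a = P.testBit (a ^^^ x') := by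
      intro a ha
      rw [sw_spec q hq _ _ ha, hPt _ (Nat.xor_lt_two_pow (n := 6) ha (by have := hq.1; omega)),
        hx', Nat.xor_assoc, Nat.xor_comm q.1 x]
    have hM : ∀ a < 32, p a = true → p (a ^^^ x') = true →
        (P &&& sw q.1 q.2 Pt).testBit a = true := by
      intro a ha h1 h2
      rw [Nat.testBit_and, hP' a (by omega), C.lo a ha h1, C.lo _ (xor_lt ha hx'lt) h2]; rfl
    have hM0 : Nat.beq (P &&& sw q.1 q.2 Pt) 0 = false := by
      obtain ⟨a, ha, h1, h2⟩ := H.cov x' hx'lt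
      have h3 := hM a ha h1 h2
      by_contra hcon
      have := Nat.eq_of_beq_eq_true (by simpa using hcon)
      rw [this] at h3
      simp at h3
    rw [hM0, cond_false]
    cases hsm : small ((P &&& sw q.1 q.2 Pt) >>> 32) with
    | true =>
      rw [cond_true]
      apply ih _ _ x' hx'lt hv' hP' h0'
      intro s hs hps hsu
      rcases hc s hs hps hsu with h1 | ⟨z, hz, hE⟩
      · left; simp [Nat.testBit_or, h1]
      · simp only [xs, ← hx', List.mem_cons] at hz
        rcases hz with rfl | hz
        · left
          rw [Nat.testBit_or, hM s hs hps hE.2.2.2.1]; simp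
        · right; exact ⟨z, hz, hE⟩
    | false =>
      rw [cond_false]
      apply ih _ _ x' hx'lt hv' hP' h0'
      intro s hs hps hsu
      rcases hc s hs hps hsu with h1 | ⟨z, hz, hE⟩
      · left; exact h1
      · simp only [xs, ← hx', List.mem_cons] at hz
        rcases hz with rfl | hz
        · exfalso
          have hbits : ∀ b < 32, ((P &&& sw q.1 q.2 Pt) >>> 32).testBit b =
              (P.testBit (b + 32) && P.testBit ((b ^^^ x') + 32)) := by
            intro b hb
            rw [Nat.testBit_shiftRight, add_comm, Nat.testBit_and, hP' _ (by omega),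
              xor_hi b hb x' hx'lt]
          rw [small_of _ s (s ^^^ x')] at hsm
          · exact absurd hsm (by simp)
          · intro h
            apply hx'0
            have : s ^^^ (s ^^^ x') = s ^^^ s := by rw [← h]
            rw [← Nat.xor_assoc, Nat.xor_self, Nat.zero_xor] at this
            exact this
          · intro b hb
            have hb32 : b < 32 := by
              rw [Nat.testBit_shiftRight, add_comm, Nat.testBit_and] at hb
              have : P.testBit (b + 32) = true := by
                by_contra hcon
                simp [hcon] at hb
              exact (C.hi b this).1
            rw [hbits b hb32, Bool.and_eq_true] at hb
            exact hE.2.2.2.2 b hb32 (C.hi _ hb.1).2 (C.hi _ hb.2).2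
          · rw [hbits s hs, hbits _ (xor_lt hs hx'lt), Nat.xor_assoc, Nat.xor_self, Nat.xor_zero,
              Bool.and_comm]
        · right; exact ⟨z, hz, hE⟩

theorem gray_valid : ∀ q ∈ gray, Valid q := by decide +kernel

theorem gray_xs : ∀ x < 32, x ≠ 0 → x ∈ xs gray 0 := by decide +kernel

theorem gray_xs0 : 0 ∉ xs gray 0 := by decide +kernel

theorem check_true {p : ℕ → Bool} {u P : ℕ} (H : Hyp p u) (C : Con p P) :
    loop P gray P 0 = true := by
  apply loop_true H C gray P 0 0 (by norm_num) gray_valid (by simp) gray_xs0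
  intro s hs hps hsu
  right
  obtain ⟨x, hx⟩ := H.edge s hs hps hsu
  exact ⟨x, gray_xs x hx.2.1 hx.1, hx⟩

theorem testBit_del (U a b : ℕ) : (del U a).testBit b = (U.testBit b && decide (b ≠ a)) := by
  change ((U ||| bit a) ^^^ bit a).testBit b = _
  rw [bit_eq, Nat.testBit_xor, Nat.testBit_or, Nat.testBit_two_pow]
  by_cases h : a = b
  · subst h; simp
  · have : b ≠ a := fun h' => h h'.symm
    simp [h, this]

theorem con_del {p : ℕ → Bool} {P : ℕ} (C : Con p P) (a : ℕ) (ha : p a = false) :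
    Con p (del P a) := by
  constructor
  · intro b hb hpb
    rw [testBit_del, C.lo b hb hpb]
    have : b ≠ a := by rintro rfl; simp [ha] at hpb
    simp [this]
  · intro b hb
    rw [testBit_del, Bool.and_eq_true] at hb
    exact C.hi b hb.1

theorem con_add {p : ℕ → Bool} {P : ℕ} (C : Con p P) (a : ℕ) (ha : p a = true) (ha' : a < 32) :
    Con p (Nat.lor P (bit (a + 32))) := by
  change Con p (P ||| bit (a + 32))
  rw [bit_eq]
  constructor
  · intro b hb hpb
    rw [Nat.testBit_or, C.lo b hb hpb]; rfl
  · intro b hb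
    rw [Nat.testBit_or, Nat.testBit_two_pow, Bool.or_eq_true] at hb
    rcases hb with hb | hb
    · exact C.hi b hb
    · have : b = a := by simp at hb; omega
      subst this; exact ⟨ha', ha⟩

theorem go_sound {p : ℕ → Bool} {u y : ℕ} (H : Hyp p u) :
    ∀ (l : List ℕ) (P n : ℕ), (∀ a ∈ l, a < 31 ∧ a ^^^ 1 = a + 1 ∧ (a + 1) ^^^ 1 = a) →
      (∀ a ∈ l, p a = true → p (a ^^^ 1) = false ∧ p (a ^^^ y) = false) →
      (∀ a ∈ l, p (a + 1) = true → p ((a + 1) ^^^ 1) = false ∧ p ((a + 1) ^^^ y) = false) →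
      Con p P → go y l P n = true →
      good (n + (l.map fun a => (p a).toNat + (p (a + 1)).toNat).sum) = true := by
  intro l
  induction l with
  | nil =>
    intro P n _ _ _ C h
    rw [go, check_true H C, cond_true] at h
    simpa using h
  | cons a l ih =>
    intro P n h1 h2 h3 C h
    rw [go, check_true H C, cond_true, Bool.and_eq_true, Bool.and_eq_true] at h
    simp only [force_eq] at h
    obtain ⟨hN, hA, hB⟩ := h
    have i1 := fun b hb => h1 b (List.mem_cons_of_mem a hb)
    have i2 := fun b hb => h2 b (List.mem_cons_of_mem a hb)
    have i3 := fun b hb => h3 b (List.mem_cons_of_mem a hb)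
    have ha := h1 a List.mem_cons_self
    simp only [List.map_cons, List.sum_cons]
    by_cases hpa : p a = true
    · obtain ⟨e1, e2⟩ := h2 a List.mem_cons_self hpa
      have e3 : p (a + 1) = false := by rw [← ha.2.1]; exact e1
      rw [C.lo a (by omega) hpa, cond_true] at hA
      have := ih _ _ i1 i2 i3 (con_del (con_del (con_add C a hpa (by omega)) _ e1) _ e2) hA
      rw [hpa, e3]
      simp only [Bool.toNat_true, Bool.toNat_false]
      convert this using 2
      simp only [Nat.succ_eq_add_one]; omega
    · by_cases hpb : p (a + 1) = true
      · obtain ⟨e1, e2⟩ := h3 a List.mem_cons_self hpb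
        rw [C.lo (a + 1) (by omega) hpb, cond_true] at hB
        have := ih _ _ i1 i2 i3 (con_del (con_del (con_add C (a + 1) hpb (by omega)) _ e1) _ e2) hB
        simp only [Bool.not_eq_true] at hpa
        rw [hpa, hpb]
        simp only [Bool.toNat_true, Bool.toNat_false]
        convert this using 2
        simp only [Nat.succ_eq_add_one]; omega
      · simp only [Bool.not_eq_true] at hpa hpb
        have := ih _ _ i1 i2 i3 (con_del (con_del C _ hpa) _ hpb) hN
        rw [hpa, hpb]
        simpa using this

theorem goA : go 2 cls (del (del (del (del (del (del (del (65815 * 2 ^ 32 + 4294967295)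
    3) 5) 6) 9) 10) 17) 18) 6 = true := by
  rw [show del (del (del (del (del (del (del (65815 * 2 ^ 32 + 4294967295)
    3) 5) 6) 9) 10) 17) 18 = 282677567158679 by decide +kernel]
  decide +kernel

theorem goB : go 6 cls (del (del (del (del (del (del (del (del (65815 * 2 ^ 32 + 4294967295)
    3) 5) 6) 7) 9) 14) 17) 22) 6 = true := by
  rw [show del (del (del (del (del (del (del (del (65815 * 2 ^ 32 + 4294967295)
    3) 5) 6) 7) 9) 14) 17) 22 = 282677563211031 by decide +kernel]
  decide +kernel

abbrev V := Fin 5 → ZMod 2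

theorem vadd_self (v : V) : v + v = 0 := by
  ext i; exact CharTwo.add_self_eq_zero (v i)

theorem vcancel (a b : V) : a + (a + b) = b := by
  rw [← add_assoc, vadd_self, zero_add]

theorem vcancel' (a b : V) : a + b + b = a := by
  rw [add_assoc, vadd_self, add_zero]

theorem veq_of (a b c : V) (h : a + b = c) : a = c + b := by
  rw [← h, vcancel']

def Edge (W : Set V) (s x : V) : Prop :=
  x ≠ 0 ∧ s ∈ W ∧ s + x ∈ W ∧ ∀ a ∈ W, a + x ∈ W → a = s ∨ a = s + x

theorem Edge.symm {W : Set V} {s x : V} (h : Edge W s x) : Edge W (s + x) x := by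
  refine ⟨h.1, h.2.2.1, ?_, ?_⟩
  · rw [vcancel']; exact h.2.1
  · intro a ha hax
    rw [vcancel']
    exact (h.2.2.2 a ha hax).symm

theorem exists_extend (T : Set V) (hT : ∀ x, ∃ a ∈ T, a + x ∈ T) :
    ∀ (d k : ℕ) (hk : k + d = 5) (v : Fin k → V), LinearIndependent (ZMod 2) v → (∀ i, v i ∈ T) →
      ∃ v' : Fin 5 → V, LinearIndependent (ZMod 2) v' ∧ (∀ i, v' i ∈ T) ∧
        ∀ i : Fin k, v' (Fin.castLE (by omega) i) = v i := by
  intro d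
  induction d with
  | zero =>
    intro k hk v hv hvT
    obtain rfl : k = 5 := by omega
    exact ⟨v, hv, hvT, fun i => rfl⟩
  | succ d ih =>
    intro k hk v hv hvT
    have hne : Submodule.span (ZMod 2) (Set.range v) ≠ ⊤ := by
      intro h
      have h1 := finrank_span_eq_card hv
      rw [h, finrank_top] at h1
      simp at h1
      omega
    obtain ⟨x, hx⟩ : ∃ x, x ∉ Submodule.span (ZMod 2) (Set.range v) := by
      by_contra hcon
      push Not at hcon
      exact hne (Submodule.eq_top_iff'.2 hcon)
    obtain ⟨a, ha, hax⟩ := hT x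
    obtain ⟨w, hw, hwT⟩ : ∃ w, w ∉ Submodule.span (ZMod 2) (Set.range v) ∧ w ∈ T := by
      by_cases h1 : a ∈ Submodule.span (ZMod 2) (Set.range v)
      · refine ⟨a + x, fun h2 => hx ?_, hax⟩
        have := Submodule.add_mem _ h1 h2
        rwa [vcancel] at this
      · exact ⟨a, h1, ha⟩
    obtain ⟨v', h1, h2, h3⟩ := ih (k + 1) (by omega) (Fin.snoc v w)
      (linearIndependent_finSnoc.2 ⟨hv, hw⟩)
      (by
        intro i
        refine Fin.lastCases ?_ (fun j => ?_) i
        · simpa using hwT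
        · simpa using hvT j)
    refine ⟨v', h1, h2, fun i => ?_⟩
    have := h3 (Fin.castSucc i)
    rw [Fin.snoc_castSucc] at this
    rw [← this]
    rfl

def psi (v : Fin 5 → V) (n : ℕ) : V := ∑ i : Fin 5, if n.testBit i then v i else 0

theorem psi_xor (v : Fin 5 → V) (a b : ℕ) : psi v (a ^^^ b) = psi v a + psi v b := by
  unfold psi
  rw [← Finset.sum_add_distrib]
  apply Finset.sum_congr rfl
  intro i _
  rw [Nat.testBit_xor]
  cases a.testBit i <;> cases b.testBit i <;> simp [vadd_self]

theorem psi_zero {v : Fin 5 → V} (hv : LinearIndependent (ZMod 2) v) {a : ℕ} (ha : a < 32)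
    (h : psi v a = 0) : a = 0 := by
  have h1 := Fintype.linearIndependent_iff.1 hv (fun i => if a.testBit i then 1 else 0) (by
    rw [← h]; unfold psi
    apply Finset.sum_congr rfl
    intro i _
    split_ifs <;> simp)
  apply Nat.eq_of_testBit_eq
  intro i
  rw [Nat.zero_testBit]
  by_cases hi : i < 5
  · have := h1 ⟨i, hi⟩
    simpa using this
  · exact Nat.testBit_lt_two_pow (lt_of_lt_of_le ha
      (Nat.pow_le_pow_right (n := 2) (by norm_num) (by omega : 5 ≤ i)))

theorem psi_inj {v : Fin 5 → V} (hv : LinearIndependent (ZMod 2) v) {a b : ℕ} (ha : a < 32)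
    (hb : b < 32) (h : psi v a = psi v b) : a = b := by
  have := psi_zero hv (xor_lt ha hb) (by rw [psi_xor, h, vadd_self])
  exact Nat.xor_eq_zero_iff.1 this

theorem psi_surj {v : Fin 5 → V} (hv : LinearIndependent (ZMod 2) v) (w : V) :
    ∃ a < 32, psi v a = w := by
  have hb : Function.Bijective (fun a : Fin 32 => psi v a) := by
    rw [Fintype.bijective_iff_injective_and_card]
    refine ⟨fun a b h => Fin.ext (psi_inj hv a.2 b.2 h), ?_⟩
    simp [ZMod.card]
  obtain ⟨a, ha⟩ := hb.2 w
  exact ⟨a, a.2, ha⟩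

open Classical in
noncomputable def pf (W : Set V) (o : V) (v : Fin 5 → V) (n : ℕ) : Bool :=
  decide (o + psi v n ∈ W)

theorem pf_iff (W : Set V) (o : V) (v : Fin 5 → V) (n : ℕ) :
    pf W o v n = true ↔ o + psi v n ∈ W := by simp [pf]

theorem pf_E {W : Set V} {o : V} {v : Fin 5 → V} (hv : LinearIndependent (ZMod 2) v)
    {s x : ℕ} (hs : s < 32) (hx : x < 32) (h : Edge W (o + psi v s) (psi v x)) :
    E (pf W o v) s x := by
  have hz : psi v 0 = 0 := by simp [psi]
  refine ⟨?_, hx, (pf_iff ..).2 h.2.1, ?_, ?_⟩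
  · rintro rfl; exact h.1 hz
  · rw [pf_iff, psi_xor, ← add_assoc]; exact h.2.2.1
  · intro a ha h1 h2
    rw [pf_iff] at h1 h2
    rw [psi_xor, ← add_assoc] at h2
    rcases h.2.2.2 _ h1 h2 with h3 | h3
    · left; exact psi_inj hv ha hs (add_left_cancel h3)
    · right
      rw [add_assoc, ← psi_xor] at h3
      exact psi_inj hv ha (xor_lt hs hx) (add_left_cancel h3)

theorem pf_Hyp {W : Set V} {o u : V} {v : Fin 5 → V} (hv : LinearIndependent (ZMod 2) v)
    (hc : ∀ x, ∃ a ∈ W, a + x ∈ W) (he : ∀ s ∈ W, s ≠ u → ∃ x, Edge W s x) :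
    ∃ k, Hyp (pf W o v) k := by
  obtain ⟨k, hk, hk'⟩ := psi_surj hv (o + u)
  refine ⟨k, ?_, ?_⟩
  · intro x hx
    obtain ⟨a, ha, hax⟩ := hc (psi v x)
    obtain ⟨n, hn, hn'⟩ := psi_surj hv (o + a)
    refine ⟨n, hn, ?_, ?_⟩
    · rw [pf_iff, hn', vcancel]; exact ha
    · rw [pf_iff, psi_xor, hn', ← add_assoc, vcancel]; exact hax
  · intro s hs hps hsk
    rw [pf_iff] at hps
    obtain ⟨x, hx⟩ := he _ hps (by
      intro h
      apply hsk
      apply psi_inj hv hs hk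
      rw [hk', ← h, vcancel])
    obtain ⟨n, hn, rfl⟩ := psi_surj hv x
    exact ⟨n, pf_E hv hs hn hx⟩

theorem pf_card {W : Set V} {o : V} {v : Fin 5 → V} (hv : LinearIndependent (ZMod 2) v) :
    ∑ n ∈ Finset.range 32, (pf W o v n).toNat = W.ncard := by
  have h1 : W = (fun n => o + psi v n) '' ((Finset.range 32).filter fun n => pf W o v n = true) := by
    ext w
    constructor
    · intro hw
      obtain ⟨n, hn, hn'⟩ := psi_surj hv (o + w)
      refine ⟨n, ?_, ?_⟩
      · simp only [Finset.coe_filter, Finset.mem_range, Set.mem_ofPred_eq]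
        refine ⟨hn, ?_⟩
        rw [pf_iff, hn', vcancel]; exact hw
      · simp only [hn', vcancel]
    · rintro ⟨n, hn, rfl⟩
      simp only [Finset.coe_filter, Finset.mem_range, Set.mem_ofPred_eq] at hn
      exact (pf_iff ..).1 hn.2
  conv_rhs => rw [h1]
  rw [Set.InjOn.ncard_image, Set.ncard_coe_finset, Finset.card_filter]
  · apply Finset.sum_congr rfl
    intro n _
    cases pf W o v n <;> rfl
  · intro a ha b hb h
    simp only [Finset.coe_filter, Finset.mem_range, Set.mem_ofPred_eq] at ha hb
    exact psi_inj hv ha.1 hb.1 (add_left_cancel h)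

theorem con_base (p : ℕ → Bool) : Con p 4294967295 := by
  constructor
  · intro a ha _
    have : (4294967295 : ℕ) = 2 ^ 32 - 1 := by norm_num
    rw [this, Nat.testBit_two_pow_sub_one]
    simpa using ha
  · intro a h
    have : (4294967295 : ℕ) = 2 ^ 32 - 1 := by norm_num
    rw [this, Nat.testBit_two_pow_sub_one] at h
    simp at h

theorem E_kill {p : ℕ → Bool} {s x a : ℕ} (h : E p s x) (ha : a < 32) (hs : a ≠ s)
    (hs' : a ≠ s ^^^ x) (hp : p a = true) : p (a ^^^ x) = false := by
  by_contra hc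
  rcases h.2.2.2.2 a ha hp (by simpa using hc) with h1 | h1
  · exact hs h1
  · exact hs' h1

theorem con_six {p : ℕ → Bool} (h0 : p 0 = true) (h1 : p 1 = true) (h2 : p 2 = true)
    (h4 : p 4 = true) (h8 : p 8 = true) (h16 : p 16 = true) :
    Con p (65815 * 2 ^ 32 + 4294967295) := by
  have := con_add (con_add (con_add (con_add (con_add (con_add (con_base p) 0 h0 (by norm_num))
    1 h1 (by norm_num)) 2 h2 (by norm_num)) 4 h4 (by norm_num)) 8 h8 (by norm_num))
    16 h16 (by norm_num)
  convert this using 1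
  decide +kernel

theorem sum_cls {p : ℕ → Bool} (h0 : p 0 = true) (h1 : p 1 = true) (h2 : p 2 = true)
    (h4 : p 4 = true) (h8 : p 8 = true) (h16 : p 16 = true) (h3 : p 3 = false) (h5 : p 5 = false)
    (h9 : p 9 = false) (h17 : p 17 = false) :
    6 + (cls.map fun a => (p a).toNat + (p (a + 1)).toNat).sum =
      ∑ n ∈ Finset.range 32, (p n).toNat := by
  simp only [cls, List.map_cons, List.map_nil, List.sum_cons, List.sum_nil, Finset.sum_range_succ,
    Finset.sum_range_zero, h0, h1, h2, h3, h4, h5, h8, h9, h16, h17, Bool.toNat_true,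
    Bool.toNat_false, Nat.reduceAdd]
  omega

theorem cls_prop : ∀ a ∈ cls, (a < 31 ∧ a ^^^ 1 = a + 1 ∧ (a + 1) ^^^ 1 = a) ∧ 6 ≤ a := by
  decide

theorem caseA {p : ℕ → Bool} {u : ℕ} (H : Hyp p u) (e1 : E p 0 1) (e2 : E p 0 2)
    (h4 : p 4 = true) (h8 : p 8 = true) (h16 : p 16 = true) :
    good (∑ n ∈ Finset.range 32, (p n).toNat) = true := by
  have h0 : p 0 = true := e1.2.2.1
  have h1 : p 1 = true := e1.2.2.2.1
  have h2 : p 2 = true := e2.2.2.2.1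
  have h3 : p 3 = false := E_kill e1 (a := 2) (by norm_num) (by norm_num) (by norm_num) h2
  have h5 : p 5 = false := E_kill e1 (a := 4) (by norm_num) (by norm_num) (by norm_num) h4
  have h9 : p 9 = false := E_kill e1 (a := 8) (by norm_num) (by norm_num) (by norm_num) h8
  have h17 : p 17 = false := E_kill e1 (a := 16) (by norm_num) (by norm_num) (by norm_num) h16
  have h6 : p 6 = false := E_kill e2 (a := 4) (by norm_num) (by norm_num) (by norm_num) h4
  have h10 : p 10 = false := E_kill e2 (a := 8) (by norm_num) (by norm_num) (by norm_num) h8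
  have h18 : p 18 = false := E_kill e2 (a := 16) (by norm_num) (by norm_num) (by norm_num) h16
  rw [← sum_cls h0 h1 h2 h4 h8 h16 h3 h5 h9 h17]
  refine go_sound (y := 2) H cls _ 6 (fun a ha => (cls_prop a ha).1) ?_ ?_
    (con_del (con_del (con_del (con_del (con_del (con_del (con_del
      (con_six h0 h1 h2 h4 h8 h16) 3 h3) 5 h5) 6 h6) 9 h9) 10 h10) 17 h17) 18 h18) ?_
  · intro a ha hp
    have := cls_prop a ha
    exact ⟨E_kill e1 (by omega) (by omega) (by norm_num; omega) hp,
      E_kill e2 (by omega) (by omega) (by norm_num; omega) hp⟩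
  · intro a ha hp
    have := cls_prop a ha
    exact ⟨E_kill e1 (by omega) (by omega) (by norm_num; omega) hp,
      E_kill e2 (by omega) (by omega) (by norm_num; omega) hp⟩
  · exact goA

theorem caseB {p : ℕ → Bool} {u : ℕ} (H : Hyp p u) (e1 : E p 0 1) (e2 : E p 2 6)
    (h8 : p 8 = true) (h16 : p 16 = true) :
    good (∑ n ∈ Finset.range 32, (p n).toNat) = true := by
  have h0 : p 0 = true := e1.2.2.1
  have h1 : p 1 = true := e1.2.2.2.1
  have h2 : p 2 = true := e2.2.2.1
  have h4 : p 4 = true := e2.2.2.2.1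
  have h3 : p 3 = false := E_kill e1 (a := 2) (by decide) (by decide) (by decide) h2
  have h5 : p 5 = false := E_kill e1 (a := 4) (by decide) (by decide) (by decide) h4
  have h9 : p 9 = false := E_kill e1 (a := 8) (by decide) (by decide) (by decide) h8
  have h17 : p 17 = false := E_kill e1 (a := 16) (by decide) (by decide) (by decide) h16
  have h6 : p 6 = false := E_kill e2 (a := 0) (by decide) (by decide) (by decide) h0
  have h7 : p 7 = false := E_kill e2 (a := 1) (by decide) (by decide) (by decide) h1
  have h14 : p 14 = false := E_kill e2 (a := 8) (by decide) (by decide) (by decide) h8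
  have h22 : p 22 = false := E_kill e2 (a := 16) (by decide) (by decide) (by decide) h16
  rw [← sum_cls h0 h1 h2 h4 h8 h16 h3 h5 h9 h17]
  refine go_sound (y := 6) H cls _ 6 (fun a ha => (cls_prop a ha).1) ?_ ?_
    (con_del (con_del (con_del (con_del (con_del (con_del (con_del (con_del
      (con_six h0 h1 h2 h4 h8 h16) 3 h3) 5 h5) 6 h6) 7 h7) 9 h9) 14 h14) 17 h17) 22 h22) ?_
  · intro a ha hp
    have := cls_prop a ha
    exact ⟨E_kill e1 (by omega) (by omega) (by norm_num; omega) hp,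
      E_kill e2 (by omega) (by omega) (by rw [show 2 ^^^ 6 = 4 from rfl]; omega) hp⟩
  · intro a ha hp
    have := cls_prop a ha
    exact ⟨E_kill e1 (by omega) (by omega) (by norm_num; omega) hp,
      E_kill e2 (by omega) (by omega) (by rw [show 2 ^^^ 6 = 4 from rfl]; omega) hp⟩
  · exact goB

theorem psi_vals (v : Fin 5 → V) : psi v 0 = 0 ∧ psi v 1 = v 0 ∧ psi v 2 = v 1 ∧ psi v 4 = v 2 ∧
    psi v 8 = v 3 ∧ psi v 16 = v 4 ∧ psi v 6 = v 1 + v 2 := by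
  refine ⟨?_, ?_, ?_, ?_, ?_, ?_, ?_⟩ <;> simp [psi, Fin.sum_univ_five, Nat.testBit]

theorem abs_A {W : Set V} {o u x1 x2 : V} (hc : ∀ x, ∃ a ∈ W, a + x ∈ W)
    (he : ∀ s ∈ W, s ≠ u → ∃ x, Edge W s x) (e1 : Edge W o x1) (e2 : Edge W o x2)
    (hne : x1 ≠ x2) : good W.ncard = true := by
  have hli : LinearIndependent (ZMod 2) ![x1, x2] := by
    rw [LinearIndependent.pair_iff]
    intro s t hst
    have hz : ∀ z : ZMod 2, z = 0 ∨ z = 1 := by decide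
    rcases hz s with rfl | rfl <;> rcases hz t with rfl | rfl <;> simp at hst ⊢
    · exact e2.1 hst
    · exact e1.1 hst
    · have := veq_of _ _ _ hst
      rw [zero_add] at this
      exact hne this
  obtain ⟨v, hv, hvT, hvv⟩ := exists_extend {w | o + w ∈ W} (by
    intro x
    obtain ⟨a, ha, hax⟩ := hc x
    refine ⟨o + a, ?_, ?_⟩
    · simp only [Set.mem_ofPred_eq, vcancel]; exact ha
    · simp only [Set.mem_ofPred_eq, ← add_assoc, vadd_self, zero_add]; exact hax) 3 2 rfl ![x1, x2] hli
    (by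
      intro i
      fin_cases i
      · exact e1.2.2.1
      · exact e2.2.2.1)
  have hv0 : v 0 = x1 := hvv 0
  have hv1 : v 1 = x2 := hvv 1
  obtain ⟨p0, p1, p2, p4, p8, p16, p6⟩ := psi_vals v
  obtain ⟨k, H⟩ := pf_Hyp (o := o) hv hc he
  rw [← pf_card (o := o) hv]
  refine caseA H (pf_E hv (by norm_num) (by norm_num) ?_) (pf_E hv (by norm_num) (by norm_num) ?_)
    ?_ ?_ ?_
  · rw [p0, p1, add_zero, hv0]; exact e1
  · rw [p0, p2, add_zero, hv1]; exact e2
  · rw [pf_iff, p4]; exact hvT 2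
  · rw [pf_iff, p8]; exact hvT 3
  · rw [pf_iff, p16]; exact hvT 4

theorem li_cases (o s x1 x2 : V) :
    (o + s + x2 = 0 → s + x2 = o) ∧ (o + s = 0 → s = o) ∧ (o + s + (o + s + x2) = 0 → x2 = 0) ∧
    (x1 + (o + s + x2) = 0 → s + x2 = o + x1) ∧ (x1 + (o + s) = 0 → s = o + x1) ∧
    (x1 + (o + s) + (o + s + x2) = 0 → x1 = x2) := by
  refine ⟨?_, ?_, ?_, ?_, ?_, ?_⟩ <;>
  · intro h
    ext i
    have := congrFun h i
    simp only [Pi.add_apply, Pi.zero_apply] at this ⊢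
    revert this
    generalize o i = a
    generalize s i = b
    generalize x1 i = c
    generalize x2 i = d
    revert a b c d
    decide

theorem abs_B {W : Set V} {o u x1 s x2 : V} (hc : ∀ x, ∃ a ∈ W, a + x ∈ W)
    (he : ∀ s ∈ W, s ≠ u → ∃ x, Edge W s x) (e1 : Edge W o x1) (e2 : Edge W s x2)
    (n1 : s ≠ o) (n2 : s ≠ o + x1) (n3 : s + x2 ≠ o) (n4 : s + x2 ≠ o + x1) :
    good W.ncard = true := by
  have hne : x1 ≠ x2 := by
    rintro rfl
    rcases e1.2.2.2 s e2.2.1 e2.2.2.1 with h | h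
    · exact n1 h
    · exact n2 h
  have hz : ∀ z : ZMod 2, z = 0 ∨ z = 1 := by decide
  have hli : LinearIndependent (ZMod 2) ![x1, o + s, o + s + x2] := by
    rw [Fintype.linearIndependent_iff]
    intro g hg
    rw [Fin.sum_univ_three] at hg
    simp only [Matrix.cons_val_zero, Matrix.cons_val_one, Matrix.cons_val_two, Matrix.cons_val,
      Matrix.tail_cons, Matrix.head_cons] at hg
    obtain ⟨c1, c2, c3, c4, c5, c6⟩ := li_cases o s x1 x2
    have hg' : g 0 = 0 ∧ g 1 = 0 ∧ g 2 = 0 := by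
      rcases hz (g 0) with h0 | h0 <;> rcases hz (g 1) with h1 | h1 <;>
        rcases hz (g 2) with h2 | h2 <;> rw [h0, h1, h2] at hg <;>
        simp only [zero_smul, one_smul, zero_add, add_zero] at hg
      · exact ⟨h0, h1, h2⟩
      · exact absurd (c1 hg) n3
      · exact absurd (c2 hg) n1
      · exact absurd (c3 hg) e2.1
      · exact absurd hg e1.1
      · exact absurd (c4 hg) n4
      · exact absurd (c5 hg) n2
      · exact absurd (c6 hg) hne
    intro i
    fin_cases i
    · exact hg'.1
    · exact hg'.2.1
    · exact hg'.2.2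
  obtain ⟨v, hv, hvT, hvv⟩ := exists_extend {w | o + w ∈ W} (by
    intro x
    obtain ⟨a, ha, hax⟩ := hc x
    refine ⟨o + a, ?_, ?_⟩
    · simp only [Set.mem_ofPred_eq, vcancel]; exact ha
    · simp only [Set.mem_ofPred_eq, ← add_assoc, vadd_self, zero_add]; exact hax) 2 3 rfl
    ![x1, o + s, o + s + x2] hli
    (by
      intro i
      fin_cases i
      · exact e1.2.2.1
      · change o + (o + s) ∈ W
        rw [vcancel]; exact e2.2.1
      · change o + (o + s + x2) ∈ W
        rw [add_assoc, vcancel]; exact e2.2.2.1)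
  have hv0 : v 0 = x1 := hvv 0
  have hv1 : v 1 = o + s := hvv 1
  have hv2 : v 2 = o + s + x2 := hvv 2
  obtain ⟨p0, p1, p2, p4, p8, p16, p6⟩ := psi_vals v
  obtain ⟨k, H⟩ := pf_Hyp (o := o) hv hc he
  rw [← pf_card (o := o) hv]
  refine caseB H (pf_E hv (by norm_num) (by norm_num) ?_) (pf_E hv (by norm_num) (by norm_num) ?_)
    ?_ ?_
  · rw [p0, p1, add_zero, hv0]; exact e1
  · rw [p2, p6, hv1, hv2, vcancel, vcancel]; exact e2
  · rw [pf_iff, p8]; exact hvT 3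
  · rw [pf_iff, p16]; exact hvT 4

theorem good_of_cov {W : Set V} (hc : ∀ x, ∃ a ∈ W, a + x ∈ W)
    (he : ∀ s ∈ W, s ≠ 0 → ∃ x, Edge W s x) : good W.ncard = true := by
  obtain ⟨v, hv, hvT, -⟩ := exists_extend W hc 5 0 rfl ![] linearIndependent_empty_type
    (fun i => i.elim0)
  obtain ⟨x1, e1⟩ := he (v 0) (hvT 0) (hv.ne_zero 0)
  obtain ⟨s, hsW, hs0, n1, n2⟩ : ∃ s ∈ W, s ≠ 0 ∧ s ≠ v 0 ∧ s ≠ v 0 + x1 := by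
    by_cases h : v 1 = v 0 + x1
    · refine ⟨v 2, hvT 2, hv.ne_zero 2, fun h' => ?_, fun h' => ?_⟩
      · exact absurd (hv.injective h') (by decide)
      · exact absurd (hv.injective (h'.trans h.symm)) (by decide)
    · refine ⟨v 1, hvT 1, hv.ne_zero 1, fun h' => ?_, h⟩
      exact absurd (hv.injective h') (by decide)
  obtain ⟨x2, e2⟩ := he s hsW hs0
  by_cases n3 : s + x2 = v 0
  · have e3 := e2.symm
    rw [n3] at e3
    refine abs_A hc he e1 e3 ?_
    rintro rfl
    exact n2 (veq_of _ _ _ n3)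
  · by_cases n4 : s + x2 = v 0 + x1
    · have e3 := e2.symm
      rw [n4] at e3
      refine abs_A hc he e1.symm e3 ?_
      rintro rfl
      exact n1 (add_right_cancel n4)
    · exact abs_B hc he e1 e2 n1 n2 n3 n4

theorem minSat_good {S : Set V} (h : MinSat S) : good (S.ncard + 1) = true := by
  obtain ⟨⟨h0, hs⟩, hm⟩ := h
  have h0S : (0 : V) ∉ S := fun h => h0 0 h rfl
  rw [← Set.ncard_insert_of_notMem h0S (Set.toFinite S)]
  have hc : ∀ x, ∃ a ∈ insert (0 : V) S, a + x ∈ insert (0 : V) S := by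
    intro x
    by_cases hx : x ∈ insert (0 : V) S
    · exact ⟨0, Set.mem_insert _ _, by rwa [zero_add]⟩
    · rw [Set.mem_insert_iff, not_or] at hx
      obtain ⟨a, ha, b, hb, -, rfl⟩ := hs x hx.1 hx.2
      exact ⟨a, Set.mem_insert_of_mem _ ha, by rw [vcancel]; exact Set.mem_insert_of_mem _ hb⟩
  refine good_of_cov hc ?_
  intro s hsW hs0
  have hsS : s ∈ S := (Set.mem_insert_iff.1 hsW).resolve_left hs0
  have h1 := hm s hsS
  unfold Saturating at h1
  rw [not_and] at h1
  have h2 := h1 (fun t ht => h0 t ht.1)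
  push Not at h2
  obtain ⟨x, hx0, hxS, hx⟩ := h2
  have hxs : x ∈ S → x = s := by
    intro hxS'
    by_contra hne
    exact hxS ⟨hxS', hne⟩
  have key : ∀ a ∈ insert (0 : V) S, a + x ∈ insert (0 : V) S → a = s ∨ a = s + x := by
    intro a ha hax
    by_contra hcon
    rw [not_or] at hcon
    obtain ⟨c1, c2⟩ := hcon
    have c3 : a + x ≠ s := fun h => c2 (veq_of _ _ _ h)
    rcases Set.mem_insert_iff.1 ha with rfl | ha'
    · rw [zero_add] at hax c3
      exact c3 (hxs ((Set.mem_insert_iff.1 hax).resolve_left hx0))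
    · rcases Set.mem_insert_iff.1 hax with h3 | hax'
      · have : a = x := by rw [veq_of _ _ _ h3, zero_add]
        subst this
        exact c1 (hxs ha')
      · refine hx a ⟨ha', c1⟩ (a + x) ⟨hax', c3⟩ ?_ (vcancel a x).symm
        intro h
        exact hx0 (by simpa using h)
  refine ⟨x, hx0, hsW, ?_, key⟩
  obtain ⟨a, ha, hax⟩ := hc x
  rcases key a ha hax with rfl | rfl
  · exact hax
  · exact ha

def fm (m : ℕ) (v : V) : Bool :=
  m.testBit ((v 0).val + 2 * (v 1).val + 4 * (v 2).val + 8 * (v 3).val + 16 * (v 4).val)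

theorem minSat_of (f : V → Bool) (h0 : f 0 = false)
    (h1 : ∀ x, f x = false → x ≠ 0 → ∃ a, f a = true ∧ f (a + x) = true)
    (h2 : ∀ s, f s = true → ∃ x, x ≠ 0 ∧ (f x = true → x = s) ∧
      ∀ a, f a = true → f (a + x) = true → a = s ∨ a + x = s) : MinSat {v | f v = true} := by
  refine ⟨⟨?_, ?_⟩, ?_⟩
  · rintro s hs rfl
    simp only [Set.mem_ofPred_eq, h0] at hs
    exact absurd hs (by simp)
  · intro x hx0 hx
    obtain ⟨a, ha, hax⟩ := h1 x (by simpa using hx) hx0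
    refine ⟨a, ha, a + x, hax, ?_, (vcancel a x).symm⟩
    intro h
    exact hx0 (by simpa using h)
  · rintro s hs ⟨-, h⟩
    obtain ⟨x, hx0, hxs, hx⟩ := h2 s hs
    obtain ⟨a, ha, b, hb, -, rfl⟩ := h x hx0 (fun h => h.2 (hxs h.1))
    rcases hx a ha.1 (by rw [vcancel]; exact hb.1) with h3 | h3
    · exact ha.2 h3
    · rw [vcancel] at h3
      exact hb.2 h3

theorem ncard_fm (f : V → Bool) :
    Set.ncard {v | f v = true} = (Finset.univ.filter fun v => f v = true).card := by
  rw [← Set.ncard_coe_finset]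
  congr 1
  ext v
  simp

theorem ex9 : MinSat {v | fm 608256278 v = true} :=
  minSat_of _ (by decide +kernel) (by decide +kernel) (by decide +kernel)
theorem ex10 : MinSat {v | fm 340623636 v = true} :=
  minSat_of _ (by decide +kernel) (by decide +kernel) (by decide +kernel)
theorem ex11 : MinSat {v | fm 1616453910 v = true} :=
  minSat_of _ (by decide +kernel) (by decide +kernel) (by decide +kernel)
theorem ex16 : MinSat {v | fm 1431655766 v = true} :=
  minSat_of _ (by decide +kernel) (by decide +kernel) (by decide +kernel)

end PG4

/-- The possible sizes of minimal 1-saturating sets in PG(4,2) are exactly 9, 10, 11 and 16. -/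
theorem minSat_PG4_sizes (k : ℕ) :
    (∃ S : Set (Fin 5 → ZMod 2), MinSat S ∧ S.ncard = k) ↔
      k = 9 ∨ k = 10 ∨ k = 11 ∨ k = 16 := by
  constructor
  · rintro ⟨S, hS, rfl⟩
    have h := PG4.minSat_good hS
    simp only [PG4.good, Bool.or_eq_true, Nat.beq_eq] at h
    omega
  · rintro (rfl | rfl | rfl | rfl)
    · exact ⟨_, PG4.ex9, by rw [PG4.ncard_fm]; decide +kernel⟩
    · exact ⟨_, PG4.ex10, by rw [PG4.ncard_fm]; decide +kernel⟩
    · exact ⟨_, PG4.ex11, by rw [PG4.ncard_fm]; decide +kernel⟩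
    · exact ⟨_, PG4.ex16, by rw [PG4.ncard_fm]; decide +kernel⟩
end

section
/- The smallest complete cap in PG(4,2) has size 9: there exists a complete cap of 9 nonzero vectors in (ZMod 2)^5, and every complete cap in (ZMod 2)^5 has at least 9 points. -/
def capNine : Finset (Fin 5 → ZMod 2) := 
  {![1, 0, 0, 0, 0], ![0, 1, 0, 0, 0], ![0, 0, 1, 0, 0], ![1, 1, 1, 0, 0], ![0, 0, 0, 1, 0], 
  ![1, 1, 0, 1, 0], ![1, 0, 1, 1, 0], ![0, 0, 0, 0, 1], ![0, 1, 1, 1, 1]}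

theorem capNine_ne : ∀ s ∈ capNine, s ≠ 0 := by decide +kernel

set_option synthInstance.maxHeartbeats 400000 in
set_option synthInstance.maxSize 2000 in
theorem capNine_cap : ∀ a ∈ capNine, ∀ b ∈ capNine, ∀ c ∈ capNine,
    a + b + c = 0 → a = b ∨ a = c ∨ b = c := by decide +kernel

theorem capNine_sat : ∀ x : Fin 5 → ZMod 2, x ≠ 0 → x ∉ capNine →
    ∃ a ∈ capNine, ∃ b ∈ capNine, a ≠ b ∧ x = a + b := by decide +kernel

theorem capNine_card : capNine.card = 9 := by decide +kernel

theorem card_affine_hyperplane : ∀ u : Fin 5 → ZMod 2, u ≠ 0 →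
    (Finset.univ.filter fun x : Fin 5 → ZMod 2 => u ⬝ᵥ x = 1).card = 16 := by decide +kernel

theorem zmod2_cases : ∀ a : ZMod 2, a = 0 ∨ a = 1 := by decide

/-- Sphere packing: some nonzero functional is nonzero on at most two points of `S`. -/
theorem exists_light (S : Finset (Fin 5 → ZMod 2)) (hS : S.card ≤ 8) :
    ∃ u : Fin 5 → ZMod 2, u ≠ 0 ∧ (S.filter fun s => u ⬝ᵥ s = 1).card ≤ 2 := by
  classical
  let f : (Fin 5 → ZMod 2) × Option S → (S → ZMod 2) :=
    fun p s => p.1 ⬝ᵥ s.1 + if p.2 = some s then 1 else 0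
  have hcard : Fintype.card (S → ZMod 2) < Fintype.card ((Fin 5 → ZMod 2) × Option S) := by
    simp only [Fintype.card_prod, Fintype.card_option, Fintype.card_fun, Fintype.card_coe,
      Fintype.card_fin, ZMod.card]
    interval_cases S.card <;> norm_num
  obtain ⟨⟨w, j⟩, ⟨w', j'⟩, hne, heq⟩ := Fintype.exists_ne_map_eq_of_card_lt f hcard
  have key : ∀ s : S, w ⬝ᵥ s.1 + (if j = some s then 1 else 0)
      = w' ⬝ᵥ s.1 + if j' = some s then 1 else 0 := fun s => congrFun heq s
  refine ⟨w - w', ?_, ?_⟩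
  · intro h
    have hw : w = w' := sub_eq_zero.1 h
    subst hw
    apply hne
    have : j = j' := by
      ext1 s
      have := add_left_cancel (key s)
      by_cases h1 : j = some s <;> by_cases h2 : j' = some s <;> simp_all
    rw [this]
  · have hsub : (S.filter fun s => (w - w') ⬝ᵥ s = 1) ⊆
        (j.toFinset ∪ j'.toFinset).image Subtype.val := by
      intro s hs
      rw [Finset.mem_filter, sub_dotProduct] at hs
      obtain ⟨hsS, hs⟩ := hs
      have k := key ⟨s, hsS⟩
      simp only [Finset.mem_image, Finset.mem_union, Option.mem_toFinset, Option.mem_def]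
      refine ⟨⟨s, hsS⟩, ?_, rfl⟩
      by_contra hcon
      push Not at hcon
      simp only [hcon.1, hcon.2, if_false, add_zero] at k
      rw [k] at hs
      simp at hs
    refine (Finset.card_le_card hsub).trans (Finset.card_image_le.trans
      ((Finset.card_union_le _ _).trans ?_))
    have h : ∀ o : Option S, o.toFinset.card ≤ 1 := by
      intro o; cases o <;> simp
    have := h j
    have := h j'
    omega

theorem saturating_card (S : Finset (Fin 5 → ZMod 2))
    (h : Saturating (S : Set (Fin 5 → ZMod 2))) : 9 ≤ S.card := by
  classical
  by_contra hlt
  obtain ⟨u, hu, hT⟩ := exists_light S (by omega)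
  have h16 := card_affine_hyperplane u hu
  set T := S.filter fun s => u ⬝ᵥ s = 1 with hTdef
  have hsub : (Finset.univ.filter fun x : Fin 5 → ZMod 2 => u ⬝ᵥ x = 1) ⊆
      (T ×ˢ insert 0 (S \ T)).image fun p => p.1 + p.2 := by
    intro x hx
    have hx1 : u ⬝ᵥ x = 1 := (Finset.mem_filter.1 hx).2
    simp only [Finset.mem_image, Finset.mem_product, Prod.exists]
    by_cases hxS : x ∈ S
    · exact ⟨x, 0, ⟨Finset.mem_filter.2 ⟨hxS, hx1⟩, Finset.mem_insert_self _ _⟩, add_zero x⟩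
    · have hx0 : x ≠ 0 := by rintro rfl; simp at hx1
      obtain ⟨a, ha, b, hb, -, rfl⟩ := h.2 x hx0 (by simpa using hxS)
      have ha : a ∈ S := ha
      have hb : b ∈ S := hb
      rw [dotProduct_add] at hx1
      rcases zmod2_cases (u ⬝ᵥ a) with h0 | h1
      · have hb1 : u ⬝ᵥ b = 1 := by simpa [h0] using hx1
        exact ⟨b, a, ⟨by simp [hTdef, hb, hb1], by simp [hTdef, ha, h0]⟩, add_comm _ _⟩
      · have hb0 : u ⬝ᵥ b = 0 := by simpa [h1] using hx1
        exact ⟨a, b, ⟨by simp [hTdef, ha, h1], by simp [hTdef, hb, hb0]⟩, rfl⟩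
  have h1 := (Finset.card_le_card hsub).trans Finset.card_image_le
  rw [h16, Finset.card_product] at h1
  have h2 := Finset.card_insert_le (0 : Fin 5 → ZMod 2) (S \ T)
  have h3 : (S \ T).card + T.card = S.card :=
    Finset.card_sdiff_add_card_eq_card (Finset.filter_subset _ _)
  have h4 : T.card * (insert 0 (S \ T)).card ≤ T.card * (9 - T.card) :=
    Nat.mul_le_mul_left _ (by omega)
  interval_cases T.card <;> omega

theorem completeCap_PG4_min_size :
    (∃ S : Set (Fin 5 → ZMod 2), CompleteCap S ∧ S.ncard = 9) ∧
      ∀ S : Set (Fin 5 → ZMod 2), CompleteCap S → 9 ≤ S.ncard := by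
  constructor
  · refine ⟨(capNine : Set (Fin 5 → ZMod 2)), ⟨⟨capNine_ne, fun a ha b hb c hc h1 h2 h3 h => ?_⟩,
      capNine_ne, capNine_sat⟩, ?_⟩
    · rcases capNine_cap a ha b hb c hc h with h | h | h <;> contradiction
    rw [Set.ncard_coe_finset, capNine_card]
  · intro S hS
    classical
    have hf : S.Finite := Set.toFinite S
    have := saturating_card hf.toFinset (by simpa using hS.2)
    rwa [Set.ncard_eq_toFinset_card S hf]
end

section
/- Up to projective equivalence there is exactly one minimal 1-saturating set of size 11 in PG(4,2), and it is not a cap: the action of GL(5, ZMod 2) on the collection of minimal 1-saturating 11-sets of nonzero vectors of (ZMod 2)^5 has exactly one orbit, and no minimal 1-saturating 11-set in (ZMod 2)^5 is a cap. -/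
def sw (h k M : ℕ) : ℕ := Nat.lor (Nat.land (Nat.shiftRight M h) k) (Nat.shiftLeft (Nat.land M k) h)

def tb (M i : ℕ) : Bool := Nat.beq (Nat.land (Nat.shiftRight M i) 1) 1

/-- force evaluation of a natural number before continuing -/
noncomputable def force {α : Type} (n : ℕ) (k : ℕ → α) : α :=
  Nat.rec (motive := fun _ => α) (k 0) (fun m _ => k (Nat.succ m)) n

def step (a i h k M : ℕ) : ℕ := cond (tb a i) (sw h k M) M

def tr (M a : ℕ) : ℕ :=
  step a 4 16 0xffff (step a 3 8 0x00ff00ff (step a 2 4 0x0f0f0f0f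
    (step a 1 2 0x33333333 (step a 0 1 0x55555555 M))))

noncomputable def anyL (f : ℕ → Bool) (l : List ℕ) : Bool :=
  List.rec (motive := fun _ => Bool) false (fun a _ ih => cond (f a) true ih) l

noncomputable def removable (M c2 s : ℕ) : Bool :=
  force (tr M s) fun t => Nat.beq (Nat.land t c2) t

def pat (b1 b2 b3 b4 b5 : ℕ) : List ℕ :=
  [b1, b2, b3, b4, b5, b1 ^^^ b2, b2 ^^^ b3, b3 ^^^ b4, b4 ^^^ b5, b5 ^^^ b1,
    b1 ^^^ b2 ^^^ b3 ^^^ b4 ^^^ b5]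

def mk : List ℕ → ℕ
  | [] => 1
  | a :: l => Nat.lor (mk l) (Nat.shiftLeft 1 a)

noncomputable def anyNot (l : List ℕ) : Bool :=
  cond (anyL (Nat.beq 0) l) false true

noncomputable def patSearch (M : ℕ) (L : List ℕ) : Bool :=
  anyL (fun b1 => anyL (fun b2 => cond (Nat.beq b1 b2) false
    (anyL (fun b3 => cond (tb M (Nat.xor b2 b3))
      (anyL (fun b4 => cond (tb M (Nat.xor b3 b4))
        (anyL (fun b5 => cond (tb M (Nat.xor b4 b5)) (cond (tb M (Nat.xor b5 b1))
          (cond (Nat.beq M (mk (pat b1 b2 b3 b4 b5)))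
            (anyNot (pat b1 b2 b3 b4 b5)) false) false) false) L) false) L) false) L)) [1, 2, 3]) [1, 2, 3]

noncomputable def leaf (M c1 c2 : ℕ) (L : List ℕ) : Bool :=
  cond (Nat.beq (Nat.land c1 0xffffffff) 0xffffffff)
    (cond (anyL (removable M c2) L) true (patSearch M L)) true

noncomputable def go (cap : Bool) (pts : List ℕ) : ℕ → List ℕ → ℕ → ℕ → ℕ → Bool :=
  List.rec (motive := fun _ => ℕ → List ℕ → ℕ → ℕ → ℕ → Bool)
    (fun left acc M c1 c2 => Nat.rec (leaf M c1 c2 acc) (fun _ _ => true) left)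
    (fun a _ ih left acc M c1 c2 =>
      Nat.rec (leaf M c1 c2 acc) (fun n _ =>
        cond (ih (Nat.succ n) acc M c1 c2)
        (cond (cond cap (tb c1 a) false) true
          (force (tr M a) fun t =>
           force (Nat.lor c1 t) fun c1' =>
           force (Nat.lor c2 (Nat.land c1 t)) fun c2' =>
           force (Nat.lor M (Nat.shiftLeft 1 a)) fun M' =>
            ih n (a :: acc) M' c1' c2')) false) left) pts

def ini : List ℕ → ℕ × ℕ × ℕ
  | [] => (1, 1, 1)
  | a :: as => let p := ini as
      let t := tr p.1 a
      (p.1 ||| (1 <<< a), p.2.1 ||| t, p.2.2 ||| (p.2.1 &&& t))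

noncomputable def run (cap : Bool) (pts : List ℕ) (left : ℕ) (acc : List ℕ) : Bool :=
  go cap pts left acc (ini acc).1 (ini acc).2.1 (ini acc).2.2

def pts1 : List ℕ := [5,6,7,9,10,11,12,13,14,15,17,18,19,20,21,22,23,24,25,26,27,28,29,30,31]
def pts2 : List ℕ := [3,5,6,7,9,10,11,12,13,14,15,17,18,19,20,21,22,23,24,25,26,27,28,29,30,31]
theorem tb_eq (M i : ℕ) : tb M i = M.testBit i := by
  have h : tb M i = Nat.beq ((M >>> i) &&& 1) 1 := rfl
  rw [h, Nat.testBit, Nat.and_comm 1, Nat.and_one_is_mod]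
  rcases Nat.mod_two_eq_zero_or_one (M >>> i) with h | h <;> rw [h] <;> rfl

theorem force_eq {α : Type} (n : ℕ) (k : ℕ → α) : force n k = k n := by
  cases n <;> rfl

theorem sw_eq (h k M : ℕ) : sw h k M = ((M >>> h) &&& k) ||| ((M &&& k) <<< h) := rfl

theorem cond_iff (b c : Bool) : cond b c false = true ↔ b = true ∧ c = true := by
  cases b <;> simp

theorem cond_iff' (b c : Bool) : cond b true c = true ↔ b = true ∨ c = true := by
  cases b <;> simp

def swOK (h k : ℕ) : Prop := ∀ x < 32,
    (k.testBit x = true ∧ x ^^^ h = h + x ∧ (x ≥ h → k.testBit (x - h) = false)) ∨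
    (k.testBit x = false ∧ x ≥ h ∧ k.testBit (x - h) = true ∧ x ^^^ h = x - h)

instance (h k : ℕ) : Decidable (swOK h k) := by unfold swOK; infer_instance

theorem sw_spec (h k : ℕ) (H : swOK h k) (M x : ℕ) (hx : x < 32) :
    (sw h k M).testBit x = M.testBit (x ^^^ h) := by
  rw [sw_eq]
  simp only [Nat.testBit_or, Nat.testBit_and, Nat.testBit_shiftLeft, Nat.testBit_shiftRight]
  rcases H x hx with ⟨h1, h2, h3⟩ | ⟨h1, h2, h3, h4⟩
  · rw [h1, h2]
    by_cases hxh : x ≥ h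
    · rw [h3 hxh]; simp
    · simp [hxh]
  · rw [h1, h3, h4]; simp [h2]

theorem sw0 (M x : ℕ) (hx : x < 32) : (sw 1 0x55555555 M).testBit x = M.testBit (x ^^^ 1) :=
  sw_spec _ _ (by decide +kernel) M x hx
theorem sw1 (M x : ℕ) (hx : x < 32) : (sw 2 0x33333333 M).testBit x = M.testBit (x ^^^ 2) :=
  sw_spec _ _ (by decide +kernel) M x hx
theorem sw2 (M x : ℕ) (hx : x < 32) : (sw 4 0x0f0f0f0f M).testBit x = M.testBit (x ^^^ 4) :=
  sw_spec _ _ (by decide +kernel) M x hx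
theorem sw3 (M x : ℕ) (hx : x < 32) : (sw 8 0x00ff00ff M).testBit x = M.testBit (x ^^^ 8) :=
  sw_spec _ _ (by decide +kernel) M x hx
theorem sw4 (M x : ℕ) (hx : x < 32) : (sw 16 0xffff M).testBit x = M.testBit (x ^^^ 16) :=
  sw_spec _ _ (by decide +kernel) M x hx

theorem tB1 (x : ℕ) : Nat.testBit 1 x = decide (x = 0) := by
  cases x with
  | zero => rfl
  | succ n => simp [Nat.testBit_succ]

theorem xor_lt (a b : ℕ) (ha : a < 32) (hb : b < 32) : a ^^^ b < 32 :=
  Nat.xor_lt_two_pow (n := 5) ha hb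

theorem step_spec (a i h k : ℕ) (hs : ∀ M x, x < 32 → (sw h k M).testBit x = M.testBit (x ^^^ h))
    (M x : ℕ) (hx : x < 32) :
    (step a i h k M).testBit x = M.testBit (x ^^^ cond (tb a i) h 0) := by
  unfold step
  cases tb a i
  · simp
  · exact hs M x hx

theorem cond_lt (b : Bool) (h : ℕ) (hh : h < 32) : cond b h 0 < 32 := by
  cases b <;> simp [hh]

theorem bits_sum : ∀ a < 32, ((((cond (tb a 4) 16 0) ^^^ cond (tb a 3) 8 0) ^^^ cond (tb a 2) 4 0)
    ^^^ cond (tb a 1) 2 0) ^^^ cond (tb a 0) 1 0 = a := by decide +kernel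

theorem tr_spec (M a x : ℕ) (ha : a < 32) (hx : x < 32) :
    (tr M a).testBit x = M.testBit (x ^^^ a) := by
  unfold tr
  have l4 := cond_lt (tb a 4) 16 (by norm_num)
  have l3 := cond_lt (tb a 3) 8 (by norm_num)
  have l2 := cond_lt (tb a 2) 4 (by norm_num)
  have l1 := cond_lt (tb a 1) 2 (by norm_num)
  have k4 := xor_lt _ _ hx l4
  have k3 := xor_lt _ _ k4 l3
  have k2 := xor_lt _ _ k3 l2
  have k1 := xor_lt _ _ k2 l1
  rw [step_spec _ _ _ _ sw4 _ _ hx, step_spec _ _ _ _ sw3 _ _ k4, step_spec _ _ _ _ sw2 _ _ k3,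
    step_spec _ _ _ _ sw1 _ _ k2, step_spec _ _ _ _ sw0 _ _ k1]
  congr 1
  conv_rhs => rw [← bits_sum a ha]
  simp only [Nat.xor_assoc]

def SumOf (L : List ℕ) (x : ℕ) : Prop := ∃ u ∈ 0 :: L, ∃ v ∈ 0 :: L, u ^^^ v = x

def SumAvoid (L : List ℕ) (s x : ℕ) : Prop :=
  ∃ u ∈ 0 :: L, ∃ v ∈ 0 :: L, u ≠ s ∧ v ≠ s ∧ u ^^^ v = x

structure SInv (L : List ℕ) (M c1 c2 : ℕ) : Prop where
  lt : ∀ a ∈ L, a < 32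
  hM : ∀ x < 32, M.testBit x = true ↔ x ∈ 0 :: L
  h1 : ∀ x < 32, c1.testBit x = true ↔ SumOf L x
  h2 : ∀ x < 32, c2.testBit x = true → ∀ s, s ≠ 0 → SumAvoid L s x

theorem testBit_or_one (M a x : ℕ) : (M ||| (1 <<< a)).testBit x = true ↔ M.testBit x = true ∨ x = a := by
  rw [Nat.testBit_or, Nat.testBit_shiftLeft, tB1]
  simp only [Bool.or_eq_true, Bool.and_eq_true, decide_eq_true_eq]
  constructor
  · rintro (h | h)
    · exact Or.inl h
    · right; omega
  · rintro (h | h)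
    · exact Or.inl h
    · right; omega

theorem xor_swap (u a x : ℕ) : u ^^^ a = x ↔ u = x ^^^ a := by
  constructor
  · rintro rfl; rw [Nat.xor_assoc, Nat.xor_self, Nat.xor_zero]
  · rintro rfl; rw [Nat.xor_assoc, Nat.xor_self, Nat.xor_zero]

theorem SInv.add {L : List ℕ} {M c1 c2 a : ℕ} (h : SInv L M c1 c2) (ha : a < 32) (h0 : a ≠ 0)
    (hL : a ∉ L) :
    SInv (a :: L) (M ||| (1 <<< a)) (c1 ||| tr M a) (c2 ||| (c1 &&& tr M a)) := by
  have hT : ∀ x < 32, (tr M a).testBit x = true ↔ x ^^^ a ∈ 0 :: L := by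
    intro x hx
    rw [tr_spec M a x ha hx, h.hM _ (xor_lt _ _ hx ha)]
  have hsub : ∀ u, u ∈ 0 :: L → u ∈ 0 :: a :: L := by
    intro u hu
    simp only [List.mem_cons] at hu ⊢
    tauto
  have haM : a ∉ 0 :: L := by simp [h0, hL]
  have ham : a ∈ 0 :: a :: L := by simp
  have hcase : ∀ u, u ∈ 0 :: a :: L → u = a ∨ u ∈ 0 :: L := by
    intro u hu
    simp only [List.mem_cons] at hu ⊢
    tauto
  refine ⟨?_, ?_, ?_, ?_⟩
  · intro b hb
    rcases List.mem_cons.1 hb with rfl | hb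
    · exact ha
    · exact h.lt b hb
  · intro x hx
    rw [testBit_or_one, h.hM x hx]
    simp only [List.mem_cons]
    tauto
  · intro x hx
    rw [Nat.testBit_or, Bool.or_eq_true, h.h1 x hx, hT x hx]
    constructor
    · rintro (⟨u, hu, v, hv, e⟩ | hm)
      · exact ⟨u, hsub u hu, v, hsub v hv, e⟩
      · exact ⟨x ^^^ a, hsub _ hm, a, ham, (xor_swap _ _ _).2 rfl⟩
    · rintro ⟨u, hu, v, hv, e⟩
      rcases hcase u hu with rfl | hu
      · rcases hcase v hv with rfl | hv
        · left
          exact ⟨0, by simp, 0, by simp, by rw [← e]; simp⟩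
        · right
          rw [Nat.xor_comm] at e
          rw [← (xor_swap _ _ _).1 e]; exact hv
      · rcases hcase v hv with hva | hv
        · right
          rw [hva] at e
          rw [← (xor_swap _ _ _).1 e]; assumption
        · left
          exact ⟨u, hu, v, hv, e⟩
  · intro x hx hb s hs
    rw [Nat.testBit_or, Nat.testBit_and, Bool.or_eq_true, Bool.and_eq_true, h.h1 x hx, hT x hx] at hb
    rcases hb with hb | ⟨⟨u, hu, v, hv, e⟩, hm⟩
    · obtain ⟨u, hu, v, hv, e⟩ := h.h2 x hx hb s hs
      exact ⟨u, hsub u hu, v, hsub v hv, e⟩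
    · by_cases hus : u ≠ s ∧ v ≠ s
      · exact ⟨u, hsub u hu, v, hsub v hv, hus.1, hus.2, e⟩
      · refine ⟨x ^^^ a, hsub _ hm, a, ham, ?_, ?_, (xor_swap _ _ _).2 rfl⟩
        · intro hc
          have key : ∀ p q, p ^^^ q = x → p = x ^^^ a → q = a := by
            intro p q h1 h2
            rw [← (xor_swap _ _ _)] at h2
            exact Nat.xor_right_injective (h1.trans h2.symm)
          rcases not_and_or.1 hus with h' | h'
          · have : u = x ^^^ a := by rw [hc]; exact not_not.1 h'
            exact haM (key _ _ e this ▸ hv)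
          · have : v = x ^^^ a := by rw [hc]; exact not_not.1 h'
            exact haM (key v u (by rw [Nat.xor_comm]; exact e) this ▸ hu)
        · rintro rfl
          rcases not_and_or.1 hus with h' | h'
          · exact haM (not_not.1 h' ▸ hu)
          · exact haM (not_not.1 h' ▸ hv)

theorem inv_nil : SInv [] 1 1 1 := by
  refine ⟨by simp, ?_, ?_, ?_⟩
  · intro x hx; simp [tB1, eq_comm]
  · intro x hx; simp [SumOf, tB1, eq_comm]
  · intro x hx hb s hs
    simp [tB1] at hb
    exact ⟨0, by simp, 0, by simp, hs.symm, hs.symm, by simp [← hb]⟩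

theorem inv_ini (L : List ℕ) (hlt : ∀ a ∈ L, a < 32 ∧ a ≠ 0) (hn : L.Nodup) :
    SInv L (ini L).1 (ini L).2.1 (ini L).2.2 := by
  induction L with
  | nil => exact inv_nil
  | cons a l ih =>
    have h1 := hlt a (by simp)
    rw [List.nodup_cons] at hn
    exact (ih (fun b hb => hlt b (by simp [hb])) hn.2).add h1.1 h1.2 hn.1

def Pat (L : List ℕ) : Prop :=
  ∃ b1 b2 b3 b4 b5 : ℕ, (b1 < 32 ∧ b2 < 32 ∧ b3 < 32 ∧ b4 < 32 ∧ b5 < 32) ∧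
    0 ∉ pat b1 b2 b3 b4 b5 ∧ ∀ x < 32, x ∈ 0 :: L ↔ x ∈ 0 :: pat b1 b2 b3 b4 b5

def Good (L : List ℕ) : Prop :=
  (∀ x < 32, SumOf L x) → (∃ s ∈ L, ∀ x < 32, SumAvoid L s x) ∨ Pat L

theorem anyL_true {f : ℕ → Bool} {l : List ℕ} (h : anyL f l = true) : ∃ a ∈ l, f a = true := by
  induction l with
  | nil => exact absurd h (by simp [anyL])
  | cons a l ih =>
    have h' : cond (f a) true (anyL f l) = true := h
    rcases (cond_iff' _ _).1 h' with h' | h'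
    · exact ⟨a, by simp, h'⟩
    · obtain ⟨b, hb, hf⟩ := ih h'
      exact ⟨b, by simp [hb], hf⟩

theorem anyL_of {f : ℕ → Bool} {l : List ℕ} {a : ℕ} (ha : a ∈ l) (h : f a = true) :
    anyL f l = true := by
  induction l with
  | nil => exact absurd ha (by simp)
  | cons b l ih =>
    change cond (f b) true (anyL f l) = true
    rw [cond_iff']
    rcases List.mem_cons.1 ha with rfl | ha
    · exact Or.inl h
    · exact Or.inr (ih ha)

theorem anyNot_true {l : List ℕ} (h : anyNot l = true) : 0 ∉ l := by
  intro h0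
  unfold anyNot at h
  rw [anyL_of h0 rfl] at h
  exact absurd h (by simp)

theorem mk_spec (L : List ℕ) (x : ℕ) : (mk L).testBit x = true ↔ x ∈ 0 :: L := by
  induction L with
  | nil => simp [mk, tB1, eq_comm]
  | cons a l ih =>
    have : mk (a :: l) = mk l ||| (1 <<< a) := rfl
    rw [this, testBit_or_one, ih]
    simp only [List.mem_cons]
    tauto

theorem leaf_good {L : List ℕ} {M c1 c2 : ℕ} (h : SInv L M c1 c2) (h0 : 0 ∉ L)
    (hl : leaf M c1 c2 L = true) : Good L := by
  intro hsat
  have hc : Nat.beq (Nat.land c1 0xffffffff) 0xffffffff = true := by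
    rw [Nat.beq_eq]
    change c1 &&& 0xffffffff = 0xffffffff
    apply Nat.eq_of_testBit_eq
    intro i
    rw [Nat.testBit_and]
    by_cases hi : i < 32
    · rw [(h.h1 i hi).2 (hsat i hi)]; simp
    · have : Nat.testBit 4294967295 i = false := by
        apply Nat.testBit_lt_two_pow
        calc 4294967295 < 2 ^ 32 := by norm_num
          _ ≤ 2 ^ i := Nat.pow_le_pow_right (by norm_num) (by omega)
      rw [this]; simp
  unfold leaf at hl
  rw [hc] at hl
  rcases (cond_iff' _ _).1 hl with hl | hl
  · left
    obtain ⟨s, hs, hr⟩ := anyL_true hl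
    refine ⟨s, hs, ?_⟩
    intro x hx
    have hs0 : s ≠ 0 := fun e => h0 (e ▸ hs)
    have hs32 := h.lt s hs
    unfold removable at hr
    rw [force_eq, Nat.beq_eq] at hr
    change tr M s &&& c2 = tr M s at hr
    obtain ⟨u, hu, v, hv, e⟩ := hsat x hx
    have fin : x ^^^ s ∈ 0 :: L → SumAvoid L s x := by
      intro hm
      apply h.h2 x hx _ s hs0
      have h3 : (tr M s).testBit x = true := by
        rw [tr_spec M s x hs32 hx, h.hM _ (xor_lt _ _ hx hs32)]; exact hm
      rw [← hr, Nat.testBit_and, Bool.and_eq_true] at h3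
      exact h3.2
    by_cases hus : u = s
    · apply fin
      rw [hus, Nat.xor_comm] at e
      rw [← (xor_swap _ _ _).1 e]; exact hv
    · by_cases hvs : v = s
      · apply fin
        rw [hvs] at e
        rw [← (xor_swap _ _ _).1 e]; exact hu
      · exact ⟨u, hu, v, hv, hus, hvs, e⟩
  · right
    unfold patSearch at hl
    obtain ⟨b1, hb1, hl⟩ := anyL_true hl
    obtain ⟨b2, hb2, hl⟩ := anyL_true hl
    have hl : _ := (by
      cases hb : Nat.beq b1 b2
      · rw [hb] at hl; exact hl
      · rw [hb] at hl; exact absurd hl (by simp) : _ )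
    obtain ⟨b3, hb3, hl⟩ := anyL_true hl
    obtain ⟨b4, hb4, hl⟩ := anyL_true ((cond_iff _ _).1 hl).2
    obtain ⟨b5, hb5, hl⟩ := anyL_true ((cond_iff _ _).1 hl).2
    have hl := ((cond_iff _ _).1 ((cond_iff _ _).1 hl).2).2
    obtain ⟨hl, hz⟩ := (cond_iff _ _).1 hl
    rw [Nat.beq_eq] at hl
    have hlt : ∀ b ∈ [1, 2, 3], b < 32 := by decide
    refine ⟨b1, b2, b3, b4, b5, ⟨hlt _ hb1, hlt _ hb2, h.lt _ hb3, h.lt _ hb4, h.lt _ hb5⟩,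
      anyNot_true hz, ?_⟩
    intro x hx
    rw [← h.hM x hx, hl, mk_spec]

def CapL (L : List ℕ) : Prop := ∀ u ∈ L, ∀ v ∈ L, u ≠ v → u ^^^ v ∉ L

theorem go_good (cap : Bool) (pts : List ℕ) : ∀ (left : ℕ) (L : List ℕ) (M c1 c2 : ℕ),
    SInv L M c1 c2 → go cap pts left L M c1 c2 = true → ∀ l : List ℕ, l.Sublist pts →
    l.length = left → (∀ a ∈ l ++ L, a < 32 ∧ a ≠ 0) → (l ++ L).Nodup →
    (cap = true → CapL (l ++ L)) → Good (l.reverse ++ L) := by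
  induction pts with
  | nil =>
    intro left L M c1 c2 hI hg l hl hlen hlt hn hcap
    obtain rfl := List.sublist_nil.1 hl
    obtain rfl : 0 = left := by simpa using hlen
    exact leaf_good hI (fun h => (hlt 0 (by simpa using h)).2 rfl) hg
  | cons a as ih =>
    intro left L M c1 c2 hI hg l hl hlen hlt hn hcap
    cases left with
    | zero =>
      obtain rfl := List.length_eq_zero_iff.1 hlen
      exact leaf_good hI (fun h => (hlt 0 (by simpa using h)).2 rfl) hg
    | succ n =>
      have hg' : cond (go cap as (n + 1) L M c1 c2)
        (cond (cond cap (tb c1 a) false) true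
          (force (tr M a) fun t =>
           force (Nat.lor c1 t) fun c1' =>
           force (Nat.lor c2 (Nat.land c1 t)) fun c2' =>
           force (Nat.lor M (Nat.shiftLeft 1 a)) fun M' =>
            go cap as n (a :: L) M' c1' c2')) false = true := hg
      simp only [force_eq] at hg'
      obtain ⟨g1, g2⟩ := (cond_iff _ _).1 hg'
      cases hl with
      | cons _ hl => exact ih (n + 1) L M c1 c2 hI g1 l hl hlen hlt hn hcap
      | cons_cons _ hl =>
        rename_i l
        have ha := hlt a (by simp)
        have hn' : a ∉ l ++ L ∧ (l ++ L).Nodup := by simpa using hn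
        have haL : a ∉ L := fun h => hn'.1 (by simp [h])
        rcases (cond_iff' _ _).1 g2 with g2 | g2
        · exfalso
          rw [cond_iff, tb_eq, hI.h1 a ha.1] at g2
          obtain ⟨hc, u, hu, v, hv, e⟩ := g2
          have hC := hcap hc
          rcases List.mem_cons.1 hu with rfl | hu
          · rw [Nat.zero_xor] at e
            subst e
            rcases List.mem_cons.1 hv with rfl | hv
            · exact ha.2 rfl
            · exact haL hv
          · rcases List.mem_cons.1 hv with rfl | hv
            · rw [Nat.xor_zero] at e
              subst e
              exact haL hu
            · refine hC u (by simp [hu]) v (by simp [hv]) ?_ (by rw [e]; simp)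
              rintro rfl
              rw [Nat.xor_self] at e
              exact ha.2 e.symm
        · have hp : (l ++ a :: L).Perm (a :: l ++ L) := List.perm_middle
          have := ih n (a :: L) _ _ _ (hI.add ha.1 ha.2 haL) g2 l hl (by simpa using hlen)
            (fun b hb => hlt b (hp.mem_iff.1 hb)) (hp.nodup_iff.2 hn)
            (fun hc u hu v hv huv hm => hcap hc u (hp.mem_iff.1 hu) v (hp.mem_iff.1 hv) huv
              (hp.mem_iff.1 hm))
          simpa using this

abbrev V5 := Fin 5 → ZMod 2

theorem sat_span {S : Set V5} (h : Saturating S) : Submodule.span (ZMod 2) S = ⊤ := by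
  rw [eq_top_iff]
  intro x _
  by_cases h0 : x = 0
  · rw [h0]; exact Submodule.zero_mem _
  by_cases hx : x ∈ S
  · exact Submodule.subset_span hx
  obtain ⟨a, ha, b, hb, -, e⟩ := h.2 x h0 hx
  rw [e]
  exact Submodule.add_mem _ (Submodule.subset_span ha) (Submodule.subset_span hb)

theorem ext_li {S : Set V5} (h : Submodule.span (ZMod 2) S = ⊤) {k : ℕ} (hk : k < 5)
    (v : Fin k → V5) (hv : LinearIndependent (ZMod 2) v) :
    ∃ s ∈ S, LinearIndependent (ZMod 2) (Fin.snoc v s : Fin (k + 1) → V5) := by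
  by_contra hc
  push Not at hc
  have hsub : S ⊆ Submodule.span (ZMod 2) (Set.range v) := by
    intro s hs
    by_contra hns
    exact hc s hs (linearIndependent_finSnoc.2 ⟨hv, hns⟩)
  have htop : Submodule.span (ZMod 2) (Set.range v) = ⊤ := by
    rw [eq_top_iff, ← h]
    exact Submodule.span_le.2 hsub
  have h1 := finrank_range_le_card (R := ZMod 2) v
  rw [Set.finrank, htop, finrank_top] at h1
  simp at h1
  omega

/-- extension to a basis inside `S` -/
theorem ext_basis {S : Set V5} (h : Submodule.span (ZMod 2) S = ⊤) : ∀ (m k : ℕ), k + m = 5 →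
    ∀ (v : Fin k → V5), LinearIndependent (ZMod 2) v → (∀ i, v i ∈ S) →
    ∃ w : Fin 5 → V5, LinearIndependent (ZMod 2) w ∧ (∀ i, w i ∈ S) ∧
      ∀ (i : Fin k) (j : Fin 5), i.val = j.val → w j = v i := by
  intro m
  induction m with
  | zero =>
    intro k hk v hv hS
    obtain rfl : k = 5 := by omega
    refine ⟨v, hv, hS, ?_⟩
    intro i j hij
    rw [Fin.ext hij]
  | succ m ih =>
    intro k hk v hv hS
    obtain ⟨s, hs, hl⟩ := ext_li h (by omega) v hv
    obtain ⟨w, h1, h2, h3⟩ := ih (k + 1) (by omega) _ hl (by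
      intro i
      refine Fin.lastCases ?_ (fun i => ?_) i
      · simpa using hs
      · simpa using hS i)
    refine ⟨w, h1, h2, ?_⟩
    intro i j hij
    rw [h3 i.castSucc j (by simpa using hij)]
    simp

def dec5 (w : Fin 5 → V5) (i : ℕ) : V5 := ∑ j : Fin 5, (if i.testBit j then (1 : ZMod 2) else 0) • w j

theorem dec5_xor (w : Fin 5 → V5) (a b : ℕ) : dec5 w (a ^^^ b) = dec5 w a + dec5 w b := by
  unfold dec5
  rw [← Finset.sum_add_distrib]
  apply Finset.sum_congr rfl
  intro j _
  rw [← add_smul, Nat.testBit_xor]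
  congr 1
  cases a.testBit j <;> cases b.testBit j <;> decide

theorem dec5_zero (w : Fin 5 → V5) : dec5 w 0 = 0 := by
  simp [dec5]

theorem dec5_inj (w : Fin 5 → V5) (hw : LinearIndependent (ZMod 2) w) (a : ℕ) (ha : a < 32)
    (h : dec5 w a = 0) : a = 0 := by
  have := Fintype.linearIndependent_iff.1 hw _ h
  apply Nat.eq_of_testBit_eq
  intro i
  rw [Nat.zero_testBit]
  by_cases hi : i < 5
  · have h2 := this ⟨i, hi⟩
    by_contra hb
    simp [hb] at h2
  · apply Nat.testBit_lt_two_pow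
    calc a < 2 ^ 5 := ha
      _ ≤ 2 ^ i := Nat.pow_le_pow_right (by norm_num) (by omega)

theorem dec5_inj' (w : Fin 5 → V5) (hw : LinearIndependent (ZMod 2) w) (a b : ℕ) (ha : a < 32)
    (hb : b < 32) (h : dec5 w a = dec5 w b) : a = b := by
  have h1 : dec5 w (a ^^^ b) = 0 := by
    rw [dec5_xor, h]; exact CharTwo.add_self_eq_zero _
  exact Nat.xor_eq_zero_iff.1 (dec5_inj w hw _ (xor_lt _ _ ha hb) h1)

theorem dec5_surj (w : Fin 5 → V5) (hw : LinearIndependent (ZMod 2) w) (x : V5) :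
    ∃ i < 32, dec5 w i = x := by
  have hinj : Function.Injective (fun i : Fin 32 => dec5 w i) := by
    intro a b h
    exact Fin.ext (dec5_inj' w hw a b a.2 b.2 h)
  have hb := (Fintype.bijective_iff_injective_and_card _).2 ⟨hinj, by simp⟩
  obtain ⟨i, hi⟩ := hb.2 x
  exact ⟨i, i.2, hi⟩

theorem dec5_two (w : Fin 5 → V5) :
    dec5 w 1 = w 0 ∧ dec5 w 2 = w 1 ∧ dec5 w 4 = w 2 ∧ dec5 w 8 = w 3 ∧ dec5 w 16 = w 4 ∧
    dec5 w 3 = w 0 + w 1 := by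
  simp +decide [dec5, Fin.sum_univ_five]

theorem core {S : Set V5} (hS : MinSat S) (hc : S.ncard = 11) (w : Fin 5 → V5)
    (hw : LinearIndependent (ZMod 2) w) (cap : Bool) (acc pts : List ℕ) (left : ℕ)
    (hrun : run cap pts left acc = true) (hperm : (0 :: (acc ++ pts)).Perm (List.range 32))
    (hacc : ∀ a ∈ acc, dec5 w a ∈ S) (hlen : acc.length + left = 11)
    (hcapS : cap = true → IsCap S) :
    ∃ b1 b2 b3 b4 b5 : ℕ, ∀ y : V5, y ∈ S ↔ ∃ x ∈ pat b1 b2 b3 b4 b5, dec5 w x = y := by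
  classical
  have hnd : (0 :: (acc ++ pts)).Nodup := hperm.nodup_iff.2 List.nodup_range
  have hmem : ∀ x, x ∈ 0 :: (acc ++ pts) ↔ x < 32 := fun x => by
    rw [hperm.mem_iff, List.mem_range]
  obtain ⟨hnd0, hnd1⟩ := List.nodup_cons.1 hnd
  set p : ℕ → Bool := fun x => decide (dec5 w x ∈ S) with hp
  have h0S : (0 : V5) ∉ S := fun h => hS.1.1 0 h rfl
  have hp0 : p 0 = false := by simp [hp, dec5_zero, h0S]
  set l := pts.filter p with hl
  have hsub : l.Sublist pts := List.filter_sublist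
  have hL : ∀ x, x ∈ l ++ acc ↔ x < 32 ∧ dec5 w x ∈ S := by
    intro x
    constructor
    · intro hx
      rcases List.mem_append.1 hx with hx | hx
      · have := List.mem_filter.1 hx
        exact ⟨(hmem x).1 (by simp [this.1]), by simpa [hp] using this.2⟩
      · exact ⟨(hmem x).1 (by simp [hx]), hacc x hx⟩
    · rintro ⟨hx, hxS⟩
      have := (hmem x).2 hx
      rcases List.mem_cons.1 this with rfl | this
      · rw [dec5_zero] at hxS; exact absurd hxS h0S
      · rcases List.mem_append.1 this with h | h
        · exact List.mem_append.2 (Or.inr h)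
        · exact List.mem_append.2 (Or.inl (List.mem_filter.2 ⟨h, by simpa [hp] using hxS⟩))
  have hne : ∀ x ∈ l ++ acc, x ≠ 0 := by
    rintro x hx rfl
    have := ((hL 0).1 hx).2
    rw [dec5_zero] at this
    exact h0S this
  have hnd2 : (l ++ acc).Nodup := by
    have : (acc ++ l).Nodup := hnd1.sublist (List.Sublist.append_left hsub acc)
    exact List.perm_append_comm.nodup_iff.1 this
  have hcard : (l ++ acc).length = 11 := by
    rw [← hc]
    have : S = ((l ++ acc).toFinset.image (dec5 w) : Finset V5) := by
      ext y
      simp only [Finset.coe_image, Set.mem_image, Finset.mem_coe, List.mem_toFinset]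
      constructor
      · intro hy
        obtain ⟨i, hi, rfl⟩ := dec5_surj w hw y
        exact ⟨i, (hL i).2 ⟨hi, hy⟩, rfl⟩
      · rintro ⟨x, hx, rfl⟩
        exact ((hL x).1 hx).2
    rw [this, Set.ncard_coe_finset, Finset.card_image_of_injOn, List.toFinset_card_of_nodup hnd2]
    intro a ha b hb hab
    simp only [Finset.mem_coe, List.mem_toFinset] at ha hb
    exact dec5_inj' w hw a b ((hL a).1 ha).1 ((hL b).1 hb).1 hab
  have hll : l.length = left := by
    rw [List.length_append] at hcard; omega
  have hinv : SInv acc (ini acc).1 (ini acc).2.1 (ini acc).2.2 := by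
    apply inv_ini
    · intro a ha
      have hm : a ∈ l ++ acc := by simp [ha]
      exact ⟨((hL a).1 hm).1, hne a hm⟩
    · exact (List.nodup_append.1 hnd1).1
  have hgood := go_good cap pts left acc _ _ _ hinv hrun l hsub hll
    (fun a ha => ⟨((hL a).1 ha).1, hne a ha⟩) hnd2 (by
      intro hcap u hu v hv huv hm
      have hC := (hcapS hcap).2
      have hu' := (hL u).1 hu
      have hv' := (hL v).1 hv
      have hm' := (hL _).1 hm
      have hinj := dec5_inj' w hw
      refine hC _ hu'.2 _ hv'.2 _ hm'.2 (fun e => huv (hinj _ _ hu'.1 hv'.1 e)) ?_ ?_ ?_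
      · intro e
        have e1 := hinj _ _ hu'.1 hm'.1 e
        apply hne v hv
        exact Nat.xor_right_injective (show u ^^^ v = u ^^^ 0 by rw [← e1]; simp)
      · intro e
        have e1 := hinj _ _ hv'.1 hm'.1 e
        apply hne u hu
        exact Nat.xor_left_injective (show u ^^^ v = 0 ^^^ v by rw [← e1]; simp)
      · rw [dec5_xor]
        exact CharTwo.add_self_eq_zero _)
  have hR : ∀ x, x ∈ l.reverse ++ acc ↔ x < 32 ∧ dec5 w x ∈ S := by
    intro x; rw [← hL]; simp
  have hR0 : ∀ x, x ∈ 0 :: (l.reverse ++ acc) ↔ x = 0 ∨ (x < 32 ∧ dec5 w x ∈ S) := by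
    intro x; rw [List.mem_cons, hR]
  have hsat : ∀ x < 32, SumOf (l.reverse ++ acc) x := by
    intro x hx
    unfold SumOf
    by_cases hx0 : x = 0
    · exact ⟨0, by simp, 0, by simp, by simp [hx0]⟩
    by_cases hxS : dec5 w x ∈ S
    · exact ⟨x, (hR0 x).2 (Or.inr ⟨hx, hxS⟩), 0, by simp, by simp⟩
    · obtain ⟨a, ha, b, hb, -, e⟩ := hS.1.2 _ (fun h => hx0 (dec5_inj w hw x hx h)) hxS
      obtain ⟨i, hi, rfl⟩ := dec5_surj w hw a
      obtain ⟨j, hj, rfl⟩ := dec5_surj w hw b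
      refine ⟨i, (hR0 i).2 (Or.inr ⟨hi, ha⟩), j, (hR0 j).2 (Or.inr ⟨hj, hb⟩), ?_⟩
      rw [← dec5_xor] at e
      exact (dec5_inj' w hw _ _ hx (xor_lt _ _ hi hj) e).symm
  rcases hgood hsat with ⟨s, hs, hav⟩ | hpat
  · exfalso
    have hs' := (hR s).1 hs
    apply hS.2 _ hs'.2
    refine ⟨fun y hy => hS.1.1 y hy.1, ?_⟩
    intro y hy0 hyS
    obtain ⟨x, hx, rfl⟩ := dec5_surj w hw y
    obtain ⟨u, hu, v, hv, hus, hvs, e⟩ := hav x hx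
    have key : ∀ t, t < 32 → dec5 w t ∈ S → t ≠ s → dec5 w t ∈ S \ {dec5 w s} := by
      intro t ht htS hts
      exact ⟨htS, fun h => hts (dec5_inj' w hw _ _ ht hs'.1 h)⟩
    rcases (hR0 u).1 hu with rfl | ⟨hu1, hu2⟩
    · rw [Nat.zero_xor] at e
      subst e
      rcases (hR0 v).1 hv with rfl | ⟨hv1, hv2⟩
      · exact absurd (dec5_zero w) hy0
      · exact absurd (key v hv1 hv2 hvs) hyS
    · rcases (hR0 v).1 hv with rfl | ⟨hv1, hv2⟩
      · rw [Nat.xor_zero] at e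
        subst e
        exact absurd (key u hu1 hu2 hus) hyS
      · refine ⟨_, key u hu1 hu2 hus, _, key v hv1 hv2 hvs, ?_, ?_⟩
        · intro he
          apply hy0
          rw [← e, dec5_xor, he]
          exact CharTwo.add_self_eq_zero _
        · rw [← e, dec5_xor]
  · obtain ⟨b1, b2, b3, b4, b5, ⟨l1, l2, l3, l4, l5⟩, hz, hb⟩ := hpat
    refine ⟨b1, b2, b3, b4, b5, ?_⟩
    intro y
    constructor
    · intro hy
      obtain ⟨x, hx, rfl⟩ := dec5_surj w hw y
      have := (hb x hx).1 ((hR0 x).2 (Or.inr ⟨hx, hy⟩))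
      rcases List.mem_cons.1 this with rfl | h
      · rw [dec5_zero] at hy; exact absurd hy h0S
      · exact ⟨x, h, rfl⟩
    · rintro ⟨x, hx, rfl⟩
      have hx32 : x < 32 := by
        simp only [pat, List.mem_cons, List.not_mem_nil, or_false] at hx
        rcases hx with rfl | rfl | rfl | rfl | rfl | rfl | rfl | rfl | rfl | rfl | rfl <;>
          first
          | assumption
          | (apply xor_lt <;> assumption)
          | exact xor_lt _ _ (xor_lt _ _ (xor_lt _ _ (xor_lt _ _ l1 l2) l3) l4) l5
      have := (hb x hx32).2 (by simp [hx])
      rcases (hR0 x).1 this with rfl | h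
      · exact absurd hx hz
      · exact h.2

/-- The standard example: a 5-cycle of lines and the all-ones point. -/
def S0 : Finset V5 :=
  {![1,0,0,0,0], ![0,1,0,0,0], ![0,0,1,0,0], ![0,0,0,1,0], ![0,0,0,0,1],
   ![1,1,0,0,0], ![0,1,1,0,0], ![0,0,1,1,0], ![0,0,0,1,1], ![1,0,0,0,1], ![1,1,1,1,1]}

theorem S0_sat : Saturating (S0 : Set V5) := by
  unfold Saturating
  simp only [Finset.mem_coe]
  decide +kernel

set_option synthInstance.maxHeartbeats 0 in
set_option synthInstance.maxSize 2000 in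
theorem S0_min : ∀ s ∈ S0, ∃ x : V5, x ≠ 0 ∧ x ∉ S0.erase s ∧
    ∀ a ∈ S0.erase s, ∀ b ∈ S0.erase s, a ≠ b → x ≠ a + b := by
  decide +kernel

theorem S0_minSat : MinSat (S0 : Set V5) := by
  refine ⟨S0_sat, ?_⟩
  intro s hs hsat
  obtain ⟨x, hx0, hx1, hx2⟩ := S0_min s hs
  obtain ⟨a, ha, b, hb, hab, e⟩ := hsat.2 x hx0 (fun h => hx1 (Finset.mem_erase.2 ⟨h.2, h.1⟩))
  exact hx2 a (Finset.mem_erase.2 ⟨ha.2, ha.1⟩) b (Finset.mem_erase.2 ⟨hb.2, hb.1⟩) hab e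

theorem equiv_of_pat {S : Set V5} (hS : Saturating S) (w : Fin 5 → V5) (b1 b2 b3 b4 b5 : ℕ)
    (h : ∀ y : V5, y ∈ S ↔ ∃ x ∈ pat b1 b2 b3 b4 b5, dec5 w x = y) :
    ProjEquiv (S0 : Set V5) S := by
  set A : Matrix (Fin 5) (Fin 5) (ZMod 2) := Matrix.of fun i k =>
    (![dec5 w b1, dec5 w b2, dec5 w b3, dec5 w b4, dec5 w b5] : Fin 5 → V5) k i with hA
  have hmul : ∀ x : V5, A.mulVec x = x 0 • dec5 w b1 + x 1 • dec5 w b2 + x 2 • dec5 w b3 +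
      x 3 • dec5 w b4 + x 4 • dec5 w b5 := by
    intro x
    ext i
    simp [hA, Matrix.mulVec, dotProduct, Fin.sum_univ_five, mul_comm]
  have himg : (fun x => A.mulVec x) '' (S0 : Set V5) = S := by
    ext y
    rw [h y]
    simp only [Set.mem_image, Finset.mem_coe, S0, pat, Finset.mem_insert, Finset.mem_singleton,
      List.mem_cons, List.not_mem_nil, or_false, or_and_right, exists_or, exists_eq_left, hmul,
      dec5_xor]
    simp [add_comm]
  have hspan : Submodule.span (ZMod 2) S ≤ LinearMap.range A.mulVecLin := by
    rw [Submodule.span_le, ← himg]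
    rintro _ ⟨x, -, rfl⟩
    exact ⟨x, rfl⟩
  have hsurj : Function.Surjective A.mulVec := by
    intro y
    have : y ∈ LinearMap.range A.mulVecLin := hspan (by rw [sat_span hS]; trivial)
    obtain ⟨x, hx⟩ := this
    exact ⟨x, hx⟩
  have hu : IsUnit A := Matrix.mulVec_surjective_iff_isUnit.1 hsurj
  exact ⟨hu.unit, himg⟩

theorem run_cons (a : ℕ) (as : List ℕ) (n : ℕ) (acc : List ℕ)
    (h1 : run false as n (a :: acc) = true) (h2 : run false as (n + 1) acc = true) :
    run false (a :: as) (n + 1) acc = true := by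
  have e : run false (a :: as) (n + 1) acc = cond (run false as (n + 1) acc)
        (cond (cond false (tb (ini acc).2.1 a) false) true
          (force (tr (ini acc).1 a) fun t =>
           force (Nat.lor (ini acc).2.1 t) fun c1' =>
           force (Nat.lor (ini acc).2.2 (Nat.land (ini acc).2.1 t)) fun c2' =>
           force (Nat.lor (ini acc).1 (Nat.shiftLeft 1 a)) fun M' =>
            go false as n (a :: acc) M' c1' c2')) false := rfl
  rw [e, h2]
  simp only [force_eq]
  exact h1

set_option maxHeartbeats 0 in
theorem runA0 : run false [6, 7, 9, 10, 11, 12, 13, 14, 15, 17, 18, 19, 20, 21, 22, 23, 24, 25, 26, 27, 28, 29, 30, 31] 4 [5, 3, 1, 2, 4, 8, 16] = true := by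
  decide +kernel

set_option maxHeartbeats 0 in
theorem runA1 : run false [7, 9, 10, 11, 12, 13, 14, 15, 17, 18, 19, 20, 21, 22, 23, 24, 25, 26, 27, 28, 29, 30, 31] 4 [6, 3, 1, 2, 4, 8, 16] = true := by
  decide +kernel

set_option maxHeartbeats 0 in
theorem runA2 : run false [9, 10, 11, 12, 13, 14, 15, 17, 18, 19, 20, 21, 22, 23, 24, 25, 26, 27, 28, 29, 30, 31] 4 [7, 3, 1, 2, 4, 8, 16] = true := by
  decide +kernel

set_option maxHeartbeats 0 in
theorem runA3 : run false [10, 11, 12, 13, 14, 15, 17, 18, 19, 20, 21, 22, 23, 24, 25, 26, 27, 28, 29, 30, 31] 4 [9, 3, 1, 2, 4, 8, 16] = true := by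
  decide +kernel

set_option maxHeartbeats 0 in
theorem runA4 : run false [11, 12, 13, 14, 15, 17, 18, 19, 20, 21, 22, 23, 24, 25, 26, 27, 28, 29, 30, 31] 4 [10, 3, 1, 2, 4, 8, 16] = true := by
  decide +kernel

set_option maxHeartbeats 0 in
theorem runA5 : run false [12, 13, 14, 15, 17, 18, 19, 20, 21, 22, 23, 24, 25, 26, 27, 28, 29, 30, 31] 4 [11, 3, 1, 2, 4, 8, 16] = true := by
  decide +kernel

set_option maxHeartbeats 0 in
theorem runA6 : run false [13, 14, 15, 17, 18, 19, 20, 21, 22, 23, 24, 25, 26, 27, 28, 29, 30, 31] 4 [12, 3, 1, 2, 4, 8, 16] = true := by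
  decide +kernel

set_option maxHeartbeats 0 in
theorem runB : run false [13, 14, 15, 17, 18, 19, 20, 21, 22, 23, 24, 25, 26, 27, 28, 29, 30, 31] 5 [3, 1, 2, 4, 8, 16] = true := by
  decide +kernel

theorem run1 : run false pts1 5 [3, 1, 2, 4, 8, 16] = true :=
  run_cons _ _ _ _ runA0 <| run_cons _ _ _ _ runA1 <| run_cons _ _ _ _ runA2 <| run_cons _ _ _ _ runA3 <| run_cons _ _ _ _ runA4 <| run_cons _ _ _ _ runA5 <| run_cons _ _ _ _ runA6 <| runB

theorem run2 : run true pts2 6 [1, 2, 4, 8, 16] = true := by decide +kernel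

theorem equiv_S0 {S : Set V5} (hS : MinSat S) (hc : S.ncard = 11) : ProjEquiv (S0 : Set V5) S := by
  have hsp := sat_span hS.1
  by_cases hcap : IsCap S
  · obtain ⟨w, hw, hwS, -⟩ := ext_basis hsp 5 0 rfl ![] (linearIndependent_empty_type)
      (fun i => i.elim0)
    obtain ⟨d1, d2, d4, d8, d16, -⟩ := dec5_two w
    obtain ⟨b1, b2, b3, b4, b5, h⟩ := core hS hc w hw true [1, 2, 4, 8, 16] pts2 6 run2
      (by decide +kernel) (by simp [d1, d2, d4, d8, d16, hwS]) rfl (fun _ => hcap)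
    exact equiv_of_pat hS.1 w _ _ _ _ _ h
  · have hcap' : ¬ ∀ a ∈ S, ∀ b ∈ S, ∀ c ∈ S, a ≠ b → a ≠ c → b ≠ c → a + b + c ≠ 0 :=
      fun h => hcap ⟨hS.1.1, h⟩
    push Not at hcap'
    obtain ⟨a, ha, b, hb, c, hcS, hab, -, -, hsum⟩ := hcap'
    have hli : LinearIndependent (ZMod 2) ![a, b] := by
      rw [LinearIndependent.pair_iff]
      intro s t hst
      have h2 : ∀ z : ZMod 2, z = 0 ∨ z = 1 := by decide
      rcases h2 s with rfl | rfl <;> rcases h2 t with rfl | rfl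
      · simp
      · exact absurd (by simpa using hst) (hS.1.1 b hb)
      · exact absurd (by simpa using hst) (hS.1.1 a ha)
      · exact absurd (CharTwo.add_eq_zero.1 (by simpa using hst)) hab
    obtain ⟨w, hw, hwS, hv⟩ := ext_basis hsp 3 2 rfl ![a, b] hli (by
      intro i; fin_cases i <;> simp [ha, hb])
    have w0 : w 0 = a := hv 0 0 rfl
    have w1 : w 1 = b := hv 1 1 rfl
    have hab' : w 0 + w 1 ∈ S := by
      rw [w0, w1, CharTwo.add_eq_zero.1 hsum]; exact hcS
    obtain ⟨d1, d2, d4, d8, d16, d3⟩ := dec5_two w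
    obtain ⟨b1, b2, b3, b4, b5, h⟩ := core hS hc w hw false [3, 1, 2, 4, 8, 16] pts1 5 run1
      (by decide +kernel) (by simp [d1, d2, d3, d4, d8, d16, hwS, hab']) rfl
      (fun h => absurd h (by simp))
    exact equiv_of_pat hS.1 w _ _ _ _ _ h

/-- Up to projective equivalence there is exactly one minimal 1-saturating set of size 11
in PG(4,2), and it is not a cap. -/
theorem minSat_PG4_size11_unique_not_cap :
    (∃ S : Set (Fin 5 → ZMod 2), MinSat S ∧ S.ncard = 11) ∧
    (∀ S T : Set (Fin 5 → ZMod 2), MinSat S → MinSat T →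
      S.ncard = 11 → T.ncard = 11 → ProjEquiv S T) ∧
    (∀ S : Set (Fin 5 → ZMod 2), MinSat S → S.ncard = 11 → ¬ IsCap S) := by
  refine ⟨⟨S0, S0_minSat, ?_⟩, ?_, ?_⟩
  · rw [Set.ncard_coe_finset]; decide +kernel
  · intro S T hS hT cS cT
    obtain ⟨g, hg⟩ := equiv_S0 hS cS
    obtain ⟨k, hk⟩ := equiv_S0 hT cT
    refine ⟨k * g⁻¹, ?_⟩
    rw [← hg, ← hk, Set.image_image]
    apply Set.image_congr
    intro x _
    rw [Matrix.mulVec_mulVec, ← Units.val_mul, inv_mul_cancel_right]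
  · intro S hS cS hcap
    obtain ⟨g, hg⟩ := equiv_S0 hS cS
    have hinj : Function.Injective
        (fun x => Matrix.mulVec (g : Matrix (Fin 5) (Fin 5) (ZMod 2)) x) :=
      Matrix.mulVec_injective_iff_isUnit.2 g.isUnit
    have hm : ∀ x ∈ S0, Matrix.mulVec (g : Matrix (Fin 5) (Fin 5) (ZMod 2)) x ∈ S := by
      intro x hx
      rw [← hg]; exact ⟨x, hx, rfl⟩
    refine hcap.2 _ (hm ![1,0,0,0,0] (by decide +kernel)) _ (hm ![0,1,0,0,0] (by decide +kernel)) _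
      (hm ![1,1,0,0,0] (by decide +kernel)) (fun e => absurd (hinj e) (by decide))
      (fun e => absurd (hinj e) (by decide)) (fun e => absurd (hinj e) (by decide)) ?_
    rw [← Matrix.mulVec_add, ← Matrix.mulVec_add]
    have : (![1,0,0,0,0] + ![0,1,0,0,0] + ![1,1,0,0,0] : V5) = 0 := by decide
    rw [this, Matrix.mulVec_zero]
end

section
/- Up to projective equivalence there are exactly seven minimal 1-saturating sets of size 10 in PG(4,2): exactly one of them is a (complete) cap and exactly six are not caps. -/
namespace MS

abbrev V := Fin 5 → ZMod 2

theorem nbeq {a b : ℕ} : Nat.beq a b = true ↔ a = b :=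
  ⟨Nat.eq_of_beq_eq_true, by rintro rfl; exact Nat.beq_refl a⟩

def dec (n : ℕ) : V := fun i => if n.testBit i then 1 else 0

def enc (x : V) : ℕ :=
  (x 0).val + 2 * (x 1).val + 4 * (x 2).val + 8 * (x 3).val + 16 * (x 4).val

theorem enc_dec : ∀ n < 32, enc (dec n) = n := by decide +kernel

theorem dec_enc : ∀ x : V, dec (enc x) = x := by decide +kernel

theorem enc_lt (x : V) : enc x < 32 := by
  have h := fun i => ZMod.val_lt (x i)
  have h0 := h 0
  have h1 := h 1
  have h2 := h 2
  have h3 := h 3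
  have h4 := h 4
  unfold enc
  omega

theorem dec_xor (a b : ℕ) : dec (a ^^^ b) = dec a + dec b := by
  funext i
  simp only [dec, Nat.testBit_xor, Pi.add_apply]
  cases a.testBit i <;> cases b.testBit i <;> decide

theorem dec_zero : dec 0 = 0 := by
  funext i; simp [dec]

theorem dec_inj {a b : ℕ} (ha : a < 32) (hb : b < 32) (h : dec a = dec b) : a = b := by
  rw [← enc_dec a ha, ← enc_dec b hb, h]

theorem enc_inj {x y : V} (h : enc x = enc y) : x = y := by
  rw [← dec_enc x, ← dec_enc y, h]

theorem enc_zero : enc 0 = 0 := by decide +kernel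

theorem enc_add (x y : V) : enc (x + y) = enc x ^^^ enc y := by
  apply dec_inj (enc_lt _) (Nat.xor_lt_two_pow (n := 5) (enc_lt _) (enc_lt _))
  rw [dec_xor, dec_enc, dec_enc, dec_enc]

/-! Matrices coded by 25-bit numbers -/

def col (w i : ℕ) : ℕ := (w >>> (5 * i)) &&& 31

def sel (b : Bool) (n : ℕ) : ℕ := match b with
  | true => n
  | false => 0

def app (w n : ℕ) : ℕ :=
  sel (n.testBit 0) (col w 0) ^^^ (sel (n.testBit 1) (col w 1) ^^^ (sel (n.testBit 2) (col w 2) ^^^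
    (sel (n.testBit 3) (col w 3) ^^^ sel (n.testBit 4) (col w 4))))

def mat (w : ℕ) : Matrix (Fin 5) (Fin 5) (ZMod 2) := Matrix.of fun r c => dec (col w c) r

theorem dec_sel (b : Bool) (n : ℕ) (r : Fin 5) :
    dec (sel b n) r = dec n r * (if b then 1 else 0) := by
  cases b <;> simp [sel, dec_zero]

theorem dec_app (w n : ℕ) : dec (app w n) = (mat w).mulVec (dec n) := by
  funext r
  simp only [app, dec_xor, Pi.add_apply, dec_sel, Matrix.mulVec, dotProduct, Fin.sum_univ_five, mat,
    Matrix.of_apply]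
  simp only [dec]
  simp
  ring

def pts : List ℕ := [1,2,3,4,5,6,7,8,9,10,11,12,13,14,15,16,17,18,19,20,21,22,23,24,25,26,27,28,29,
  30,31]

theorem mem_pts : ∀ n < 32, n ≠ 0 → n ∈ pts := by decide +kernel

theorem pts_lt : ∀ n ∈ pts, n < 32 ∧ n ≠ 0 := by decide +kernel

def injB (w : ℕ) : Bool := pts.all fun n => !(Nat.beq (dec' w n) 0)
where dec' (w n : ℕ) : ℕ := app w n

theorem app_lt (w n : ℕ) : app w n < 2 ^ 5 := by
  have hc : ∀ b i, sel b (col w i) < 2 ^ 5 := by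
    intro b i
    cases b
    · simp [sel]
    · simp only [sel, col]
      exact Nat.and_lt_two_pow _ (by norm_num)
  unfold app
  exact Nat.xor_lt_two_pow (hc _ _) (Nat.xor_lt_two_pow (hc _ _) (Nat.xor_lt_two_pow (hc _ _)
    (Nat.xor_lt_two_pow (hc _ _) (hc _ _))))

theorem injB_isUnit {w : ℕ} (h : injB w = true) : IsUnit (mat w) := by
  rw [← Matrix.mulVec_injective_iff_isUnit]
  have key : ∀ x : V, (mat w).mulVec x = 0 → x = 0 := by
    intro x hx
    by_contra hne
    have h1 : enc x ≠ 0 := fun h0 => hne (enc_inj (h0.trans enc_zero.symm))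
    have h2 := List.all_eq_true.1 h _ (mem_pts _ (enc_lt x) h1)
    have h3 : dec (app w (enc x)) = dec 0 := by rw [dec_app, dec_enc, hx, dec_zero]
    have h4 := dec_inj (app_lt _ _) (by norm_num) h3
    simp [injB.dec', h4] at h2
  intro x y hxy
  have := key (x - y) (by rw [Matrix.mulVec_sub]; exact sub_eq_zero.2 hxy)
  exact sub_eq_zero.1 this

/-! Projective equivalence -/

theorem pe_inj (g : Matrix.GeneralLinearGroup (Fin 5) (ZMod 2)) :
    Function.Injective (fun x : V => Matrix.mulVec (g : Matrix (Fin 5) (Fin 5) (ZMod 2)) x) :=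
  Matrix.mulVec_injective_iff_isUnit.2 g.isUnit

theorem pe_symm {S T : Set V} (h : ProjEquiv S T) : ProjEquiv T S := by
  obtain ⟨g, rfl⟩ := h
  refine ⟨g⁻¹, ?_⟩
  rw [Set.image_image]
  convert Set.image_id S using 2
  funext x
  simp only [Matrix.mulVec_mulVec, id]
  rw [← Matrix.GeneralLinearGroup.coe_mul, inv_mul_cancel]
  simp

theorem pe_trans {S T U : Set V} (h : ProjEquiv S T) (h' : ProjEquiv T U) : ProjEquiv S U := by
  obtain ⟨g, rfl⟩ := h
  obtain ⟨k, rfl⟩ := h'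
  refine ⟨k * g, ?_⟩
  rw [Set.image_image]
  congr 1
  funext x
  simp [Matrix.mulVec_mulVec]

theorem sat_image {S : Set V} (g : Matrix.GeneralLinearGroup (Fin 5) (ZMod 2))
    (h : Saturating S) :
    Saturating ((fun x => Matrix.mulVec (g : Matrix (Fin 5) (Fin 5) (ZMod 2)) x) '' S) := by
  have hi := pe_inj g
  have hs : Function.Surjective _ := Finite.surjective_of_injective hi
  refine ⟨?_, ?_⟩
  · rintro _ ⟨s, hs, rfl⟩ h0
    exact h.1 s hs (hi (by simpa using h0))
  · intro y hy0 hy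
    obtain ⟨x, rfl⟩ := hs y
    have hx0 : x ≠ 0 := by
      rintro rfl
      exact hy0 (by simp)
    obtain ⟨a, ha, b, hb, hab, rfl⟩ := h.2 x hx0 (fun hx => hy ⟨x, hx, rfl⟩)
    exact ⟨_, ⟨a, ha, rfl⟩, _, ⟨b, hb, rfl⟩, fun e => hab (hi e), by simp [Matrix.mulVec_add]⟩

theorem sat_pe {S T : Set V} (h : ProjEquiv S T) (hS : Saturating S) : Saturating T := by
  obtain ⟨g, rfl⟩ := h
  exact sat_image g hS

theorem minsat_pe {S T : Set V} (h : ProjEquiv S T) (hS : MinSat S) : MinSat T := by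
  refine ⟨sat_pe h hS.1, ?_⟩
  obtain ⟨g, rfl⟩ := h
  rintro _ ⟨s, hs, rfl⟩ hsat
  refine hS.2 s hs (sat_pe (pe_symm ⟨g, ?_⟩) hsat)
  rw [Set.image_sdiff (pe_inj g), Set.image_singleton]

theorem ncard_pe {S T : Set V} (h : ProjEquiv S T) : T.ncard = S.ncard := by
  obtain ⟨g, rfl⟩ := h
  exact Set.ncard_image_of_injective _ (pe_inj g)

/-! Lists as sets -/

def toSet (l : List ℕ) : Set V := {x | enc x ∈ l}

def Ok (l : List ℕ) : Prop := ∀ n ∈ l, n < 32 ∧ n ≠ 0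

theorem mem_toSet {l : List ℕ} {n : ℕ} (hn : n < 32) : dec n ∈ toSet l ↔ n ∈ l := by
  simp [toSet, enc_dec n hn]

def memB (n : ℕ) (l : List ℕ) : Bool := l.any (Nat.beq n)

theorem memB_iff {n : ℕ} {l : List ℕ} : memB n l = true ↔ n ∈ l := by
  simp [memB]

def maskOf (l : List ℕ) (m : ℕ) : ℕ := match l with
  | [] => m
  | a :: l => maskOf l (m ||| (1 <<< a))

theorem maskOf_testBit (l : List ℕ) (m n : ℕ) :
    (maskOf l m).testBit n = true ↔ m.testBit n = true ∨ n ∈ l := by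
  induction l generalizing m with
  | nil => simp [maskOf]
  | cons a l ih =>
    rw [maskOf, ih, Nat.testBit_or, Nat.one_shiftLeft, Nat.testBit_two_pow]
    simp only [Bool.or_eq_true, decide_eq_true_eq, List.mem_cons]
    tauto

def sums (l l' : List ℕ) (m : ℕ) : ℕ := match l with
  | [] => m
  | a :: l => sums l l' (maskOf (l'.map fun b => a ^^^ b) m)

theorem sums_testBit (l l' : List ℕ) (m n : ℕ) :
    (sums l l' m).testBit n = true ↔ m.testBit n = true ∨ ∃ a ∈ l, ∃ b ∈ l', a ^^^ b = n := by
  induction l generalizing m with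
  | nil => simp [sums]
  | cons a l ih =>
    rw [sums, ih, maskOf_testBit]
    simp only [List.mem_map, List.mem_cons, exists_eq_or_imp, or_assoc]

def satB (l : List ℕ) : Bool := Nat.beq (sums l l (maskOf l 1)) 4294967295

theorem full_testBit : ∀ n < 32, Nat.testBit 4294967295 n = true := by decide +kernel

theorem satB_iff {l : List ℕ} (hl : Ok l) : satB l = true ↔ Saturating (toSet l) := by
  have e1 : ∀ n, (sums l l (maskOf l 1)).testBit n = true ↔
      n = 0 ∨ n ∈ l ∨ ∃ a ∈ l, ∃ b ∈ l, a ^^^ b = n := by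
    intro n
    rw [sums_testBit, maskOf_testBit]
    have : Nat.testBit 1 n = true ↔ n = 0 := by
      rw [show (1 : ℕ) = 2 ^ 0 from rfl, Nat.testBit_two_pow]; simp [eq_comm]
    rw [this]; tauto
  have e2 : satB l = true ↔ ∀ n < 32, n = 0 ∨ n ∈ l ∨ ∃ a ∈ l, ∃ b ∈ l, a ^^^ b = n := by
    rw [satB, nbeq] 
    constructor
    · intro h n hn
      rw [← e1, h]
      exact full_testBit n hn
    · intro h
      apply Nat.eq_of_testBit_eq
      intro n
      by_cases hn : n < 32
      · rw [full_testBit n hn, (e1 n).2 (h n hn)]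
      · have : Nat.testBit 4294967295 n = false :=
          Nat.testBit_lt_two_pow (lt_of_lt_of_le (by norm_num : 4294967295 < 2 ^ 32)
            (Nat.pow_le_pow_right (by norm_num) (by omega)))
        rw [this, ← Bool.not_eq_true, e1]
        rintro (h0 | h0 | ⟨a, ha, b, hb, h0⟩)
        · omega
        · exact hn (hl n h0).1
        · have := Nat.xor_lt_two_pow (n := 5) (hl a ha).1 (hl b hb).1
          omega
  rw [e2]
  constructor
  · intro h
    refine ⟨?_, ?_⟩
    · rintro s hs rfl
      exact (hl _ hs).2 enc_zero
    · intro x hx0 hx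
      rcases h (enc x) (enc_lt x) with h0 | h0 | ⟨a, ha, b, hb, h0⟩
      · exact absurd (enc_inj (h0.trans enc_zero.symm)) hx0
      · exact absurd h0 hx
      · refine ⟨dec a, (mem_toSet (hl a ha).1).2 ha, dec b, (mem_toSet (hl b hb).1).2 hb, ?_, ?_⟩
        · intro hab
          have := dec_inj (hl a ha).1 (hl b hb).1 hab
          subst this
          rw [Nat.xor_self] at h0
          exact hx0 (enc_inj (h0.symm.trans enc_zero.symm))
        · rw [← dec_xor, h0, dec_enc]
  · intro h n hn
    by_cases h0 : n = 0
    · exact Or.inl h0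
    by_cases h1 : n ∈ l
    · exact Or.inr (Or.inl h1)
    obtain ⟨a, ha, b, hb, hab, e⟩ := h.2 (dec n)
      (fun e => h0 (dec_inj hn (by norm_num) (e.trans dec_zero.symm)))
      (fun e => h1 ((mem_toSet hn).1 e))
    refine Or.inr (Or.inr ⟨enc a, ha, enc b, hb, ?_⟩)
    rw [← enc_add, ← e, enc_dec n hn]

def rem (s : ℕ) (l : List ℕ) : List ℕ := l.filter fun n => !(Nat.beq n s)

def minB (l : List ℕ) : Bool := satB l && l.all fun s => !(satB (rem s l))

theorem toSet_rem {l : List ℕ} (x : V) : toSet (rem (enc x) l) = toSet l \ {x} := by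
  ext y
  simp only [toSet, rem, Set.mem_ofPred_eq, List.mem_filter, Set.mem_sdiff, Set.mem_singleton_iff]
  refine and_congr_right fun _ => ?_
  simp only [Bool.not_eq_true', Bool.eq_false_iff, ne_eq, nbeq]
  exact not_congr ⟨enc_inj, fun h => by rw [h]⟩

theorem minB_iff {l : List ℕ} (hl : Ok l) : minB l = true ↔ MinSat (toSet l) := by
  have hr : ∀ s, Ok (rem s l) := fun s n hn => hl n (List.mem_of_mem_filter hn)
  rw [minB, Bool.and_eq_true, satB_iff hl, MinSat, List.all_eq_true]
  refine and_congr_right fun _ => ⟨?_, ?_⟩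
  · intro h s hs hsat
    have := h (enc s) hs
    rw [← toSet_rem, ← satB_iff (hr _)] at hsat
    simp [hsat] at this
  · intro h s hs
    have h1 := h (dec s) ((mem_toSet (hl s hs).1).2 hs)
    rw [← toSet_rem, ← satB_iff (hr _), enc_dec s (hl s hs).1] at h1
    simpa using h1

theorem ncard_toSet {l : List ℕ} (hl : Ok l) (hd : l.Nodup) : (toSet l).ncard = l.length := by
  have : toSet l = dec '' (l.toFinset : Set ℕ) := by
    ext x
    simp only [Set.mem_image, List.coe_toFinset, Set.mem_ofPred_eq]
    constructor
    · intro h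
      exact ⟨enc x, h, dec_enc x⟩
    · rintro ⟨n, hn, rfl⟩
      exact (mem_toSet (hl n hn).1).2 hn
  rw [this, Set.ncard_image_of_injOn, Set.ncard_coe_finset, List.toFinset_card_of_nodup hd]
  intro a ha b hb h
  simp only [List.coe_toFinset, Set.mem_ofPred_eq] at ha hb
  exact dec_inj (hl a ha).1 (hl b hb).1 h

/-! The list of representatives -/

def L10 : List (List ℕ) := [[1, 2, 4, 8, 16, 3, 5, 6, 7, 24],
  [1, 2, 4, 8, 16, 3, 5, 9, 14, 30],
  [1, 2, 4, 8, 16, 3, 5, 9, 17, 30],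
  [1, 2, 4, 8, 16, 3, 5, 10, 19, 28],
  [1, 2, 4, 8, 16, 3, 5, 14, 23, 24],
  [1, 2, 4, 8, 16, 3, 12, 21, 26, 31],
  [1, 2, 4, 8, 16, 7, 11, 19, 29, 30]]

def Good (R : List ℕ) : Prop :=
  ∀ S : Set V, MinSat S → S.ncard = 10 → (∀ n ∈ R, dec n ∈ S) → ∃ l ∈ L10, ProjEquiv S (toSet l)

theorem eq_toSet {R : List ℕ} (hR : Ok R) (hd : R.Nodup) (hlen : R.length = 10) {S : Set V}
    (hc : S.ncard = 10) (h : ∀ n ∈ R, dec n ∈ S) : S = toSet R := by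
  symm
  apply Set.eq_of_subset_of_ncard_le
  · intro x hx
    rw [← dec_enc x]
    exact h _ hx
  · rw [ncard_toSet hR hd, hc, hlen]
  · exact Set.toFinite S

theorem good_transform {R R' : List ℕ} {w : ℕ} (hw : injB w = true)
    (h : ∀ n ∈ R', app w n ∈ R) (hg : Good R') : Good R := by
  intro S hS hc hR
  obtain ⟨g, hgw⟩ := injB_isUnit hw
  have hpe : ProjEquiv S ((fun x : V => Matrix.mulVec (g : Matrix (Fin 5) (Fin 5) (ZMod 2)) x) ⁻¹' S) := by
    apply pe_symm
    refine ⟨g, ?_⟩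
    exact Set.image_preimage_eq _ (Finite.surjective_of_injective (pe_inj g))
  obtain ⟨l, hl, hl'⟩ := hg _ (minsat_pe hpe hS) ((ncard_pe hpe).trans hc) (by
    intro n hn
    have := hR _ (h n hn)
    rw [dec_app, ← hgw] at this
    exact this)
  exact ⟨l, hl, pe_trans hpe hl'⟩

def okB (L : List (List ℕ)) (R : List ℕ) (w : ℕ) : Bool :=
  injB w && (L.getD (w >>> 25) [0]).all fun n => memB (app w n) R

def go (L : List (List ℕ)) (R : List ℕ) (nine : Bool) : List ℕ → List ℕ → Bool
  | [], _ => true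
  | p :: ps, ws =>
    match memB p R || (nine && !(minB (p :: R))) with
    | true => go L R nine ps ws
    | false => match ws with
      | [] => false
      | w :: ws => okB L (p :: R) w && go L R nine ps ws

def wfB : List ℕ → Bool
  | [] => true
  | a :: l => memB a pts && !(memB a l) && wfB l

theorem wfB_spec {l : List ℕ} (h : wfB l = true) : Ok l ∧ l.Nodup := by
  induction l with
  | nil => exact ⟨by intro n hn; simp at hn, List.nodup_nil⟩
  | cons a l ih =>
    simp only [wfB, Bool.and_eq_true, memB_iff, Bool.not_eq_true', Bool.eq_false_iff, ne_eq] at h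
    obtain ⟨⟨h1, h2⟩, h3⟩ := h
    obtain ⟨i1, i2⟩ := ih h3
    refine ⟨?_, List.nodup_cons.2 ⟨h2, i2⟩⟩
    intro n hn
    rcases List.mem_cons.1 hn with rfl | hn
    · exact pts_lt _ h1
    · exact i1 n hn

theorem okB_spec {L : List (List ℕ)} (hL : ∀ R ∈ L, Good R) {R : List ℕ} (h0 : Ok R) {w : ℕ}
    (h : okB L R w = true) : Good R := by
  simp only [okB, Bool.and_eq_true, List.all_eq_true, memB_iff] at h
  obtain ⟨h1, h2⟩ := h
  by_cases hlt : w >>> 25 < L.length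
  · rw [List.getD_eq_getElem _ _ hlt] at h2
    exact good_transform h1 h2 (hL _ (List.getElem_mem hlt))
  · rw [List.getD_eq_default _ _ (by omega)] at h2
    have := h2 0 (by simp)
    have h3 : app w 0 = 0 := by simp [app, sel]
    rw [h3] at this
    exact absurd rfl (h0 0 this).2

theorem go_spec {L : List (List ℕ)} (hL : ∀ R ∈ L, Good R) {R : List ℕ} (hR : wfB R = true)
    {nine : Bool} (hn : nine = true → R.length = 9) (ps ws : List ℕ) (hps : ∀ p ∈ ps, p ∈ pts)
    (h : go L R nine ps ws = true) : ∀ p ∈ ps, p ∉ R → Good (p :: R) := by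
  obtain ⟨hok, hnd⟩ := wfB_spec hR
  induction ps generalizing ws with
  | nil => intro p hp; simp at hp
  | cons q ps ih =>
    have hps' : ∀ p ∈ ps, p ∈ pts := fun p hp => hps p (List.mem_cons_of_mem _ hp)
    have hq : Ok (q :: R) := by
      intro n hn
      rcases List.mem_cons.1 hn with rfl | hn
      · exact pts_lt _ (hps _ (by simp))
      · exact hok n hn
    intro p hp hpR
    rw [go.eq_def] at h
    simp only at h
    cases hb : (memB q R || (nine && !(minB (q :: R)))) with
    | true =>
      rw [hb] at h
      rcases List.mem_cons.1 hp with rfl | hp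
      · simp only [Bool.or_eq_true, memB_iff, hpR, false_or, Bool.and_eq_true, Bool.not_eq_true',
          Bool.eq_false_iff, ne_eq] at hb
        intro S hS hc hSR
        have := eq_toSet hq (List.nodup_cons.2 ⟨hpR, hnd⟩) (by simp [hn hb.1]) hc hSR
        rw [this, ← minB_iff hq] at hS
        exact absurd hS hb.2
      · exact ih ws hps' h p hp hpR
    | false =>
      rw [hb] at h
      cases ws with
      | nil => simp at h
      | cons w ws =>
        simp only [Bool.and_eq_true] at h
        rcases List.mem_cons.1 hp with rfl | hp
        · exact okB_spec hL hq h.1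
        · exact ih ws hps' h.2 p hp hpR

def lt10 (n : ℕ) : Bool := Nat.ble n 9

def lev (L : List (List ℕ)) (nine : Bool) : List (List ℕ) → List (List ℕ) → Bool
  | [], _ => true
  | _ :: _, [] => false
  | R :: Rs, ws :: wss => wfB R && lt10 R.length && (!nine || Nat.beq R.length 9) &&
      go L R nine pts ws && lev L nine Rs wss

theorem good_of_succ {R : List ℕ} (hR : wfB R = true) (hlen : R.length ≤ 9)
    (h : ∀ p ∈ pts, p ∉ R → Good (p :: R)) : Good R := by
  obtain ⟨hok, hnd⟩ := wfB_spec hR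
  intro S hS hc hSR
  have hlt : (toSet R).ncard < S.ncard := by rw [ncard_toSet hok hnd, hc]; omega
  obtain ⟨x, hx, hxR⟩ := Set.exists_mem_notMem_of_ncard_lt_ncard hlt
  have hx0 : enc x ≠ 0 := fun h0 => hS.1.1 x hx (enc_inj (h0.trans enc_zero.symm))
  refine h (enc x) (mem_pts _ (enc_lt x) hx0) hxR S hS hc ?_
  intro n hn
  rcases List.mem_cons.1 hn with rfl | hn
  · rwa [dec_enc]
  · exact hSR n hn

theorem lev_spec {L : List (List ℕ)} (hL : ∀ R ∈ L, Good R) {nine : Bool}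
    (Rs wss : List (List ℕ)) (h : lev L nine Rs wss = true) : ∀ R ∈ Rs, Good R := by
  induction Rs generalizing wss with
  | nil => intro R hR; simp at hR
  | cons Q Rs ih =>
    cases wss with
    | nil => simp [lev] at h
    | cons ws wss =>
      simp only [lev, Bool.and_eq_true, lt10, Nat.ble_eq] at h
      obtain ⟨⟨⟨⟨h1, h2⟩, h3⟩, h4⟩, h5⟩ := h
      intro R hR
      rcases List.mem_cons.1 hR with rfl | hR
      · refine good_of_succ h1 h2 (go_spec hL h1 ?_ pts ws (fun _ h => h) h4)
        rintro rfl
        simpa using h3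
      · exact ih wss h5 R hR

def allB (L : List (List ℕ)) : Bool :=
  L.all fun l => wfB l && Nat.beq l.length 10 && minB l

theorem allB_L10 : allB L10 = true := by decide +kernel

theorem L10_spec : ∀ l ∈ L10, Ok l ∧ l.Nodup ∧ l.length = 10 ∧ MinSat (toSet l) := by
  intro l hl
  have h := List.all_eq_true.1 allB_L10 l hl
  simp only [Bool.and_eq_true, nbeq] at h
  obtain ⟨⟨h1, h2⟩, h3⟩ := h
  obtain ⟨h4, h5⟩ := wfB_spec h1
  exact ⟨h4, h5, h2, (minB_iff h4).1 h3⟩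

theorem good10 : ∀ R ∈ L10, Good R := by
  intro R hR S _ hc hSR
  obtain ⟨h1, h2, h3, _⟩ := L10_spec R hR
  refine ⟨R, hR, ?_⟩
  rw [eq_toSet h1 h2 h3 hc hSR]
  exact ⟨1, by simp⟩

def L9 : List (List ℕ) := [[1, 2, 4, 8, 16, 3, 5, 6, 7],
  [1, 2, 4, 8, 16, 3, 5, 6, 9],
  [1, 2, 4, 8, 16, 3, 5, 6, 15],
  [1, 2, 4, 8, 16, 3, 5, 6, 24],
  [1, 2, 4, 8, 16, 3, 5, 6, 25],
  [1, 2, 4, 8, 16, 3, 5, 6, 31],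
  [1, 2, 4, 8, 16, 3, 5, 9, 14],
  [1, 2, 4, 8, 16, 3, 5, 9, 17],
  [1, 2, 4, 8, 16, 3, 5, 9, 18],
  [1, 2, 4, 8, 16, 3, 5, 9, 22],
  [1, 2, 4, 8, 16, 3, 5, 9, 30],
  [1, 2, 4, 8, 16, 3, 5, 10, 12],
  [1, 2, 4, 8, 16, 3, 5, 10, 19],
  [1, 2, 4, 8, 16, 3, 5, 10, 20],
  [1, 2, 4, 8, 16, 3, 5, 10, 22],
  [1, 2, 4, 8, 16, 3, 5, 10, 28],
  [1, 2, 4, 8, 16, 3, 5, 14, 22],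
  [1, 2, 4, 8, 16, 3, 5, 14, 23],
  [1, 2, 4, 8, 16, 3, 5, 14, 24],
  [1, 2, 4, 8, 16, 3, 5, 14, 25],
  [1, 2, 4, 8, 16, 3, 5, 14, 26],
  [1, 2, 4, 8, 16, 3, 12, 21, 26],
  [1, 2, 4, 8, 16, 3, 13, 21, 25],
  [1, 2, 4, 8, 16, 3, 13, 21, 26],
  [1, 2, 4, 8, 16, 7, 11, 13, 14],
  [1, 2, 4, 8, 16, 7, 11, 13, 19],
  [1, 2, 4, 8, 16, 7, 11, 13, 30],
  [1, 2, 4, 8, 16, 7, 11, 19, 29],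
  [1, 2, 4, 8, 16, 7, 11, 21, 25]]

def W9 : List (List ℕ) := [[17043521],
  [],
  [],
  [17041447],
  [],
  [],
  [50597953],
  [84152385, 85200961],
  [],
  [],
  [50597953, 76679713, 76680161],
  [],
  [117706817, 120918081, 117772353, 120852545],
  [],
  [],
  [117706817, 130289729],
  [],
  [151261249, 158797889, 151457857, 158601281],
  [50498017, 151261249, 159649857],
  [158797889, 166137921],
  [],
  [109133861, 104906826, 104911983, 138675811, 138807010, 143002465, 135336844, 135369640,
    136422340, 184815681],
  [36085917],
  [135348509, 176196766],
  [],
  [],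
  [],
  [84152355, 218370113],
  []]

theorem lev9 : lev L10 true L9 W9 = true := by decide +kernel

theorem good9 : ∀ R ∈ L9, Good R := lev_spec good10 L9 W9 lev9

def L8 : List (List ℕ) := [[1, 2, 4, 8, 16, 3, 5, 6],
  [1, 2, 4, 8, 16, 3, 5, 9],
  [1, 2, 4, 8, 16, 3, 5, 10],
  [1, 2, 4, 8, 16, 3, 5, 14],
  [1, 2, 4, 8, 16, 3, 5, 24],
  [1, 2, 4, 8, 16, 3, 5, 25],
  [1, 2, 4, 8, 16, 3, 5, 26],
  [1, 2, 4, 8, 16, 3, 5, 30],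
  [1, 2, 4, 8, 16, 3, 12, 21],
  [1, 2, 4, 8, 16, 3, 13, 21],
  [1, 2, 4, 8, 16, 3, 13, 22],
  [1, 2, 4, 8, 16, 7, 11, 13],
  [1, 2, 4, 8, 16, 7, 11, 19],
  [1, 2, 4, 8, 16, 7, 11, 21],
  [1, 2, 4, 8, 16, 7, 11, 29]]

def W8 : List (List ℕ) := [[17043521, 50597953, 50663458, 50697251, 50726948, 50760741, 50793542, 84152385, 42504257,
    42536994, 42570787, 42600484, 42634277, 42667078, 76255297, 117706817, 151261249, 143462434,
    143496227, 143525924, 143559717, 143592518, 184815681],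
  [50597953, 50598977, 50470977, 50472001, 50405505, 50406529, 218370113, 218402881, 251924545,
    285478977, 288624737, 289671297, 290719905, 319033409, 326374465, 293734657, 294783265,
    329392193, 330441793, 331423873, 332473473, 352587841, 368349249],
  [50597058, 50597090, 50466081, 50466145, 386142273, 386143297, 386207809, 386208833, 276972609,
    272910370, 419696705, 453251137, 458495041, 486805569, 494146625, 461512738, 496115746,
    463611938, 498214946, 520360001, 533992513, 535105601, 536155201],
  [50596934, 84151367, 218269985, 385912906, 385913963, 385912908, 385913965, 218270177,
    310939713, 478744641, 478778465, 478808193, 478842017, 553914433, 587468865, 621023297,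
    654577729, 688132161, 699667553, 700911681, 701961313, 635899969, 670502977],
  [117705798, 117705799, 285346049, 453124130, 453124131, 453058596, 453058597, 621023297,
    621024321, 276957697, 444743714, 444743715, 444678180, 444678181, 612896833, 612897857,
    276957953, 444751906, 444751907, 444686372, 444686373, 613158977, 613160001],
  [151261249, 151262273, 285346081, 486678562, 486678563, 486613028, 486613029, 654577729,
    654578753, 276957729, 478298146, 478298147, 478232612, 478232613, 646451265, 646452289,
    276957953, 478307363, 478307362, 478241829, 478241828, 646747201, 646746177],
  [151260354, 151260386, 318901537, 440927554, 486681635, 520358017, 520358049, 688132161,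
    688133185, 310513185, 440665666, 478301219, 512231553, 512231585, 680005697, 680006721,
    440665858, 478307363, 310513505, 680333377, 680334401, 512559233, 512559265],
  [151260230, 184814663, 352487713, 520425537, 520459361, 520489089, 520522913, 621219905,
    654808129, 344099361, 512299073, 512332897, 512362625, 512396449, 613093441, 646681665,
    613158977, 646747201, 512559233, 512593057, 512626753, 512660577, 344099809],
  [411123749, 486802562, 486802563, 486608936, 520226050, 520130664, 486608940, 520226178,
    520226179, 444665905, 612503106, 612502115, 444665908, 612502211, 612503266, 606122760,
    606118700, 721686593, 727060545, 606118796, 606122920, 721817665, 726929473],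
  [271065125, 553913538, 553912547, 486608937, 688005154, 688005155, 486608940, 688010275,
    688010274, 478220337, 679624738, 679624739, 478220340, 679629859, 679629858, 606123288,
    755241025, 788795457, 788795489, 752119873, 606123293, 794038369, 794038337],
  [486804641, 478678210, 579339491, 520163369, 654445890, 688294243, 520163372, 688130499,
    654446050, 646057505, 511742034, 680199779, 511742036, 680003235, 646057697, 718310680,
    786210881, 781005889, 713067963, 781071425, 727780893, 718310686, 786407489],
  [218370083, 218368037, 218466342, 218236969, 218335274, 218337324, 822349889, 218337359,
    746719777, 749864514, 855904321, 751896196, 861145217, 862292193, 751896295, 751896328,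
    865208577, 866355553, 751896427, 868454817, 749864877, 889458753, 871600546],
  [251924515, 553912357, 553912358, 553781289, 553781290, 553688204, 855904321, 856002625,
    553688207, 545392689, 545392690, 545299604, 847777857, 847876161, 545299607, 541109528,
    843587649, 843685953, 541109531, 840442084, 923013185, 926158913, 840540388],
  [319033379, 310904869, 587466790, 687999017, 687999018, 687905932, 855868685, 855868782,
    687905935, 679546929, 679517266, 847480339, 679546932, 847480502, 679517271, 775990792,
    956567617, 951763226, 773903728, 951763228, 775990952, 775987883, 951763231],
  [352587811, 654575653, 654673958, 654444585, 654542890, 654351500, 749864461, 889458734,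
    654384271, 779252785, 779252818, 917636627, 773911700, 773898517, 773898614, 773911799,
    773911832, 773898393, 773898490, 773911931, 779239484, 917637054, 779239519]]

theorem lev8 : lev L9 false L8 W8 = true := by decide +kernel

theorem good8 : ∀ R ∈ L8, Good R := lev_spec good9 L8 W8 lev8

def L7 : List (List ℕ) := [[1, 2, 4, 8, 16, 3, 5],
  [1, 2, 4, 8, 16, 3, 12],
  [1, 2, 4, 8, 16, 3, 13],
  [1, 2, 4, 8, 16, 3, 28],
  [1, 2, 4, 8, 16, 3, 29],
  [1, 2, 4, 8, 16, 7, 11],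
  [1, 2, 4, 8, 16, 7, 25],
  [1, 2, 4, 8, 16, 7, 27]]

def W7 : List (List ℕ) := [[17043521, 17042503, 50597953, 84152385, 84250721, 84281473, 84314273, 117706817, 117937217,
    42076705, 76091457, 76124257, 76155009, 76187809, 109776961, 109810753, 151261249, 184815681,
    218370113, 210604129, 210634881, 210667681, 251924545, 244290625],
  [84150401, 84149378, 83927140, 84019457, 84018434, 83923048, 84019585, 84018562, 84018563,
    142740001, 142739010, 142739043, 136356484, 285478977, 291770402, 292588804, 136352520,
    294789185, 295837730, 296782984, 136352652, 298987585, 300036130, 301084707],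
  [83959845, 117705922, 117704931, 83955753, 117574978, 117573987, 83955756, 117574083, 117575138,
    176294433, 209864738, 209865763, 277483585, 319033409, 352587841, 359927905, 273424449,
    307011649, 362946625, 363995233, 307115073, 273593409, 367146081, 368194625],
  [218368129, 218367106, 218367107, 218237185, 218236162, 218236163, 136364172, 318911553,
    318912546, 318913571, 209848833, 209847810, 209847811, 136355988, 310531137, 310532130,
    310533155, 136355992, 310535233, 310536226, 310537251, 209849217, 209848194, 209848195],
  [218368161, 251923650, 251922659, 218237217, 251792706, 251791715, 285279372, 272696845,
    352467042, 340278370, 209848865, 243404354, 243403363, 276890772, 272696597, 344086626,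
    340024418, 272696600, 276890777, 340027490, 344091746, 209849217, 243403715, 243404770],
  [50597923, 117704741, 117704742, 117573673, 117573674, 117480588, 386142273, 386142254,
    117480591, 310512161, 310511170, 419696705, 310419076, 453251137, 459545665, 310416103,
    306229000, 462561345, 463612993, 306226027, 438181124, 486805569, 501583937, 468757732],
  [218370083, 218368037, 218368038, 205602857, 352453890, 440934475, 352388356, 438837389,
    453057806, 338167016, 205594673, 344065538, 440680531, 344000004, 438583445, 444669462,
    337904880, 205594680, 440689754, 344065826, 438592668, 344000292, 344000295, 438592767],
  [184815651, 251922469, 251922470, 340265001, 340264010, 306225675, 337124492, 486769933,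
    486671630, 337121519, 340002865, 340001874, 306233619, 336862356, 478381589, 478283286,
    336859383, 306244888, 340001881, 340002874, 336859388, 478283645, 478381950, 336862367]]

theorem lev7 : lev L8 false L7 W7 = true := by decide +kernel

theorem good7 : ∀ R ∈ L7, Good R := lev_spec good8 L7 W7 lev7

def L6 : List (List ℕ) := [[1, 2, 4, 8, 16, 3],
  [1, 2, 4, 8, 16, 7],
  [1, 2, 4, 8, 16, 15],
  [1, 2, 4, 8, 16, 31]]

def W6 : List (List ℕ) := [[17043521, 17040578, 17040611, 16910625, 16909634, 16909667, 50597953, 84152385, 84031522,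
    84032547, 8522273, 8521282, 8521315, 42009748, 75650113, 75651106, 75652131, 37815576, 71590977,
    71591970, 71592995, 117706817, 151261249, 142768162, 142769187],
  [17043491, 17041445, 17041446, 84019489, 84018498, 184815681, 83953028, 184616205, 184616206,
    83953127, 75631137, 75630146, 176293395, 75564676, 176227861, 176227862, 75564775, 104924440,
    218370113, 205562690, 251924545, 203465604, 244222081, 244254945, 203465703],
  [84152355, 84150309, 84149318, 83952903, 84019241, 84018250, 83952779, 83952780, 84018253,
    84019246, 142740001, 142739010, 243402259, 142673540, 243336725, 243304982, 237019671,
    138479368, 239142425, 239110682, 237015579, 237015580, 239110685, 239142430, 138479599],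
  [151261219, 151259173, 151258182, 218368039, 151128105, 151127114, 218236971, 151061644,
    218173485, 205602862, 138479119, 142739505, 142738514, 209848371, 142673044, 209784885,
    205594678, 138478871, 138478872, 205594681, 209784890, 142673051, 209848380, 142738525,
    142739518]]

theorem lev6 : lev L7 false L6 W6 = true := by decide +kernel

theorem good6 : ∀ R ∈ L6, Good R := lev_spec good7 L6 W6 lev6

def L5 : List (List ℕ) := [[1, 2, 4, 8, 16]]

def W5 : List (List ℕ) := [[17043521, 17041445, 17040454, 50597953, 16910377, 16909386, 50464811, 16843916, 50401325,
    50368590, 84152385, 8521777, 8520786, 42076211, 8455316, 42012725, 41979990, 75630647, 4261144,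
    37822521, 37789786, 71567419, 35692700, 69472317, 68423774, 117706817]]

theorem lev5 : lev L6 false L5 W5 = true := by decide +kernel

theorem good5 : ∀ R ∈ L5, Good R := lev_spec good6 L5 W5 lev5


/-! Starting point: a saturating set contains a basis -/

theorem exists_basis {S : Set V} (hS : Saturating S) :
    ∃ T : Set V, ProjEquiv S T ∧ ∀ n ∈ [1, 2, 4, 8, 16], dec n ∈ T := by
  have hspan : Submodule.span (ZMod 2) S = ⊤ := by
    rw [eq_top_iff]
    intro x _
    by_cases h0 : x = 0
    · rw [h0]; exact Submodule.zero_mem _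
    by_cases h1 : x ∈ S
    · exact Submodule.subset_span h1
    obtain ⟨a, ha, b, hb, _, rfl⟩ := hS.2 x h0 h1
    exact Submodule.add_mem _ (Submodule.subset_span ha) (Submodule.subset_span hb)
  obtain ⟨b, hbS, hb, hli⟩ := exists_linearIndependent (ZMod 2) S
  have hB : ∃ B : Module.Basis b (ZMod 2) V, ∀ i, B i = i := by
    refine ⟨Module.Basis.mk hli (by simp [hb, hspan]), fun i => by simp⟩
  obtain ⟨B, hB⟩ := hB
  have hfin : Fintype b := Fintype.ofFinite b
  have hcard : Fintype.card b = 5 := by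
    rw [← Module.finrank_eq_card_basis B]; simp
  let e : b ≃ Fin 5 := Fintype.equivFinOfCardEq hcard
  let C : Module.Basis (Fin 5) (ZMod 2) V := B.reindex e
  have hC : ∀ i, C i ∈ S := by
    intro i
    simp only [C, Module.Basis.reindex_apply, hB]
    exact hbS (e.symm i).2
  let M : Matrix (Fin 5) (Fin 5) (ZMod 2) := Matrix.of fun r c => C c r
  have hM : ∀ i, M.mulVec (Pi.single i 1) = C i := by
    intro i
    ext r
    simp [M]
  have hMu : IsUnit M := by
    rw [← Matrix.mulVec_injective_iff_isUnit]
    apply Finite.injective_iff_surjective.2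
    intro y
    refine ⟨C.equivFun y, ?_⟩
    have : M.mulVec (C.equivFun y) = ∑ i, C.equivFun y i • C i := by
      ext r
      simp [M, Matrix.mulVec, dotProduct, mul_comm]
    rw [this, C.sum_equivFun]
  obtain ⟨g, hg⟩ := hMu
  refine ⟨(fun x : V => Matrix.mulVec (g : Matrix (Fin 5) (Fin 5) (ZMod 2)) x) ⁻¹' S, ?_, ?_⟩
  · exact pe_symm ⟨g, Set.image_preimage_eq _ (Finite.surjective_of_injective (pe_inj g))⟩
  · have key : ∀ i : Fin 5, dec (2 ^ (i : ℕ)) ∈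
        (fun x : V => Matrix.mulVec (g : Matrix (Fin 5) (Fin 5) (ZMod 2)) x) ⁻¹' S := by
      intro i
      have : dec (2 ^ (i : ℕ)) = Pi.single i 1 := by
        revert i; decide +kernel
      rw [this, Set.mem_preimage, hg, hM]
      exact hC i
    intro n hn
    simp only [List.mem_cons, List.not_mem_nil, or_false] at hn
    rcases hn with rfl | rfl | rfl | rfl | rfl
    · exact key 0
    · exact key 1
    · exact key 2
    · exact key 3
    · exact key 4

theorem classify {S : Set V} (hS : MinSat S) (hc : S.ncard = 10) :
    ∃ l ∈ L10, ProjEquiv S (toSet l) := by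
  obtain ⟨T, hT, hb⟩ := exists_basis hS.1
  obtain ⟨l, hl, h⟩ := good5 _ (by simp [L5]) T (minsat_pe hT hS) ((ncard_pe hT).trans hc) hb
  exact ⟨l, hl, pe_trans hT h⟩

/-! Invariant -/

def cnt (l : List ℕ) : ℕ :=
  ((l.toFinset ×ˢ l.toFinset ×ˢ l.toFinset).filter
    fun t => memB (t.1 ^^^ (t.2.1 ^^^ t.2.2)) (0 :: l) = true).card

theorem cnt_le {l l' : List ℕ} (hl : Ok l) (h : ProjEquiv (toSet l) (toSet l')) :
    cnt l ≤ cnt l' := by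
  obtain ⟨g, hg⟩ := h
  let f : V → V := fun x => Matrix.mulVec (g : Matrix (Fin 5) (Fin 5) (ZMod 2)) x
  let φ : ℕ → ℕ := fun n => enc (f (dec n))
  have hφ : ∀ n ∈ l, φ n ∈ l' := by
    intro n hn
    have : f (dec n) ∈ toSet l' := by
      rw [← hg]
      exact ⟨_, (mem_toSet (hl n hn).1).2 hn, rfl⟩
    exact this
  have hx : ∀ a b, φ (a ^^^ b) = φ a ^^^ φ b := by
    intro a b
    simp only [φ, f, dec_xor, Matrix.mulVec_add, enc_add]
  have h0 : φ 0 = 0 := by simp [φ, f, dec_zero, enc_zero]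
  have hinj : ∀ a ∈ l, ∀ b ∈ l, φ a = φ b → a = b := by
    intro a ha b hb hab
    exact dec_inj (hl a ha).1 (hl b hb).1 (pe_inj g (enc_inj hab))
  apply Finset.card_le_card_of_injOn (fun t => (φ t.1, φ t.2.1, φ t.2.2))
  · rintro ⟨a, b, c⟩ h
    simp only [Finset.coe_filter, Finset.mem_product, List.mem_toFinset, Set.mem_ofPred_eq,
      memB_iff] at h ⊢
    obtain ⟨⟨ha, hb, hc⟩, h⟩ := h
    refine ⟨⟨hφ _ ha, hφ _ hb, hφ _ hc⟩, ?_⟩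
    rw [← hx, ← hx]
    rcases List.mem_cons.1 h with h | h
    · rw [h, h0]; simp
    · exact List.mem_cons_of_mem _ (hφ _ h)
  · rintro ⟨a, b, c⟩ h ⟨a', b', c'⟩ h' e
    simp only [Finset.coe_filter, Finset.mem_product, List.mem_toFinset, Set.mem_ofPred_eq] at h h'
    simp only [Prod.mk.injEq] at e ⊢
    exact ⟨hinj _ h.1.1 _ h'.1.1 e.1, hinj _ h.1.2.1 _ h'.1.2.1 e.2.1,
      hinj _ h.1.2.2 _ h'.1.2.2 e.2.2⟩

theorem cnt_inj : ∀ i j : Fin 7, cnt (L10.getD i []) = cnt (L10.getD j []) → i = j := by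
  have h : ∀ i : Fin 7, cnt (L10.getD i []) = [496, 472, 448, 424, 442, 460, 520].getD i 0 := by decide +kernel
  intro i j
  rw [h, h]
  revert i j
  decide +kernel

def capB (l : List ℕ) : Bool :=
  l.all fun a => l.all fun b => Nat.beq a b || !(memB (a ^^^ b) l)

theorem capB_iff {l : List ℕ} (hl : Ok l) : capB l = true ↔ IsCap (toSet l) := by
  have hadd : ∀ x y z : V, x + y + z = 0 ↔ enc x ^^^ enc y = enc z := by
    intro x y z
    rw [← enc_add]
    have h2 : z + z = 0 := by
      ext i
      exact CharTwo.add_self_eq_zero _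
    constructor
    · intro h
      congr 1
      calc x + y = x + y + (z + z) := by rw [h2, add_zero]
        _ = (x + y + z) + z := by abel
        _ = z := by rw [h, zero_add]
    · intro h
      rw [enc_inj h, h2]
  simp only [capB, List.all_eq_true, Bool.or_eq_true, nbeq, Bool.not_eq_true',
    Bool.eq_false_iff, ne_eq, memB_iff]
  constructor
  · intro h
    refine ⟨?_, ?_⟩
    · rintro s hs rfl
      exact (hl _ hs).2 enc_zero
    · intro a ha b hb c hc hab _ _ h0
      rw [hadd] at h0
      rcases h _ ha _ hb with e | e
      · exact hab (enc_inj e)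
      · exact e (h0 ▸ hc)
  · intro h a ha b hb
    by_cases hab : a = b
    · exact Or.inl hab
    right
    intro hc
    have la := (hl a ha).1
    have lb := (hl b hb).1
    have lc := (hl _ hc).1
    refine h.2 (dec a) ((mem_toSet la).2 ha) (dec b) ((mem_toSet lb).2 hb) (dec (a ^^^ b))
      ((mem_toSet lc).2 hc) (fun e => hab (dec_inj la lb e)) ?_ ?_ ?_
    · intro e
      have := dec_inj la lc e
      have hb0 := (hl b hb).2
      apply hb0
      have h3 : a ^^^ (a ^^^ b) = a ^^^ a := by rw [← this]
      simpa [← Nat.xor_assoc] using h3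
    · intro e
      have := dec_inj lb lc e
      have ha0 := (hl a ha).2
      apply ha0
      have h3 : (a ^^^ b) ^^^ b = b ^^^ b := by rw [← this]
      simpa [Nat.xor_assoc] using h3
    · rw [hadd, enc_dec _ la, enc_dec _ lb, enc_dec _ lc]

theorem cap_unique : ∀ i : Fin 7, capB (L10.getD i []) = true ↔ i = 6 := by decide +kernel

theorem getD_mem (i : Fin 7) : L10.getD i [] ∈ L10 := by
  rw [List.getD_eq_getElem _ _ (show (i : ℕ) < L10.length from i.2)]
  exact List.getElem_mem _

end MS

/-- Up to projective equivalence there are exactly seven minimal 1-saturating sets of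
size 10 in PG(4,2); exactly one of them is a (complete) cap and exactly six are not caps. -/
theorem minSat_PG4_size10_seven_orbits :
    ∃ A : Fin 7 → Set (Fin 5 → ZMod 2),
      (∀ i, MinSat (A i) ∧ (A i).ncard = 10) ∧
      (∀ i j, i ≠ j → ¬ ProjEquiv (A i) (A j)) ∧
      (∀ S : Set (Fin 5 → ZMod 2), MinSat S → S.ncard = 10 → ∃ i, ProjEquiv S (A i)) ∧
      (∃! i, IsCap (A i)) := by
  refine ⟨fun i => MS.toSet (MS.L10.getD i []), ?_, ?_, ?_, ?_⟩
  · intro i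
    obtain ⟨h1, h2, h3, h4⟩ := MS.L10_spec _ (MS.getD_mem i)
    exact ⟨h4, (MS.ncard_toSet h1 h2).trans h3⟩
  · intro i j hij h
    exact hij (MS.cnt_inj i j (le_antisymm
      (MS.cnt_le (MS.L10_spec _ (MS.getD_mem i)).1 h)
      (MS.cnt_le (MS.L10_spec _ (MS.getD_mem j)).1 (MS.pe_symm h))))
  · intro S hS hc
    obtain ⟨l, hl, h⟩ := MS.classify hS hc
    obtain ⟨k, hk, rfl⟩ := List.getElem_of_mem hl
    refine ⟨⟨k, hk⟩, ?_⟩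
    simpa only [List.getD_eq_getElem _ _ hk] using h
  · refine ⟨6, ?_, ?_⟩
    · exact (MS.capB_iff (MS.L10_spec _ (MS.getD_mem 6)).1).1 ((MS.cap_unique 6).2 rfl)
    · intro i hi
      exact (MS.cap_unique i).1 ((MS.capB_iff (MS.L10_spec _ (MS.getD_mem i)).1).2 hi)
end
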